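/- For N ∈ ℕ let R(N) be the set of reduced words w = x^{a_1}y^{b_1}···x^{a_r}y^{b_r} in F_2 whose complexity r is a prime number and whose length ℓ(w) = Σ_i(|a_i| + |b_i|) is at most N, and let S(N) ⊆ R(N) be the subset of those w for which the family of word maps P_{w,q}, q = p^n, is p-equidistributed for all but finitely many primes p. Then there exist constants C > 0 and 0 < c < 1 such that #(R(N) \ S(N)) ≤ C·c^N·#R(N) for all N ≥ 4; in particular, S is exponentially generic in R. -/

import Mathlib

open Matrix Polynomial

abbrev SL2 (K : Type) [CommRing K] : Type := Matrix.SpecialLinearGroup (Fin 2) K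

abbrev PSL2 (K : Type) [CommRing K] : Type := SL2 K ⧸ Subgroup.center (SL2 K)

/-- Evaluation of a word `w ∈ F₂` at a pair of group elements. -/
def wordEval {G : Type*} [Group G] (w : FreeGroup (Fin 2)) (g₁ g₂ : G) : G :=
  (FreeGroup.lift ![g₁, g₂]) w

/-- The word map `P_{w,G} : G × G → G` for `G = SL(2,K)`. -/
def wordMap (w : FreeGroup (Fin 2)) (K : Type) [CommRing K] :
    SL2 K × SL2 K → SL2 K := fun g => wordEval w g.1 g.2

/-- The point `(tr x, tr xy, tr y)`. -/
def trPoint {K : Type} [CommRing K] (x y : SL2 K) : Fin 3 → K :=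
  ![Matrix.trace (x : Matrix (Fin 2) (Fin 2) K),
    Matrix.trace ((x * y : SL2 K) : Matrix (Fin 2) (Fin 2) K),
    Matrix.trace (y : Matrix (Fin 2) (Fin 2) K)]

/-- `f ∈ ℤ[s,u,t]` is the trace polynomial of the word `w`. -/
def IsTracePolynomial (w : FreeGroup (Fin 2)) (f : MvPolynomial (Fin 3) ℤ) : Prop :=
  ∀ (K : Type) [CommRing K], ∀ x y : SL2 K,
    Matrix.trace ((wordEval w x y : SL2 K) : Matrix (Fin 2) (Fin 2) K) =
      MvPolynomial.eval (trPoint x y) (MvPolynomial.map (Int.castRingHom K) f)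

/-- `f : X → Y` is `ε`-equidistributed. -/
def IsEquidistributed {X Y : Type*} (f : X → Y) (ε : ℝ) : Prop :=
  ∃ Y' : Set Y,
    (1 - ε) * (Nat.card Y) < (Nat.card Y' : ℝ) ∧
    ∀ y ∈ Y',
      |(Nat.card {x : X // f x = y} : ℝ) - (Nat.card X : ℝ) / (Nat.card Y)| <
        ε * (Nat.card X) / (Nat.card Y)

/-- The family of word maps on `SL(2,p^n)` is `p`-equidistributed. -/
def IsPEquidistributed (w : FreeGroup (Fin 2)) (p : ℕ) (hp : p.Prime) : Prop :=
  letI : Fact p.Prime := ⟨hp⟩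
  ∃ ε : ℕ → ℝ,
    Filter.Tendsto (fun n : ℕ => ε (p ^ n)) Filter.atTop (nhds 0) ∧
    ∀ᶠ n : ℕ in Filter.atTop,
      IsEquidistributed (wordMap w (GaloisField p n)) (ε (p ^ n))

/-- The family of word maps on `SL(2,q)`, `q` ranging over all prime powers,
is equidistributed. -/
def IsEquidistributedFamily (w : FreeGroup (Fin 2)) : Prop :=
  ∃ ε : ℕ → ℝ,
    Filter.Tendsto ε Filter.atTop (nhds 0) ∧
    ∀ (p : ℕ) (hp : p.Prime),
      letI : Fact p.Prime := ⟨hp⟩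
      ∀ᶠ n : ℕ in Filter.atTop,
        IsEquidistributed (wordMap w (GaloisField p n)) (ε (p ^ n))

/-- Reduction of an integral polynomial mod `p`. -/
noncomputable def reduceMod (p : ℕ) (P : MvPolynomial (Fin 3) ℤ) : MvPolynomial (Fin 3) (ZMod p) :=
  MvPolynomial.map (Int.castRingHom (ZMod p)) P

/-- `P = h ∘ Q` with `deg Q ≥ 1`, `deg h ≥ 2`. -/
def IsCompositePoly (F : Type) [CommRing F] (P : MvPolynomial (Fin 3) F) : Prop :=
  ∃ (Q : MvPolynomial (Fin 3) F) (h : Polynomial F),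
    1 ≤ Q.totalDegree ∧ 2 ≤ h.natDegree ∧ P = Polynomial.aeval Q h

def IsPComposite (p : ℕ) (P : MvPolynomial (Fin 3) ℤ) : Prop :=
  IsCompositePoly (ZMod p) (reduceMod p P)

/-- `h` is a permutation polynomial of every finite extension of `F_p`. -/
def IsPermAllExt (p : ℕ) (h : Polynomial (ZMod p)) : Prop :=
  ∀ (K : Type) [Field K] [Algebra (ZMod p) K] [Finite K],
    Function.Bijective fun z : K => Polynomial.aeval z h

def IsPSpecial (p : ℕ) (P : MvPolynomial (Fin 3) ℤ) : Prop :=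
  IsPComposite p P ∧
    ∃ (Q : MvPolynomial (Fin 3) (ZMod p)) (h : Polynomial (ZMod p)),
      1 ≤ Q.totalDegree ∧ 2 ≤ h.natDegree ∧
      reduceMod p P = Polynomial.aeval Q h ∧ IsPermAllExt p h

def AlmostNoncomposite (P : MvPolynomial (Fin 3) ℤ) : Prop :=
  ∀ p : ℕ, p.Prime → ¬ IsPComposite p P ∨ IsPSpecial p P

/-- The reduced word `x^{a₁}y^{b₁} ⋯ x^{a_r}y^{b_r}`. -/
def wordOf {r : ℕ} (a b : Fin r → ℤ) : FreeGroup (Fin 2) :=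
  (List.ofFn fun i : Fin r =>
    FreeGroup.of (0 : Fin 2) ^ a i * FreeGroup.of (1 : Fin 2) ^ b i).prod

/-- The set of reduced words of prime complexity and length at most `N`. -/
def RWords (N : ℕ) : Set (FreeGroup (Fin 2)) :=
  {w | ∃ r : ℕ, r.Prime ∧ ∃ a b : Fin r → ℤ,
    (∀ i, a i ≠ 0 ∧ b i ≠ 0) ∧ w = wordOf a b ∧
    (∑ i, ((a i).natAbs + (b i).natAbs)) ≤ N}

/-- The subset of those words of `RWords N` that are `p`-equidistributed for all but
finitely many primes `p`. -/
def SWords (N : ℕ) : Set (FreeGroup (Fin 2)) :=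
  {w ∈ RWords N | {p : ℕ | ∃ hp : p.Prime, ¬ IsPEquidistributed w p hp}.Finite}

/-!
The trace of `w(x, y)` is a polynomial in `s = tr x`, `t = tr y`, `u = tr xy`, of degree `r` in `u`,
whose leading coefficient is a product `∏ S_{aᵢ - 1}(s) · ∏ S_{bᵢ - 1}(t)` of Chebyshev polynomials.
Suppose the `|aᵢ|` are not all equal; let `n` be their maximum and `ζ` a primitive `2n`-th root of
unity. For `p ∤ 2n` the multiplicity of `ζ + ζ⁻¹` as a root of `∏ S_{aᵢ - 1}` is the number of `i`
with `|aᵢ| = n`, which lies strictly between `0` and the prime `r` and so is coprime to `r`. Fixing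
`t`, `s'`, `t'` and a suitable rescaling of `u` in the equation that the traces at `(s, t, u)` and
`(s', t', u')` agree gives a plane curve whose Newton polygon at `ζ + ζ⁻¹` then makes it absolutely
irreducible, and Stepanov's method bounds its number of points over the field with `q` elements.
Hence the trace map has about as few collisions as a random map, so its values are equidistributed
by a second moment argument. Since almost all conjugacy classes of `SL(2, q)` are determined by
their trace, the word map itself is equidistributed. The same holds with `x` and `y` exchanged, so
every exceptional word has all `|aᵢ|` equal and all `|bᵢ|` equal. There are at most `(N + 1)³ 2ᴺ`
such words, whereas a prime complexity `r` between `N / 6` and `N / 3` alone yields more than a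
constant times `2.15ᴺ` words.
-/

namespace WordEquidistribution

section PlaneCurves

open scoped Polynomial.Bivariate

universe u

section WeightFiltration

variable {E : Type*} [Field E] {F : E[X][Y]} {d : ℕ}

/-- The function `xⁱyʲ` on the affine plane curve `F(x, y) = 0`, an element of the coordinate
ring `AdjoinRoot F` of that curve. -/
noncomputable def coordMonomial (F : E[X][Y]) (i j : ℕ) : AdjoinRoot F :=
  AdjoinRoot.of F (X ^ i) * AdjoinRoot.root F ^ j

/-- Functions on the curve `F = 0` of weighted degree at most `m`, where `x` has weight `1` and
`y` has weight `d`. -/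
noncomputable def weightFiltration (F : E[X][Y]) (d m : ℕ) : Submodule E (AdjoinRoot F) :=
  Submodule.span E {f | ∃ i j : ℕ, i + d * j ≤ m ∧ coordMonomial F i j = f}

/-- `F` is monic in `y` and has weighted degree `d * deg_y F`, where `x` has weight `1` and `y`
has weight `d`. -/
structure IsWeightedMonic (d : ℕ) (F : E[X][Y]) : Prop where
  monic : F.Monic
  natDegree_coeff_le : ∀ j, (F.coeff j).natDegree ≤ d * (F.natDegree - j)

lemma algebraMap_eq_of_C (a : E) : algebraMap E (AdjoinRoot F) a = AdjoinRoot.of F (C a) := rfl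

lemma coordMonomial_mul (i j i' j' : ℕ) :
    coordMonomial F i j * coordMonomial F i' j' = coordMonomial F (i + i') (j + j') := by
  rw [coordMonomial, coordMonomial, coordMonomial, pow_add, pow_add, map_mul, mul_mul_mul_comm]

lemma coordMonomial_zero_zero : coordMonomial F 0 0 = 1 := by
  simp [coordMonomial]

lemma of_mul_coordMonomial (f : E[X]) (i j : ℕ) :
    AdjoinRoot.of F f * coordMonomial F i j =
      ∑ l ∈ Finset.range (f.natDegree + 1), f.coeff l • coordMonomial F (i + l) j := by
  conv_lhs => rw [f.as_sum_range, map_sum, Finset.sum_mul]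
  refine Finset.sum_congr rfl fun l _ => ?_
  rw [← Polynomial.smul_X_eq_monomial, ← AdjoinRoot.smul_of, smul_mul_assoc, add_comm i l]
  simp only [coordMonomial, pow_add, map_mul, mul_assoc]

lemma coordMonomial_natDegree_add (hF : F.Monic) (i j : ℕ) :
    coordMonomial F i (F.natDegree + j) =
      -∑ k ∈ Finset.range F.natDegree, AdjoinRoot.of F (F.coeff k) * coordMonomial F i (k + j) := by
  have hroot : AdjoinRoot.root F ^ F.natDegree =
      -∑ k ∈ Finset.range F.natDegree, AdjoinRoot.of F (F.coeff k) * AdjoinRoot.root F ^ k := by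
    have h := AdjoinRoot.eval₂_root F
    rw [Polynomial.eval₂_eq_sum_range, Finset.sum_range_succ, hF.coeff_natDegree, map_one,
      one_mul] at h
    exact eq_neg_of_add_eq_zero_right h
  rw [coordMonomial, pow_add, hroot, neg_mul, mul_neg, Finset.sum_mul, Finset.mul_sum]
  refine congrArg Neg.neg (Finset.sum_congr rfl fun k _ => ?_)
  rw [coordMonomial, pow_add, mul_assoc, mul_left_comm]

/-- The basis `xⁱyʲ`, `j < deg_y F`, of the coordinate ring of `F = 0`. -/
noncomputable def coordBasis (hF : F.Monic) :
    Module.Basis (ℕ × Fin F.natDegree) E (AdjoinRoot F) :=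
  (Polynomial.basisMonomials E).smulTower (AdjoinRoot.powerBasisAux' hF)

lemma coordBasis_apply (hF : F.Monic) (a : ℕ × Fin F.natDegree) :
    coordBasis hF a = coordMonomial F a.1 a.2 := by
  have hpow : AdjoinRoot.powerBasisAux' hF a.2 = AdjoinRoot.root F ^ (a.2 : ℕ) :=
    (AdjoinRoot.powerBasis' hF).basis_eq_pow a.2
  rw [coordBasis, Module.Basis.smulTower_apply, hpow, Algebra.smul_def, AdjoinRoot.algebraMap_eq,
    Polynomial.coe_basisMonomials, coordMonomial, Polynomial.X_pow_eq_monomial]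

lemma linearIndependent_coordMonomial (hF : F.Monic) {r : ℕ} (hr : r ≤ F.natDegree) (l : ℕ) :
    LinearIndependent E fun a : Fin l × Fin r => coordMonomial F a.1 a.2 := by
  have hinj : Function.Injective fun a : Fin l × Fin r => ((a.1 : ℕ), Fin.castLE hr a.2) :=
    Fin.val_injective.prodMap (Fin.castLE_injective hr)
  simpa only [Function.comp_def, coordBasis_apply, Fin.val_castLE] using
    (coordBasis hF).linearIndependent.comp _ hinj

lemma weightFiltration_mono {m n : ℕ} (h : m ≤ n) :
    weightFiltration F d m ≤ weightFiltration F d n :=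
  Submodule.span_mono fun _ ⟨i, j, hij, hf⟩ => ⟨i, j, hij.trans h, hf⟩

lemma coordMonomial_mem_weightFiltration {m i j : ℕ} (h : i + d * j ≤ m) :
    coordMonomial F i j ∈ weightFiltration F d m :=
  Submodule.subset_span ⟨i, j, h, rfl⟩

lemma coordMonomial_fin_mem_weightFiltration {l r : ℕ} (a : Fin l × Fin r) :
    coordMonomial F a.1 a.2 ∈ weightFiltration F d (l + d * r) :=
  coordMonomial_mem_weightFiltration
    (add_le_add a.1.2.le (Nat.mul_le_mul_left d a.2.2.le))

lemma mul_mem_weightFiltration {m n : ℕ} {f g : AdjoinRoot F} (hf : f ∈ weightFiltration F d m)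
    (hg : g ∈ weightFiltration F d n) : f * g ∈ weightFiltration F d (m + n) := by
  have hle : weightFiltration F d m * weightFiltration F d n ≤ weightFiltration F d (m + n) := by
    rw [weightFiltration, weightFiltration, Submodule.span_mul_span, Submodule.span_le]
    rintro _ ⟨_, ⟨i, j, hij, rfl⟩, _, ⟨i', j', hij', rfl⟩, rfl⟩
    simp only [coordMonomial_mul]
    exact coordMonomial_mem_weightFiltration (by linarith)
  exact hle (Submodule.mul_mem_mul hf hg)

lemma pow_mem_weightFiltration {m : ℕ} {f : AdjoinRoot F} (hf : f ∈ weightFiltration F d m)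
    (k : ℕ) : f ^ k ∈ weightFiltration F d (k * m) := by
  induction k with
  | zero =>
    rw [pow_zero, ← coordMonomial_zero_zero]
    exact coordMonomial_mem_weightFiltration (by simp)
  | succ k ih => simpa only [pow_succ, add_mul, one_mul] using mul_mem_weightFiltration ih hf

lemma exists_mem_weightFiltration (hF : F.Monic) (d : ℕ) (f : AdjoinRoot F) :
    ∃ m, f ∈ weightFiltration F d m := by
  have hf : f ∈ Submodule.span E (Set.range (coordBasis hF)) := by
    simp [Module.Basis.span_eq]
  induction hf using Submodule.span_induction with
  | mem _ h =>
    obtain ⟨a, rfl⟩ := h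
    exact ⟨_, coordBasis_apply hF a ▸ coordMonomial_mem_weightFiltration le_rfl⟩
  | zero => exact ⟨0, zero_mem _⟩
  | add _ _ _ _ hf hg =>
    obtain ⟨m, hm⟩ := hf
    obtain ⟨n, hn⟩ := hg
    exact ⟨m + n, add_mem (weightFiltration_mono (Nat.le_add_right m n) hm)
      (weightFiltration_mono (Nat.le_add_left n m) hn)⟩
  | smul a _ _ hf =>
    obtain ⟨m, hm⟩ := hf
    exact ⟨m, Submodule.smul_mem _ a hm⟩

lemma coordMonomial_mem_span (hF : IsWeightedMonic d F) {m i j : ℕ} (h : i + d * j ≤ m) :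
    coordMonomial F i j ∈ Submodule.span E
      (Set.range fun a : Fin (m + 1) × Fin F.natDegree => coordMonomial F a.1 a.2) := by
  induction j using Nat.strong_induction_on generalizing i with
  | _ j ih =>
  obtain hj | hj := lt_or_ge j F.natDegree
  · exact Submodule.subset_span ⟨(⟨i, by omega⟩, ⟨j, hj⟩), rfl⟩
  obtain ⟨j, rfl⟩ := Nat.exists_eq_add_of_le hj
  rw [coordMonomial_natDegree_add hF.monic]
  refine neg_mem (sum_mem fun k hk => ?_)
  rw [of_mul_coordMonomial]
  refine sum_mem fun l hl => Submodule.smul_mem _ _ ?_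
  rw [Finset.mem_range] at hk hl
  refine ih (k + j) (by omega) ?_
  have hl' : l ≤ d * (F.natDegree - k) := (Nat.lt_succ_iff.1 hl).trans (hF.natDegree_coeff_le k)
  have hweight : d * (F.natDegree - k) + d * (k + j) = d * (F.natDegree + j) := by
    rw [← mul_add]; congr 1; omega
  omega

lemma weightFiltration_le_span (hF : IsWeightedMonic d F) (m : ℕ) :
    weightFiltration F d m ≤ Submodule.span E
      (Set.range fun a : Fin (m + 1) × Fin F.natDegree => coordMonomial F a.1 a.2) := by
  refine Submodule.span_le.2 ?_
  rintro _ ⟨i, j, hij, rfl⟩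
  exact coordMonomial_mem_span hF hij

lemma finiteDimensional_weightFiltration (hF : IsWeightedMonic d F) (m : ℕ) :
    FiniteDimensional E (weightFiltration F d m) :=
  have := FiniteDimensional.span_of_finite E
    (Set.finite_range fun a : Fin (m + 1) × Fin F.natDegree => coordMonomial F a.1 a.2)
  Submodule.finiteDimensional_of_le (weightFiltration_le_span hF m)

lemma finrank_weightFiltration_le (hF : IsWeightedMonic d F) (m : ℕ) :
    Module.finrank E (weightFiltration F d m) ≤ F.natDegree * (m + 1) := by
  have := FiniteDimensional.span_of_finite E
    (Set.finite_range fun a : Fin (m + 1) × Fin F.natDegree => coordMonomial F a.1 a.2)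
  calc Module.finrank E (weightFiltration F d m)
      ≤ _ := Submodule.finrank_mono (weightFiltration_le_span hF m)
    _ ≤ Fintype.card (Fin (m + 1) × Fin F.natDegree) := finrank_range_le_card _
    _ = F.natDegree * (m + 1) := by simp [mul_comm]

lemma le_finrank_weightFiltration (hF : IsWeightedMonic d F) (m : ℕ) :
    F.natDegree * m ≤ Module.finrank E (weightFiltration F d (m + d * F.natDegree)) := by
  have := finiteDimensional_weightFiltration hF (m + d * F.natDegree)
  have hle : Submodule.span E
      (Set.range fun a : Fin m × Fin F.natDegree => coordMonomial F a.1 a.2) ≤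
      weightFiltration F d (m + d * F.natDegree) := by
    rw [Submodule.span_le]
    rintro _ ⟨a, rfl⟩
    exact coordMonomial_fin_mem_weightFiltration a
  have hrank := finrank_span_eq_card (linearIndependent_coordMonomial hF.monic le_rfl m)
  calc F.natDegree * m = Fintype.card (Fin m × Fin F.natDegree) := by simp [mul_comm]
    _ ≤ _ := hrank ▸ Submodule.finrank_mono hle

-- For `M` large, `P • W_M` and the span of `g` are independent inside `W_{M + w}`, whereas
-- `dim W_{M + w} - dim W_M` stays bounded.
lemma card_le_of_linearIndependent_quotient_span (hF : IsWeightedMonic d F)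
    [IsDomain (AdjoinRoot F)] {w : ℕ} {P : AdjoinRoot F} (hP : P ∈ weightFiltration F d w)
    (hP0 : P ≠ 0) {ι : Type*} [Fintype ι] {g : ι → AdjoinRoot F}
    (hg : LinearIndependent E fun i => Ideal.Quotient.mkₐ E (Ideal.span {P}) (g i)) :
    Fintype.card ι ≤ F.natDegree * (w + d * F.natDegree + 1) := by
  choose m hm using fun i => exists_mem_weightFiltration hF.monic d (g i)
  set M := ∑ i, m i + d * F.natDegree with hM
  have hgM (i : ι) : g i ∈ weightFiltration F d (M + w) :=
    weightFiltration_mono (by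
      have := Finset.single_le_sum (f := m) (fun _ _ => Nat.zero_le _) (Finset.mem_univ i)
      omega) (hm i)
  have := finiteDimensional_weightFiltration hF M
  have := finiteDimensional_weightFiltration hF (M + w)
  let φ : ((ι → E) × weightFiltration F d M) →ₗ[E] weightFiltration F d (M + w) :=
    (LinearMap.coprod (Fintype.linearCombination E g)
      ((LinearMap.mulLeft E P).comp (weightFiltration F d M).subtype)).codRestrict _ (by
        rintro ⟨c, f⟩
        rw [LinearMap.coprod_apply, Fintype.linearCombination_apply]
        refine add_mem (sum_mem fun i _ => Submodule.smul_mem _ _ (hgM i)) ?_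
        exact add_comm w M ▸ mul_mem_weightFiltration hP f.2)
  have hφ : Function.Injective φ := by
    rw [injective_iff_map_eq_zero]
    rintro ⟨c, f⟩ h
    have hsum : ∑ i, c i • g i + P * f = 0 := congrArg Subtype.val h
    have hc : c = 0 := by
      refine funext (Fintype.linearIndependent_iff.1 hg c ?_)
      simp only [← map_smul, ← map_sum]
      refine Ideal.Quotient.eq_zero_iff_mem.2 (Ideal.mem_span_singleton.2 ⟨-(f : AdjoinRoot F), ?_⟩)
      linear_combination hsum
    subst hc
    simpa [hP0] using hsum
  have hrank := LinearMap.finrank_le_finrank_of_injective hφ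
  rw [Module.finrank_prod, Module.finrank_fintype_fun_eq_card] at hrank
  have hupper := finrank_weightFiltration_le hF (M + w)
  have hlower := le_finrank_weightFiltration hF (∑ i, m i)
  rw [← hM] at hlower
  nlinarith

lemma rank_quotient_span_singleton_le (hF : IsWeightedMonic d F) [IsDomain (AdjoinRoot F)]
    {w : ℕ} {P : AdjoinRoot F} (hP : P ∈ weightFiltration F d w) (hP0 : P ≠ 0) :
    Module.rank E (AdjoinRoot F ⧸ Ideal.span {P}) ≤
      (F.natDegree * (w + d * F.natDegree + 1) : ℕ) := by
  refine rank_le fun s hs => ?_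
  choose g hg using Ideal.Quotient.mkₐ_surjective E (Ideal.span {P})
  refine (Fintype.card_coe s).symm.trans_le
    (card_le_of_linearIndependent_quotient_span hF hP hP0 (g := fun i : s => g i) ?_)
  simpa only [hg] using hs

lemma finite_quotient_span_singleton (hF : IsWeightedMonic d F) [IsDomain (AdjoinRoot F)]
    {P : AdjoinRoot F} (hP0 : P ≠ 0) : Module.Finite E (AdjoinRoot F ⧸ Ideal.span {P}) := by
  obtain ⟨w, hP⟩ := exists_mem_weightFiltration hF.monic d P
  exact Module.rank_lt_aleph0_iff.1
    ((rank_quotient_span_singleton_le hF hP hP0).trans_lt (Cardinal.natCast_lt_aleph0))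

end WeightFiltration

section PowersOfIdeals

variable {R : Type*} [CommRing R]

lemma pow_succ_lt_pow_of_ne_bot_of_ne_top [IsDomain R] [IsNoetherianRing R] {I : Ideal R}
    (hbot : I ≠ ⊥) (htop : I ≠ ⊤) (j : ℕ) : I ^ (j + 1) < I ^ j := by
  refine (Ideal.pow_le_pow_right j.le_succ).lt_of_ne fun h => hbot ?_
  have hstable (i : ℕ) : I ^ (j + i) = I ^ j := by
    induction i with
    | zero => rfl
    | succ i ih => rw [← add_assoc, pow_succ, ih, ← pow_succ, h]
  have hinf : I ^ j ≤ ⨅ i : ℕ, I ^ i :=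
    le_iInf fun i => hstable i ▸ Ideal.pow_le_pow_right (Nat.le_add_left i j)
  rw [Ideal.iInf_pow_eq_bot_of_isDomain I htop, le_bot_iff] at hinf
  exact eq_zero_of_pow_eq_zero hinf

lemma linearIndependent_quotient_pow {E : Type*} [Field E] [Algebra E R] {I : Ideal R} {n : ℕ}
    {g : Fin n → R} (hmem : ∀ j : Fin n, g j ∈ I ^ (j : ℕ))
    (hnotMem : ∀ j : Fin n, g j ∉ I ^ ((j : ℕ) + 1)) :
    LinearIndependent E fun j => Ideal.Quotient.mkₐ E (I ^ n) (g j) := by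
  rw [Fintype.linearIndependent_iff]
  intro c hc
  simp only [← map_smul, ← map_sum] at hc
  rw [Ideal.Quotient.mkₐ_eq_mk, Ideal.Quotient.eq_zero_iff_mem] at hc
  by_contra! hne
  obtain ⟨j, hj, hmin⟩ := wellFounded_lt.has_min {j | c j ≠ 0} hne
  have hrest : ∑ i ∈ Finset.univ.erase j, c i • g i ∈ I ^ ((j : ℕ) + 1) := by
    refine sum_mem fun i hi => ?_
    obtain hij | hji := (Finset.ne_of_mem_erase hi).lt_or_gt
    · rw [not_not.1 fun h => hmin i h hij, zero_smul]
      exact zero_mem _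
    · rw [Algebra.smul_def]
      exact Ideal.mul_mem_left _ _ (Ideal.pow_le_pow_right hji (hmem i))
  have hterm : c j • g j ∈ I ^ ((j : ℕ) + 1) := by
    rw [← Finset.add_sum_erase _ _ (Finset.mem_univ j)] at hc
    exact (add_mem_cancel_right hrest).1 (Ideal.pow_le_pow_right j.2 hc)
  apply hnotMem j
  rw [← inv_smul_smul₀ hj (g j), Algebra.smul_def]
  exact Ideal.mul_mem_left _ _ hterm

lemma le_finrank_quotient_pow (E : Type*) [Field E] [Algebra E R] [IsDomain R]
    [IsNoetherianRing R] {I : Ideal R} (hbot : I ≠ ⊥) (htop : I ≠ ⊤) (n : ℕ)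
    [Module.Finite E (R ⧸ I ^ n)] : n ≤ Module.finrank E (R ⧸ I ^ n) := by
  choose g hmem hnotMem using fun j : Fin n =>
    SetLike.exists_of_lt (pow_succ_lt_pow_of_ne_bot_of_ne_top hbot htop j)
  simpa using
    (linearIndependent_quotient_pow (E := E) hmem hnotMem).fintype_card_le_finrank

end PowersOfIdeals

lemma IsWeightedMonic.map {K E : Type*} [Field K] [Field E] {F : K[X][Y]} {d : ℕ}
    (hF : IsWeightedMonic d F) (φ : K →+* E) : IsWeightedMonic d (F.map (mapRingHom φ)) where
  monic := hF.monic.map _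
  natDegree_coeff_le j := by
    rw [hF.monic.natDegree_map, Polynomial.coeff_map]
    exact natDegree_map_le.trans (hF.natDegree_coeff_le j)

/-- The affine curve `F = 0` stays integral after every extension of the base field. -/
def IsAbsolutelyIntegral {K : Type u} [Field K] (F : K[X][Y]) : Prop :=
  ∀ (E : Type u) [Field E] (φ : K →+* E), IsDomain (AdjoinRoot (F.map (mapRingHom φ)))

lemma IsAbsolutelyIntegral.isDomain {K : Type u} [Field K] {F : K[X][Y]}
    (hF : IsAbsolutelyIntegral F) : IsDomain (AdjoinRoot F) := by
  have := hF K (RingHom.id K)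
  rwa [mapRingHom_id, Polynomial.map_id] at this

lemma evalEval_coordMonomial {R : Type*} [Field R] {F : R[X][Y]} {x y : R}
    (h : F.evalEval x y = 0) (i j : ℕ) :
    AdjoinRoot.evalEval h (coordMonomial F i j) = x ^ i * y ^ j := by
  simp [coordMonomial, AdjoinRoot.evalEval]

lemma evalEval_algebraMap {E : Type*} [Field E] {F : E[X][Y]} {x y : E} (h : F.evalEval x y = 0)
    (a : E) : AdjoinRoot.evalEval h (algebraMap E _ a) = a := by
  rw [algebraMap_eq_of_C]
  simp [AdjoinRoot.evalEval]

section GenericPoint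

variable {K E : Type*} [Field K] [Field E] {F : K[X][Y]} (α : AdjoinRoot F →+* E)

/-- The extension of `F` to `E` along an `E`-valued point `α` of the curve `F = 0`. -/
noncomputable abbrev pointBaseChange : E[X][Y] :=
  F.map (mapRingHom (α.comp (algebraMap K (AdjoinRoot F))))

/-- The canonical map to the coordinate ring of the base change of the curve `F = 0` along `α`. -/
noncomputable def toBaseChange : AdjoinRoot F →+* AdjoinRoot (pointBaseChange α) :=
  AdjoinRoot.map (mapRingHom (α.comp (algebraMap K _))) F (pointBaseChange α) dvd_rfl

lemma toBaseChange_coordMonomial (i j : ℕ) :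
    toBaseChange α (coordMonomial F i j) = coordMonomial (pointBaseChange α) i j := by
  simp [toBaseChange, coordMonomial]

lemma evalEval_pointBaseChange : (pointBaseChange α).evalEval
    (α (AdjoinRoot.of F X)) (α (AdjoinRoot.root F)) = 0 := by
  have hcomp : (evalRingHom (α (AdjoinRoot.of F X))).comp
      (mapRingHom (α.comp (algebraMap K (AdjoinRoot F)))) = α.comp (AdjoinRoot.of F) :=
    Polynomial.ringHom_ext (fun a => by simp [algebraMap_eq_of_C]) (by simp)
  rw [← map_evalRingHom_eval, Polynomial.map_map, hcomp, eval_map, ← hom_eval₂,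
    AdjoinRoot.eval₂_root, map_zero]

/-- Evaluation of functions on the base change of the curve at the rational point given by `α`. -/
noncomputable def pointEval : AdjoinRoot (pointBaseChange α) →+* E :=
  AdjoinRoot.evalEval (evalEval_pointBaseChange α)

lemma pointEval_toBaseChange (f : AdjoinRoot F) : pointEval α (toBaseChange α f) = α f := by
  have hcomp : (pointEval α).comp (toBaseChange α) = α := by
    refine AdjoinRoot.ringHom_ext (Polynomial.ringHom_ext (fun a => ?_) ?_) ?_ <;>
      simp [pointEval, toBaseChange, AdjoinRoot.evalEval, algebraMap_eq_of_C]
  exact RingHom.congr_fun hcomp f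

lemma ker_pointEval_ne_bot (hF : F.Monic) : RingHom.ker (pointEval α) ≠ ⊥ := by
  intro hbot
  have hinj : Function.Injective (pointEval α) := (RingHom.injective_iff_ker_eq_bot _).2 hbot
  have hdeg : (pointBaseChange α).degree ≠ 0 := fun h => by
    have hone : pointBaseChange α = 1 :=
      (hF.map _).natDegree_eq_zero.1 (natDegree_eq_zero_iff_degree_le_zero.2 h.le)
    simpa [hone] using evalEval_pointBaseChange α
  have hX : AdjoinRoot.of (pointBaseChange α) X =
      AdjoinRoot.of (pointBaseChange α) (C (α (AdjoinRoot.of F X))) :=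
    hinj (by simp [pointEval, AdjoinRoot.evalEval])
  exact X_ne_C _ (AdjoinRoot.of.injective_of_degree_ne_zero hdeg hX)

-- In characteristic `p` the difference of this sum and the image of the given relation is
-- `∑ a, (α (h a) - h a) ^ pᵏ * xⁱyʲ`, and `α (h a) - h a` vanishes at the point `α`.
lemma sum_smul_coordMonomial_mem_ker_pow {p : ℕ} [Fact p.Prime] [CharP K p] {k l r : ℕ}
    {h : Fin l × Fin r → AdjoinRoot F}
    (hsum : ∑ a, h a ^ p ^ k * coordMonomial F a.1 a.2 = 0) :
    ∑ a, α (h a) ^ p ^ k • coordMonomial (pointBaseChange α) a.1 a.2 ∈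
      RingHom.ker (pointEval α) ^ p ^ k := by
  have := (pointEval α).domain_nontrivial
  have : CharP E p := charP_of_injective_ringHom (α.comp (algebraMap K _)).injective p
  have : CharP (AdjoinRoot (pointBaseChange α)) p :=
    charP_of_injective_ringHom (algebraMap E _).injective p
  have himage := congrArg (toBaseChange α) hsum
  simp only [map_sum, map_mul, map_pow, toBaseChange_coordMonomial, map_zero] at himage
  rw [← sub_zero (∑ a, _), ← himage, ← Finset.sum_sub_distrib]
  refine sum_mem fun a _ => ?_
  rw [Algebra.smul_def, map_pow, ← sub_mul, ← sub_pow_char_pow]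
  refine Ideal.mul_mem_right _ _ (Ideal.pow_mem_pow ?_ _)
  rw [RingHom.mem_ker, map_sub, pointEval_toBaseChange, pointEval, evalEval_algebraMap, sub_self]

end GenericPoint

section Stepanov

variable {K : Type u} [Field K] {F : K[X][Y]} {d : ℕ}

-- The relation is transported to the generic point of the curve, where it becomes an element of a
-- high power of a maximal ideal but of low weighted degree.
lemma eq_zero_of_sum_pow_mul_coordMonomial_eq_zero {p : ℕ} [Fact p.Prime] [CharP K p]
    (hF : IsWeightedMonic d F) (habs : IsAbsolutelyIntegral F) {k l : ℕ}
    (hk : F.natDegree * (l + d * F.natDegree + d * F.natDegree + 1) < p ^ k)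
    {h : Fin l × Fin F.natDegree → AdjoinRoot F}
    (hsum : ∑ a, h a ^ p ^ k * coordMonomial F a.1 a.2 = 0) : h = 0 := by
  have := habs.isDomain
  set α : AdjoinRoot F →+* FractionRing (AdjoinRoot F) := algebraMap _ _
  have := habs _ (α.comp (algebraMap K _))
  have hFE : IsWeightedMonic d (pointBaseChange α) := hF.map _
  have hdeg : (pointBaseChange α).natDegree = F.natDegree := hF.monic.natDegree_map _
  set P := ∑ a, α (h a) ^ p ^ k • coordMonomial (pointBaseChange α) a.1 a.2
  by_cases hP0 : P = 0
  · have hcoeff := Fintype.linearIndependent_iff.1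
      (linearIndependent_coordMonomial hFE.monic hdeg.ge l) _ hP0
    exact funext fun a => IsFractionRing.injective (AdjoinRoot F) (FractionRing (AdjoinRoot F))
      ((eq_zero_of_pow_eq_zero (hcoeff a)).trans (map_zero α).symm)
  exfalso
  have hPW : P ∈ weightFiltration (pointBaseChange α) d (l + d * F.natDegree) :=
    sum_mem fun a _ => Submodule.smul_mem _ _ (coordMonomial_fin_mem_weightFiltration a)
  have hle : Ideal.span {P} ≤ RingHom.ker (pointEval α) ^ p ^ k :=
    (Ideal.span_singleton_le_iff_mem _).2 (sum_smul_coordMonomial_mem_ker_pow α hsum)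
  let q := (Ideal.Quotient.factorₐ (FractionRing (AdjoinRoot F)) hle).toLinearMap
  have hq : Function.Surjective q := Ideal.Quotient.factor_surjective hle
  have := finite_quotient_span_singleton hFE hP0
  have := Module.Finite.of_surjective q hq
  refine hk.not_ge ?_
  calc p ^ k ≤ _ := le_finrank_quotient_pow (FractionRing (AdjoinRoot F))
        (ker_pointEval_ne_bot α hF.monic) (RingHom.ker_ne_top _) _
    _ ≤ _ := LinearMap.finrank_le_finrank_of_surjective hq
    _ ≤ _ := Module.finrank_le_of_rank_le (rank_quotient_span_singleton_le hFE hPW hP0)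
    _ = _ := by rw [hdeg]

lemma exists_sum_coordMonomial_pow_mul_eq_zero (hF : IsWeightedMonic d F) {l m n : ℕ}
    (hlt : F.natDegree * (n * (l + d * F.natDegree) + (m + d * F.natDegree) + 1) <
      (l * F.natDegree) * (m * F.natDegree)) :
    ∃ b : Fin l × Fin F.natDegree → AdjoinRoot F, b ≠ 0 ∧
      (∀ a, b a ∈ weightFiltration F d (m + d * F.natDegree)) ∧
      ∑ a, coordMonomial F a.1 a.2 ^ n * b a = 0 := by
  set r := F.natDegree
  have hmem (a : Fin l × Fin r) (a' : Fin m × Fin r) :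
      coordMonomial F a.1 a.2 ^ n * coordMonomial F a'.1 a'.2 ∈
        weightFiltration F d (n * (l + d * r) + (m + d * r)) :=
    mul_mem_weightFiltration (pow_mem_weightFiltration (coordMonomial_fin_mem_weightFiltration a) n)
      (coordMonomial_fin_mem_weightFiltration a')
  let f (a : (Fin l × Fin r) × (Fin m × Fin r)) :
      weightFiltration F d (n * (l + d * r) + (m + d * r)) := ⟨_, hmem a.1 a.2⟩
  have hf : ¬ LinearIndependent K f := fun hli => by
    have := finiteDimensional_weightFiltration hF (n * (l + d * r) + (m + d * r))
    have hcard := hli.fintype_card_le_finrank.trans (finrank_weightFiltration_le hF _)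
    simp only [Fintype.card_prod, Fintype.card_fin] at hcard
    exact hlt.not_ge hcard
  obtain ⟨c, hc, ⟨a₀, a₁⟩, hne⟩ := Fintype.not_linearIndependent_iff.1 hf
  refine ⟨fun a => ∑ a', c (a, a') • coordMonomial F a'.1 a'.2, fun hb => hne ?_,
    fun a => sum_mem fun a' _ => Submodule.smul_mem _ _ (coordMonomial_fin_mem_weightFiltration a'),
    ?_⟩
  · exact Fintype.linearIndependent_iff.1 (linearIndependent_coordMonomial hF.monic le_rfl m) _
      (congrFun hb a₀) a₁
  · have hc' := congrArg (Submodule.subtype _) hc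
    simpa [f, Fintype.sum_prod_type, Finset.mul_sum, mul_smul_comm] using hc'

lemma card_points_le_of_forall_evalEval_eq_zero (hF : IsWeightedMonic d F)
    [IsDomain (AdjoinRoot F)] {w : ℕ} {G : AdjoinRoot F} (hG : G ∈ weightFiltration F d w)
    (hG0 : G ≠ 0) (heval : ∀ (x y : K) (h : F.evalEval x y = 0), AdjoinRoot.evalEval h G = 0) :
    Nat.card {a : K × K // F.evalEval a.1 a.2 = 0} ≤
      F.natDegree * (w + d * F.natDegree + 1) := by
  have := finite_quotient_span_singleton hF hG0
  let ev (a : {a : K × K // F.evalEval a.1 a.2 = 0}) : AdjoinRoot F →ₐ[K] K :=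
    { AdjoinRoot.evalEval a.2 with commutes' := evalEval_algebraMap a.2 }
  have hev (a) (f) (hf : f ∈ Ideal.span {G}) : ev a f = 0 := by
    obtain ⟨g, rfl⟩ := Ideal.mem_span_singleton'.1 hf
    rw [map_mul, show ev a G = 0 from heval _ _ a.2, mul_zero]
  let evQuot (a : {a : K × K // F.evalEval a.1 a.2 = 0}) :=
    Ideal.Quotient.liftₐ (Ideal.span {G}) (ev a) (hev a)
  have hinj : Function.Injective evQuot := fun a b hab => by
    have hmon (i j : ℕ) : a.1.1 ^ i * a.1.2 ^ j = b.1.1 ^ i * b.1.2 ^ j := by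
      rw [← evalEval_coordMonomial a.2, ← evalEval_coordMonomial b.2]
      exact DFunLike.congr_fun hab (Ideal.Quotient.mk _ (coordMonomial F i j))
    exact Subtype.ext (Prod.ext (by simpa using hmon 1 0) (by simpa using hmon 0 1))
  calc _ ≤ Nat.card ((AdjoinRoot F ⧸ Ideal.span {G}) →ₐ[K] K) :=
        Nat.card_le_card_of_injective _ hinj
    _ ≤ Module.finrank K (AdjoinRoot F ⧸ Ideal.span {G}) := card_algHom_le_finrank K _ K
    _ ≤ _ := Module.finrank_le_of_rank_le (rank_quotient_span_singleton_le hF hG hG0)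

-- The values of `b a` at rational points are fixed by the `q`-Frobenius, so there the vanishing
-- relation is the `q / pᵏ`-th power of `∑ a, b a ^ pᵏ * xⁱyʲ`.
lemma card_points_le {p : ℕ} [Fact p.Prime] [CharP K p] [Fintype K] (hF : IsWeightedMonic d F)
    (habs : IsAbsolutelyIntegral F) {k k' l m : ℕ} (hcard : Fintype.card K = p ^ (k + k'))
    (hk : F.natDegree * (l + d * F.natDegree + d * F.natDegree + 1) < p ^ k)
    (hlt : F.natDegree * (p ^ k' * (l + d * F.natDegree) + (m + d * F.natDegree) + 1) <
      (l * F.natDegree) * (m * F.natDegree)) :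
    Nat.card {a : K × K // F.evalEval a.1 a.2 = 0} ≤ F.natDegree *
      (p ^ k * (m + d * F.natDegree) + (l + d * F.natDegree) + d * F.natDegree + 1) := by
  have := habs.isDomain
  obtain ⟨b, hb0, hb, hsum⟩ := exists_sum_coordMonomial_pow_mul_eq_zero hF hlt
  refine card_points_le_of_forall_evalEval_eq_zero hF
    (G := ∑ a, b a ^ p ^ k * coordMonomial F a.1 a.2)
    (sum_mem fun a _ => mul_mem_weightFiltration (pow_mem_weightFiltration (hb a) _)
      (coordMonomial_fin_mem_weightFiltration a))
    (fun h => hb0 (eq_zero_of_sum_pow_mul_coordMonomial_eq_zero hF habs hk h)) fun x y h => ?_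
  refine eq_zero_of_pow_eq_zero (n := p ^ k') ?_
  rw [map_sum, sum_pow_char_pow, ← map_zero (AdjoinRoot.evalEval h), ← hsum, map_sum]
  refine Finset.sum_congr rfl fun a _ => ?_
  rw [map_mul, mul_pow, map_pow, ← pow_mul, ← pow_add, ← hcard, FiniteField.pow_card,
    mul_comm, map_mul, map_pow]

end Stepanov

section StepanovParameters

variable {Q Q' r D l m ε : ℝ}

lemma stepanov_dimension_lt (hr : 1 ≤ r) (hQ' : 1 ≤ Q') (hD : 0 ≤ D) (hε : 0 < ε)
    (hl : 2 * D + 3 + ε ≤ l * ε) (hm : (1 + ε) * Q' ≤ r * m) :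
    r * (Q' * (l + D) + (m + D) + 1) < (l * r) * (m * r) := by
  have hl1 : 1 ≤ l := by by_contra!; nlinarith
  have hm0 : 0 ≤ m := by by_contra!; nlinarith
  have hmul : (1 + ε) * Q' * (l - 1) ≤ r * m * (l - 1) :=
    mul_le_mul_of_nonneg_right hm (by linarith)
  have hQ'l : Q' * (l + 2 * D + 2) ≤ Q' * ((1 + ε) * (l - 1)) :=
    mul_le_mul_of_nonneg_left (by linarith) (by linarith)
  have hmr : m ≤ r * m := le_mul_of_one_le_left hm0 hr
  have hlt : Q' * (l + D) + (m + D) + 1 < l * (m * r) := by nlinarith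
  linarith [mul_lt_mul_of_pos_left hlt (show 0 < r by linarith)]

lemma stepanov_bound_le (hr : 0 ≤ r) (hQ : 1 ≤ Q) (hD : 0 ≤ D) (hl : 0 ≤ l)
    (hQ' : r + r * D + r * (l + 2 * D + 1) ≤ Q' * ε) (hm : r * m ≤ (1 + ε) * Q' + r) :
    r * (Q * (m + D) + (l + D) + D + 1) ≤ (1 + 2 * ε) * (Q * Q') := by
  have hmain : Q * (r * m) ≤ Q * ((1 + ε) * Q' + r) := mul_le_mul_of_nonneg_left hm (by linarith)
  have hrest : Q * (r + r * D + r * (l + 2 * D + 1)) ≤ Q * (Q' * ε) :=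
    mul_le_mul_of_nonneg_left hQ' (by linarith)
  have hconst : r * (l + 2 * D + 1) ≤ Q * (r * (l + 2 * D + 1)) :=
    le_mul_of_one_le_left (by positivity) hQ
  linarith

end StepanovParameters

lemma exists_natCast_mul_mem_Icc {r c : ℝ} (hr : 0 < r) (hc : 0 ≤ c) :
    ∃ m : ℕ, c ≤ r * m ∧ r * m ≤ c + r := by
  refine ⟨⌈c / r⌉₊, ?_, ?_⟩
  · exact (div_le_iff₀' hr).1 (Nat.le_ceil _)
  · have := (Nat.ceil_lt_add_one (div_nonneg hc hr.le)).le
    calc r * ⌈c / r⌉₊ ≤ r * (c / r + 1) := by gcongr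
      _ = c + r := by field_simp

lemma exists_forall_card_points_le (p : ℕ) [hp : Fact p.Prime] {r : ℕ} (hr : 0 < r) (d : ℕ)
    {ε : ℝ} (hε : 0 < ε) :
    ∃ n₀ : ℕ, ∀ n ≥ n₀, ∀ (K : Type u) [Field K] [Fintype K] [CharP K p],
      Fintype.card K = p ^ n → ∀ F : K[X][Y], IsWeightedMonic d F → F.natDegree = r →
      IsAbsolutelyIntegral F →
      (Nat.card {a : K × K // F.evalEval a.1 a.2 = 0} : ℝ) ≤ (1 + 2 * ε) * (p : ℝ) ^ n := by
  have hp1 : 1 < p := hp.out.one_lt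
  have hr1 : (1 : ℝ) ≤ r := by exact_mod_cast hr
  have hpow (k : ℕ) : (1 : ℝ) ≤ (p : ℝ) ^ k := one_le_pow₀ (by exact_mod_cast hp1.le)
  obtain ⟨l, hl⟩ := exists_nat_ge ((2 * (d * r) + 3 + ε) / ε)
  rw [div_le_iff₀ hε] at hl
  obtain ⟨k, hk⟩ := pow_unbounded_of_one_lt (r * (l + d * r + d * r + 1)) hp1
  obtain ⟨k₀, hk₀⟩ := exists_nat_ge ((r + r * (d * r) + r * (l + 2 * (d * r) + 1)) / ε : ℝ)
  rw [div_le_iff₀ hε] at hk₀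
  refine ⟨k + k₀, fun n hn K _ _ _ hcard F hF hFr habs => ?_⟩
  obtain ⟨k', rfl⟩ := Nat.exists_eq_add_of_le ((Nat.le_add_right k k₀).trans hn)
  have hk' : (k₀ : ℝ) ≤ (p : ℝ) ^ k' := by
    exact_mod_cast (Nat.le_of_add_le_add_left hn).trans (Nat.lt_pow_self hp1).le
  obtain ⟨m, hm, hm'⟩ := exists_natCast_mul_mem_Icc (r := r) (c := (1 + ε) * (p : ℝ) ^ k')
    (by positivity) (by positivity)
  have hlt : r * (p ^ k' * (l + d * r) + (m + d * r) + 1) < (l * r) * (m * r) := by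
    exact_mod_cast stepanov_dimension_lt hr1 (hpow k') (by positivity) hε hl hm
  have hbound := card_points_le hF habs hcard (hFr.symm ▸ hk) (hFr.symm ▸ hlt)
  rw [hFr] at hbound
  calc (Nat.card {a : K × K // F.evalEval a.1 a.2 = 0} : ℝ)
      ≤ r * (p ^ k * (m + d * r) + (l + d * r) + d * r + 1) := by exact_mod_cast hbound
    _ ≤ (1 + 2 * ε) * (p ^ k * p ^ k') := stepanov_bound_le (by positivity) (hpow k)
        (by positivity) (by positivity) (hk₀.trans (by gcongr)) hm'
    _ = (1 + 2 * ε) * (p : ℝ) ^ (k + k') := by rw [pow_add]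

section Irreducibility

lemma norm_root_of_monic {A : Type*} [CommRing A] [IsDomain A] {G : A[X]} (hG : G.Monic) :
    Algebra.norm A (AdjoinRoot.root G) = (-1) ^ G.natDegree * G.coeff 0 := by
  have hmin : G = minpoly A (AdjoinRoot.root G) := by
    refine minpoly.unique' _ _ hG (by rw [AdjoinRoot.aeval_eq, AdjoinRoot.mk_self]) fun q hq => ?_
    rw [AdjoinRoot.aeval_eq, Ne, AdjoinRoot.mk_eq_zero]
    exact or_iff_not_imp_left.2 fun hq0 => hG.not_dvd_of_degree_lt hq0 hq
  have hnorm := Algebra.PowerBasis.norm_gen_eq_coeff_zero_minpoly (AdjoinRoot.powerBasis' hG)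
  rwa [AdjoinRoot.powerBasis'_gen, AdjoinRoot.powerBasis'_dim, ← hmin] at hnorm

lemma exists_root_pow_eq_algebraMap_mul {A : Type*} [CommRing A] {F G : A[X]} (hF : F.Monic)
    (hdvd : G ∣ F) {π : A} (h : ∀ j < F.natDegree, π ∣ F.coeff j) :
    ∃ f : AdjoinRoot G, AdjoinRoot.root G ^ F.natDegree = algebraMap A _ π * f := by
  choose! c hc using h
  have hroot : F.eval₂ (AdjoinRoot.of G) (AdjoinRoot.root G) = 0 :=
    eval₂_eq_zero_of_dvd_of_eval₂_eq_zero _ _ hdvd (AdjoinRoot.eval₂_root G)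
  rw [eval₂_eq_sum_range, Finset.sum_range_succ, hF.coeff_natDegree, map_one, one_mul] at hroot
  refine ⟨-∑ j ∈ Finset.range F.natDegree, AdjoinRoot.of G (c j) * AdjoinRoot.root G ^ j, ?_⟩
  rw [eq_neg_of_add_eq_zero_right hroot, mul_neg, Finset.mul_sum]
  refine congrArg Neg.neg (Finset.sum_congr rfl fun j hj => ?_)
  rw [hc j (Finset.mem_range.1 hj), map_mul, AdjoinRoot.algebraMap_eq, mul_assoc]

lemma pow_natDegree_dvd_coeff_zero_pow {A : Type*} [CommRing A] [IsDomain A] {F G : A[X]}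
    (hF : F.Monic) (hG : G.Monic) (hdvd : G ∣ F) {π : A} (h : ∀ j < F.natDegree, π ∣ F.coeff j) :
    π ^ G.natDegree ∣ G.coeff 0 ^ F.natDegree := by
  obtain ⟨f, hf⟩ := exists_root_pow_eq_algebraMap_mul hF hdvd h
  have hnorm := congrArg (Algebra.norm A) hf
  rw [map_pow, map_mul, norm_root_of_monic hG,
    Algebra.norm_algebraMap_of_basis (AdjoinRoot.powerBasisAux' hG), Fintype.card_fin,
    mul_pow] at hnorm
  have hunit : IsUnit (((-1 : A) ^ G.natDegree) ^ F.natDegree) := (isUnit_one.neg.pow _).pow _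
  exact hunit.dvd_mul_left.1 (Dvd.intro _ hnorm.symm)

variable {E : Type*} [Field E]

lemma mul_natDegree_le_mul_rootMultiplicity {F G : E[X][Y]} (hF : F.Monic) (hG : G.Monic)
    (hdvd : G ∣ F) {s : E} {m : ℕ} (h : ∀ j < F.natDegree, (X - C s) ^ m ∣ F.coeff j)
    (hG0 : G.coeff 0 ≠ 0) :
    m * G.natDegree ≤ F.natDegree * (G.coeff 0).rootMultiplicity s := by
  classical
  have hpow := pow_natDegree_dvd_coeff_zero_pow hF hG hdvd h
  rwa [← pow_mul, ← le_rootMultiplicity_iff (pow_ne_zero _ hG0), ← count_roots, roots_pow,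
    Multiset.count_nsmul, count_roots] at hpow

-- Eisenstein–Dumas: the Newton polygon of `F` at `X - C s` has a single slope `m / deg F`, in
-- lowest terms.
lemma irreducible_of_rootMultiplicity_coprime {F : E[X][Y]} (hF : F.Monic) (hdeg : 0 < F.natDegree)
    {s : E} {m : ℕ} (hm : 0 < m) (hcop : m.Coprime F.natDegree)
    (hzero : (F.coeff 0).rootMultiplicity s = m)
    (hdvd : ∀ j < F.natDegree, (X - C s) ^ m ∣ F.coeff j) : Irreducible F := by
  have hF0 : F.coeff 0 ≠ 0 := fun h => by simp [h] at hzero; omega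
  have hF1 : F ≠ 1 := fun h => by simp [h] at hdeg
  refine hF.irreducible_iff_natDegree'.2 ⟨hF1, fun G H hG hH hGH hHdeg => ?_⟩
  rw [Finset.mem_Ioc] at hHdeg
  have hcoeff : G.coeff 0 * H.coeff 0 = F.coeff 0 := by rw [← hGH, mul_coeff_zero]
  have hsum : G.natDegree + H.natDegree = F.natDegree := by rw [← hGH, hG.natDegree_mul hH]
  have hmul : (G.coeff 0).rootMultiplicity s + (H.coeff 0).rootMultiplicity s = m := by
    rw [← hzero, ← hcoeff, rootMultiplicity_mul (hcoeff ▸ hF0)]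
  have hGle := mul_natDegree_le_mul_rootMultiplicity hF hG (Dvd.intro _ hGH) hdvd
    (left_ne_zero_of_mul (hcoeff ▸ hF0))
  have hHle := mul_natDegree_le_mul_rootMultiplicity hF hH (Dvd.intro_left _ hGH) hdvd
    (right_ne_zero_of_mul (hcoeff ▸ hF0))
  have hHeq : m * H.natDegree = F.natDegree * (H.coeff 0).rootMultiplicity s := by
    have := congrArg₂ (· * ·) hmul hsum
    simp only [add_mul, mul_add] at this
    nlinarith
  have hle := Nat.le_of_dvd hHdeg.1 (hcop.symm.dvd_of_dvd_mul_left (Dvd.intro _ hHeq.symm))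
  omega

end Irreducibility

lemma isAbsolutelyIntegral_of_rootMultiplicity_coprime {K : Type u} [Field K] {F : K[X][Y]}
    (hF : F.Monic) (hdeg : 0 < F.natDegree) {s : AlgebraicClosure K} {m : ℕ} (hm : 0 < m)
    (hcop : m.Coprime F.natDegree)
    (hzero : ((F.coeff 0).map (algebraMap K (AlgebraicClosure K))).rootMultiplicity s = m)
    (hdvd : ∀ j < F.natDegree,
      (X - C s) ^ m ∣ (F.coeff j).map (algebraMap K (AlgebraicClosure K))) :
    IsAbsolutelyIntegral F := by
  intro E _ φ
  let _ : Algebra K (AlgebraicClosure E) := ((algebraMap E (AlgebraicClosure E)).comp φ).toAlgebra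
  let ψ : AlgebraicClosure K →+* AlgebraicClosure E :=
    (IsAlgClosed.lift : AlgebraicClosure K →ₐ[K] AlgebraicClosure E)
  have hψ : ψ.comp (algebraMap K _) = (algebraMap E (AlgebraicClosure E)).comp φ :=
    AlgHom.comp_algebraMap _
  have hmap : (F.map (mapRingHom φ)).map (mapRingHom (algebraMap E (AlgebraicClosure E))) =
      (F.map (mapRingHom (algebraMap K (AlgebraicClosure K)))).map (mapRingHom ψ) := by
    rw [Polynomial.map_map, Polynomial.map_map, mapRingHom_comp, mapRingHom_comp, hψ]
  have hirr : Irreducible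
      ((F.map (mapRingHom φ)).map (mapRingHom (algebraMap E (AlgebraicClosure E)))) := by
    rw [hmap]
    have hdegψ : ((F.map (mapRingHom (algebraMap K (AlgebraicClosure K)))).map
        (mapRingHom ψ)).natDegree = F.natDegree := by
      rw [(hF.map _).natDegree_map, hF.natDegree_map]
    refine irreducible_of_rootMultiplicity_coprime ((hF.map _).map _) (hdegψ ▸ hdeg) (s := ψ s) hm
      (hdegψ ▸ hcop) ?_ fun j hj => ?_
    · rw [Polynomial.coeff_map, Polynomial.coeff_map, coe_mapRingHom, coe_mapRingHom,
        ← eq_rootMultiplicity_map ψ.injective, hzero]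
    · simpa [Polynomial.coeff_map] using Polynomial.map_dvd ψ (hdvd j (hdegψ ▸ hj))
  exact AdjoinRoot.isDomain_of_prime
    ((hF.map _).irreducible_of_irreducible_map _ _ hirr).prime

section WordCoords

variable {A B : Type*} [CommRing A] [CommRing B]

/-- Left multiplication by `x` in the coordinates with respect to `1, x, y, xy`, for `x` and `y`
in `SL₂` with `tr x = s`, `tr y = t`, `tr xy = u`. -/
def coordsMulX (s : A) (v : Fin 4 → A) : Fin 4 → A :=
  ![-v 1, v 0 + s * v 1, -v 3, v 2 + s * v 3]

/-- Left multiplication by `y` in the coordinates with respect to `1, x, y, xy`, for `x` and `y`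
in `SL₂` with `tr x = s`, `tr y = t`, `tr xy = u`. -/
def coordsMulY (s t u : A) (v : Fin 4 → A) : Fin 4 → A :=
  ![(u - s * t) * v 1 - v 2 - s * v 3, t * v 1 + v 3, v 0 + s * v 1 + t * v 2 + u * v 3, -v 1]

/-- Left multiplication by the `m`-th power of an element of `SL₂` of trace `τ` which itself acts
through `φ`, computed by means of `g ^ m = S_{m-1}(τ) g - S_{m-2}(τ)`. -/
noncomputable def coordsMulZPow (τ : A) (φ : (Fin 4 → A) → Fin 4 → A) (m : ℤ) (v : Fin 4 → A) :
    Fin 4 → A :=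
  fun i => (Chebyshev.S A (m - 1)).eval τ * φ v i - (Chebyshev.S A (m - 2)).eval τ * v i

/-- The coordinates of `x^{a₁}y^{b₁}⋯x^{a_r}y^{b_r}` with respect to `1, x, y, xy`, where the list
consists of the pairs `(aᵢ, bᵢ)` and `tr x = s`, `tr y = t`, `tr xy = u`. -/
noncomputable def wordCoords (s t u : A) : List (ℤ × ℤ) → Fin 4 → A
  | [] => ![1, 0, 0, 0]
  | m :: L => coordsMulZPow s (coordsMulX s) m.1
      (coordsMulZPow t (coordsMulY s t u) m.2 (wordCoords s t u L))

/-- The trace of `x^{a₁}y^{b₁}⋯x^{a_r}y^{b_r}` as a function of `s = tr x`, `t = tr y` and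
`u = tr xy`. -/
noncomputable def wordTrace (s t u : A) (L : List (ℤ × ℤ)) : A :=
  2 * wordCoords s t u L 0 + s * wordCoords s t u L 1 + t * wordCoords s t u L 2 +
    u * wordCoords s t u L 3

lemma map_wordCoords (f : A →+* B) (s t u : A) (L : List (ℤ × ℤ)) (i : Fin 4) :
    f (wordCoords s t u L i) = wordCoords (f s) (f t) (f u) L i := by
  have hS (a : ℤ) (τ : A) :
      f ((Chebyshev.S A a).eval τ) = (Chebyshev.S B a).eval (f τ) := by
    rw [← Chebyshev.map_S f, eval_map_apply]
  induction L generalizing i with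
  | nil => fin_cases i <;> simp [wordCoords]
  | cons m L ih =>
    fin_cases i <;> simp [wordCoords, coordsMulZPow, coordsMulX, coordsMulY, hS, ih]

lemma map_wordTrace (f : A →+* B) (s t u : A) (L : List (ℤ × ℤ)) :
    f (wordTrace s t u L) = wordTrace (f s) (f t) (f u) L := by
  simp only [wordTrace, map_add, map_mul, map_wordCoords, map_ofNat]

/-- The product of the Chebyshev polynomials `S_{a-1}` over a list of exponents. These products
give the top coefficient in `u` of a word trace. -/
noncomputable def chebyshevProd (A : Type*) [CommRing A] (L : List ℤ) : A[X] :=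
  (L.map fun a => Chebyshev.S A (a - 1)).prod

lemma map_chebyshevProd (f : A →+* B) (L : List ℤ) :
    (chebyshevProd A L).map f = chebyshevProd B L := by
  rw [chebyshevProd, Polynomial.map_list_prod, List.map_map, chebyshevProd]
  exact congrArg List.prod (List.map_congr_left fun a _ => Chebyshev.map_S f (a - 1))

/-- A bound `n` for the degree in `u` of the coordinates `v` of a word, together with the
coefficient `τ` of degree `n` on which the top coefficient of the trace depends. -/
structure HasTopCoeff (n : ℕ) (τ : A) (v : Fin 4 → A[X]) : Prop where
  coeff_eq_zero : ∀ i ≠ 0, ∀ k ≥ n, (v i).coeff k = 0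
  coeff_zero_eq_zero : ∀ k ≥ n, 0 < k → (v 0).coeff k = 0
  coeff_add_X_mul : (v 0 + X * v 3).coeff n = τ

lemma eval_C_chebyshevS (a : ℤ) (s : A) :
    (Chebyshev.S A[X] a).eval (C s) = C ((Chebyshev.S A a).eval s) := by
  rw [← Chebyshev.map_S C, eval_map_apply]

lemma HasTopCoeff.coordsMul {n : ℕ} {τ : A} {v : Fin 4 → A[X]} (h : HasTopCoeff n τ v) (s t : A)
    (a b : ℤ) :
    HasTopCoeff (n + 1)
      ((Chebyshev.S A (a - 1)).eval s * ((Chebyshev.S A (b - 1)).eval t * τ))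
      (coordsMulZPow (C s) (coordsMulX (C s)) a
        (coordsMulZPow (C t) (coordsMulY (C s) (C t) X) b v)) := by
  have h₁ : ∀ k ≥ n, (v 1).coeff k = 0 := h.coeff_eq_zero 1 (by decide)
  have h₂ : ∀ k ≥ n, (v 2).coeff k = 0 := h.coeff_eq_zero 2 (by decide)
  have h₃ : ∀ k ≥ n, (v 3).coeff k = 0 := h.coeff_eq_zero 3 (by decide)
  have h₀ : ∀ k ≥ n, (v 0).coeff (k + 1) = 0 := fun k hk =>
    h.coeff_zero_eq_zero (k + 1) (by omega) k.succ_pos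
  generalize hw : coordsMulZPow (C t) (coordsMulY (C s) (C t) X) b v = w
  have hw₁ : ∀ k ≥ n, (w 1).coeff k = 0 := fun k hk => by
    simp [← hw, coordsMulZPow, coordsMulY, eval_C_chebyshevS, h₁ k hk, h₃ k hk]
  have hw₃ : ∀ k ≥ n, (w 3).coeff k = 0 := fun k hk => by
    simp [← hw, coordsMulZPow, coordsMulY, eval_C_chebyshevS, h₁ k hk, h₃ k hk]
  have hw₀ : ∀ k ≥ n, (w 0).coeff (k + 1) = 0 := fun k hk => by
    simp [← hw, coordsMulZPow, coordsMulY, eval_C_chebyshevS, mul_assoc, sub_mul, h₀ k hk, h₁ k hk,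
      h₁ (k + 1) (by omega), h₂ (k + 1) (by omega), h₃ (k + 1) (by omega)]
  have hw₂ : ∀ k ≥ n, (w 2).coeff (k + 1) = 0 := fun k hk => by
    simp [← hw, coordsMulZPow, coordsMulY, eval_C_chebyshevS, h₀ k hk, h₃ k hk,
      h₁ (k + 1) (by omega), h₂ (k + 1) (by omega)]
  have htop : (w 2).coeff n = (Chebyshev.S A (b - 1)).eval t * τ := by
    rw [← h.coeff_add_X_mul]
    simp [← hw, coordsMulZPow, coordsMulY, eval_C_chebyshevS, h₁ n le_rfl, h₂ n le_rfl]
  refine ⟨fun i hi k hk => ?_, fun k hk _ => ?_, ?_⟩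
  · obtain ⟨k, rfl⟩ := Nat.exists_eq_add_of_le' (n.succ_pos.trans_le hk)
    have hk' : n ≤ k := by omega
    fin_cases i <;> simp_all [coordsMulZPow, coordsMulX, eval_C_chebyshevS, Nat.le_succ_of_le]
  · obtain ⟨k, rfl⟩ := Nat.exists_eq_add_of_le' (n.succ_pos.trans_le hk)
    simp [coordsMulZPow, coordsMulX, eval_C_chebyshevS, hw₀ k (by omega), hw₁ (k + 1) (by omega)]
  · simp [coordsMulZPow, coordsMulX, eval_C_chebyshevS, htop, hw₀ n le_rfl, hw₁ (n + 1) (by omega),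
      hw₃ n le_rfl, mul_sub]

lemma hasTopCoeff_wordCoords (s t : A) (L : List (ℤ × ℤ)) :
    HasTopCoeff L.length
      ((chebyshevProd A (L.map Prod.fst)).eval s * (chebyshevProd A (L.map Prod.snd)).eval t)
      (wordCoords (C s) (C t) X L) := by
  induction L with
  | nil =>
    refine ⟨fun i hi k _ => ?_, fun k _ hk => ?_, by simp [wordCoords, chebyshevProd]⟩
    · obtain rfl | rfl | rfl : i = 1 ∨ i = 2 ∨ i = 3 := by omega
      all_goals simp [wordCoords]
    · simpa [wordCoords, coeff_one] using fun h => absurd h hk.ne'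
  | cons m L ih =>
    have h := ih.coordsMul s t m.1 m.2
    rw [← mul_assoc, mul_mul_mul_comm] at h
    simp only [chebyshevProd, List.map_cons, List.prod_cons, eval_mul] at h ⊢
    exact h

lemma coeff_wordTrace_length (s t : A) {L : List (ℤ × ℤ)} (hL : L ≠ []) :
    (wordTrace (C s) (C t) X L).coeff L.length =
      (chebyshevProd A (L.map Prod.fst)).eval s * (chebyshevProd A (L.map Prod.snd)).eval t := by
  have h := hasTopCoeff_wordCoords s t L
  rw [← h.coeff_add_X_mul, wordTrace, two_mul]
  simp [h.coeff_eq_zero 1 (by decide) _ le_rfl, h.coeff_eq_zero 2 (by decide) _ le_rfl,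
    h.coeff_zero_eq_zero _ le_rfl (List.length_pos_iff.2 hL)]

lemma natDegree_wordTrace_le (s t : A) (L : List (ℤ × ℤ)) :
    (wordTrace (C s) (C t) X L).natDegree ≤ L.length := by
  have h := hasTopCoeff_wordCoords s t L
  rw [natDegree_le_iff_coeff_eq_zero]
  intro k hk
  obtain ⟨k, rfl⟩ := Nat.exists_eq_add_of_le' (pos_of_gt hk)
  rw [wordTrace, two_mul]
  simp [h.coeff_eq_zero 1 (by decide) (k + 1) hk.le, h.coeff_eq_zero 2 (by decide) (k + 1) hk.le,
    h.coeff_eq_zero 3 (by decide) k (by omega), h.coeff_zero_eq_zero (k + 1) hk.le k.succ_pos]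

end WordCoords

section MatrixTrace

variable {K : Type*} [CommRing K] (x y : SpecialLinearGroup (Fin 2) K)

lemma sl2_mul_self : x.1 * x.1 = x.1.trace • x.1 - 1 := by
  nontriviality K
  have h := x.1.aeval_self_charpoly
  rw [charpoly_fin_two, x.2] at h
  simp only [map_sub, map_add, map_mul, aeval_X, aeval_C, map_one, sq] at h
  rw [← Algebra.smul_def] at h
  rw [eq_sub_iff_add_eq, ← sub_eq_zero, ← h]
  abel

lemma sl2_mul_comm : y.1 * x.1 = -(x.1 * y.1) + y.1.trace • x.1 + x.1.trace • y.1 +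
    ((x.1 * y.1).trace - x.1.trace * y.1.trace) • 1 := by
  ext i j
  fin_cases i <;> fin_cases j <;>
    simp [Matrix.mul_apply, Fin.sum_univ_two, trace_fin_two] <;> ring

lemma sl2_coe_zpow (a : ℤ) :
    ((x ^ a : SpecialLinearGroup (Fin 2) K) : Matrix (Fin 2) (Fin 2) K) =
      (Chebyshev.S K (a - 1)).eval x.1.trace • x.1 -
        (Chebyshev.S K (a - 2)).eval x.1.trace • 1 := by
  have hrec (b : ℤ) : (Chebyshev.S K (b + 1)).eval x.1.trace =
      x.1.trace * (Chebyshev.S K b).eval x.1.trace - (Chebyshev.S K (b - 1)).eval x.1.trace := by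
    simp [Chebyshev.S_add_one]
  have hinv : ((x⁻¹ : SpecialLinearGroup (Fin 2) K) : Matrix (Fin 2) (Fin 2) K) =
      x.1.trace • 1 - x.1 := by
    rw [Matrix.SpecialLinearGroup.coe_inv, adjugate_fin_two]
    ext i j
    fin_cases i <;> fin_cases j <;> simp [trace_fin_two]
  induction a using Int.induction_on with
  | zero => simp
  | succ n ih =>
    have h := hrec (n - 1)
    rw [sub_add_cancel, sub_sub, one_add_one_eq_two] at h
    rw [_root_.zpow_add_one, Matrix.SpecialLinearGroup.coe_mul, ih, sub_mul, smul_mul_assoc,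
      smul_mul_assoc, sl2_mul_self, one_mul, add_sub_cancel_right, h, add_sub_assoc]
    norm_num [← sub_eq_add_neg]
    module
  | pred n ih =>
    have h := hrec (-n - 2)
    rw [show -(n : ℤ) - 2 + 1 = -n - 1 by ring] at h
    rw [_root_.zpow_sub_one, Matrix.SpecialLinearGroup.coe_mul, ih, hinv, mul_sub, sub_mul, sub_mul,
      smul_mul_assoc, smul_mul_assoc, smul_mul_assoc, sl2_mul_self, mul_smul_comm, mul_one, one_mul,
      smul_mul_assoc, one_mul, h, sub_sub _ (1 : ℤ) 1, one_add_one_eq_two,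
      sub_right_comm (-n : ℤ) 1 2]
    module

/-- The matrix with coordinates `v` with respect to `1, x, y, xy`. -/
def ofCoords (v : Fin 4 → K) : Matrix (Fin 2) (Fin 2) K :=
  v 0 • 1 + v 1 • x.1 + v 2 • y.1 + v 3 • (x.1 * y.1)

lemma ofCoords_coordsMulX (v : Fin 4 → K) :
    ofCoords x y (coordsMulX x.1.trace v) = x.1 * ofCoords x y v := by
  have hxxy : x.1 * (x.1 * y.1) = x.1.trace • (x.1 * y.1) - y.1 := by
    rw [← mul_assoc, sl2_mul_self, sub_mul, smul_mul_assoc, one_mul]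
  simp only [ofCoords, coordsMulX, mul_add, mul_smul_comm, mul_one, sl2_mul_self, hxxy, cons_val]
  module

lemma ofCoords_coordsMulY (v : Fin 4 → K) :
    ofCoords x y (coordsMulY x.1.trace y.1.trace (x.1 * y.1).trace v) =
      y.1 * ofCoords x y v := by
  have hyxy : y.1 * (x.1 * y.1) = x.1 - x.1.trace • 1 + (x.1 * y.1).trace • y.1 := by
    rw [← mul_assoc, sl2_mul_comm, add_mul, add_mul, add_mul, neg_mul, mul_assoc, sl2_mul_self,
      mul_sub, smul_mul_assoc, smul_mul_assoc, smul_mul_assoc, sl2_mul_self, mul_one, one_mul,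
      mul_smul_comm]
    module
  simp only [ofCoords, coordsMulY, mul_add, mul_smul_comm, mul_one, sl2_mul_self y,
    sl2_mul_comm x y, hyxy, cons_val]
  module

lemma ofCoords_coordsMulZPow (g : SpecialLinearGroup (Fin 2) K) {φ : (Fin 4 → K) → Fin 4 → K}
    (hφ : ∀ v, ofCoords x y (φ v) = g.1 * ofCoords x y v) (m : ℤ) (v : Fin 4 → K) :
    ofCoords x y (coordsMulZPow g.1.trace φ m v) =
      ((g ^ m : SpecialLinearGroup (Fin 2) K) : Matrix (Fin 2) (Fin 2) K) * ofCoords x y v := by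
  rw [sl2_coe_zpow, sub_mul, smul_mul_assoc, smul_mul_assoc, one_mul, ← hφ]
  simp only [coordsMulZPow, ofCoords]
  module

/-- The word `x^{a₁}y^{b₁}⋯x^{a_r}y^{b_r}` given by the list of pairs `(aᵢ, bᵢ)`. -/
def wordOfList (L : List (ℤ × ℤ)) : FreeGroup (Fin 2) :=
  (L.map fun m => FreeGroup.of (0 : Fin 2) ^ m.1 * FreeGroup.of (1 : Fin 2) ^ m.2).prod

lemma ofCoords_wordCoords (L : List (ℤ × ℤ)) :
    ofCoords x y (wordCoords x.1.trace y.1.trace (x.1 * y.1).trace L) =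
      (wordEval (wordOfList L) x y).1 := by
  induction L with
  | nil => simp [ofCoords, wordCoords, wordEval, wordOfList]
  | cons m L ih =>
    rw [wordCoords, ofCoords_coordsMulZPow x y x (ofCoords_coordsMulX x y),
      ofCoords_coordsMulZPow x y y (ofCoords_coordsMulY x y), ih]
    simp [wordEval, wordOfList, mul_assoc]

lemma trace_wordEval (L : List (ℤ × ℤ)) :
    (wordEval (wordOfList L) x y).1.trace =
      wordTrace x.1.trace y.1.trace (x.1 * y.1).trace L := by
  rw [← ofCoords_wordCoords, ofCoords, wordTrace, trace_add, trace_add, trace_add, trace_smul,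
    trace_smul, trace_smul, trace_smul, trace_one]
  simp only [smul_eq_mul, Fintype.card_fin, Nat.cast_ofNat]
  ring

end MatrixTrace

section AuxiliaryCurve

variable {K : Type u} [Field K]

/-- Over the algebraic closure, `a` has a root whose multiplicity is prime to `r`. -/
def HasCoprimeRoot (a : K[X]) (r : ℕ) : Prop :=
  ∃ s : AlgebraicClosure K,
    0 < (a.map (algebraMap K (AlgebraicClosure K))).rootMultiplicity s ∧
      ((a.map (algebraMap K (AlgebraicClosure K))).rootMultiplicity s).Coprime r

lemma HasCoprimeRoot.ne_zero {a : K[X]} {r : ℕ} (h : HasCoprimeRoot a r) : a ≠ 0 := by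
  rintro rfl
  obtain ⟨s, hs, -⟩ := h
  simp at hs

/-- The curve `g(y / a(x)²) = f(x, v / a(x)²)` with its denominators cleared. -/
noncomputable def auxCurve (f : K[X][Y]) (g a : K[X]) (v : K) : K[X][Y] :=
  (g.map C).scaleRoots (a ^ 2) - C ((f.scaleRoots (a ^ 2)).eval (C v))

variable {f : K[X][Y]} {g a : K[X]} {v τ : K}

lemma natDegree_auxCurve : (auxCurve f g a v).natDegree = g.natDegree := by
  rw [auxCurve, natDegree_sub_C, natDegree_scaleRoots, natDegree_map_eq_of_injective C_injective]

lemma coeff_auxCurve {j : ℕ} (hj : j ≠ 0) :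
    (auxCurve f g a v).coeff j = C (g.coeff j) * (a ^ 2) ^ (g.natDegree - j) := by
  rw [auxCurve, coeff_sub, coeff_C_of_ne_zero hj, sub_zero, coeff_scaleRoots, coeff_map,
    natDegree_map_eq_of_injective C_injective]

lemma coeff_zero_auxCurve : (auxCurve f g a v).coeff 0 = C (g.coeff 0) * (a ^ 2) ^ g.natDegree -
    ∑ j ∈ Finset.range (f.natDegree + 1), f.coeff j * (a ^ 2) ^ (f.natDegree - j) * C v ^ j := by
  rw [auxCurve, coeff_sub, coeff_C_zero, coeff_scaleRoots, coeff_map,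
    natDegree_map_eq_of_injective C_injective, tsub_zero, eval_eq_sum_range, natDegree_scaleRoots]
  simp only [coeff_scaleRoots]

lemma auxCurve_monic (hg : g.Monic) (hg0 : 0 < g.natDegree) : (auxCurve f g a v).Monic := by
  rw [Monic, leadingCoeff, natDegree_auxCurve, coeff_auxCurve hg0.ne', hg.coeff_natDegree,
    tsub_self, pow_zero, mul_one, C_1]

lemma evalEval_auxCurve (h : f.natDegree = g.natDegree) (s u y : K) :
    (auxCurve f g a (u * a.eval s ^ 2)).evalEval s (y * a.eval s ^ 2) =
      (a.eval s ^ 2) ^ g.natDegree * (g.eval y - f.evalEval s u) := by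
  have hscale (F : K[X][Y]) (z : K) : (F.scaleRoots (a ^ 2)).evalEval s (z * a.eval s ^ 2) =
      (a.eval s ^ 2) ^ F.natDegree * F.evalEval s z := by
    have := scaleRoots_eval₂_mul (p := F) (evalRingHom s) z (a ^ 2)
    rwa [eval₂_evalRingHom, coe_evalRingHom, eval_pow, mul_comm (a.eval s ^ 2) z] at this
  rw [auxCurve, evalEval_sub, hscale, evalEval_C, ← evalEval, hscale, h,
    natDegree_map_eq_of_injective C_injective, evalEval, eval_map_apply, eval_C, mul_sub]

lemma auxCurve_isWeightedMonic {D : ℕ} (hg : g.Monic) (hg0 : 0 < g.natDegree)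
    (h : f.natDegree = g.natDegree) (ha : a.natDegree ≤ D) (hf : ∀ j, (f.coeff j).natDegree ≤ D) :
    IsWeightedMonic (3 * D) (auxCurve f g a v) := by
  refine ⟨auxCurve_monic hg hg0, fun j => ?_⟩
  have hpow (k : ℕ) : ((a ^ 2) ^ k).natDegree ≤ 2 * D * k := by
    rw [← pow_mul, natDegree_pow, mul_right_comm]
    gcongr
  have hmono (k : ℕ) : 2 * D * k ≤ 3 * D * k := by gcongr; norm_num
  rw [natDegree_auxCurve]
  rcases eq_or_ne j 0 with rfl | hj
  · rw [coeff_zero_auxCurve, h, tsub_zero]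
    refine (natDegree_sub_le _ _).trans
      (max_le ?_ (natDegree_sum_le_of_forall_le _ _ fun i _ => ?_))
    · exact (natDegree_C_mul_le _ _).trans ((hpow _).trans (hmono _))
    rw [← C_pow]
    calc (f.coeff i * (a ^ 2) ^ (g.natDegree - i) * C (v ^ i)).natDegree
        ≤ D + 2 * D * (g.natDegree - i) :=
          (natDegree_mul_C_le _ _).trans (natDegree_mul_le.trans (add_le_add (hf i) (hpow _)))
      _ ≤ D * g.natDegree + 2 * D * g.natDegree := by
          gcongr
          · exact Nat.le_mul_of_pos_right _ hg0
          · exact Nat.sub_le _ _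
      _ = 3 * D * g.natDegree := by ring
  · rw [coeff_auxCurve hj]
    exact (natDegree_C_mul_le _ _).trans ((hpow _).trans (hmono _))

lemma sq_dvd_coeff_zero_auxCurve_add (hg0 : 0 < g.natDegree) (h : f.natDegree = g.natDegree)
    (hf : f.leadingCoeff = a * C τ) :
    a ^ 2 ∣ (auxCurve f g a v).coeff 0 + a * C (τ * v ^ g.natDegree) := by
  have hdvd (j : ℕ) (hj : j < g.natDegree) : a ^ 2 ∣ (a ^ 2) ^ (g.natDegree - j) :=
    dvd_pow_self _ (Nat.sub_ne_zero_of_lt hj)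
  have htop : f.coeff g.natDegree = a * C τ := by rw [← h, coeff_natDegree, hf]
  have hcoeff : (auxCurve f g a v).coeff 0 + a * C (τ * v ^ g.natDegree) =
      C (g.coeff 0) * (a ^ 2) ^ (g.natDegree - 0) -
        ∑ j ∈ Finset.range g.natDegree, f.coeff j * (a ^ 2) ^ (g.natDegree - j) * C v ^ j := by
    rw [coeff_zero_auxCurve, h, Finset.sum_range_succ, htop, tsub_self, pow_zero, tsub_zero, C_mul,
      C_pow]
    ring
  rw [hcoeff]
  exact dvd_sub ((hdvd 0 hg0).mul_left _) (Finset.dvd_sum fun j hj =>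
    ((hdvd j (Finset.mem_range.1 hj)).mul_left _).mul_right _)

lemma auxCurve_isAbsolutelyIntegral (hg : g.Monic) (hg0 : 0 < g.natDegree)
    (h : f.natDegree = g.natDegree) (hf : f.leadingCoeff = a * C τ) (hτ : τ ≠ 0) (hv : v ≠ 0)
    (ha : HasCoprimeRoot a g.natDegree) : IsAbsolutelyIntegral (auxCurve f g a v) := by
  have ha0 := ha.ne_zero
  obtain ⟨s, hm, hcop⟩ := ha
  set φ := algebraMap K (AlgebraicClosure K)
  have hroot : (a.map φ).eval s = 0 :=
    (rootMultiplicity_pos ((Polynomial.map_ne_zero_iff φ.injective).2 ha0)).1 hm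
  obtain ⟨c, hc⟩ := sq_dvd_coeff_zero_auxCurve_add (v := v) hg0 h hf
  have hzero : (auxCurve f g a v).coeff 0 = a * (a * c - C (τ * v ^ g.natDegree)) := by
    rw [eq_sub_of_add_eq hc]; ring
  have hunit : ((a * c - C (τ * v ^ g.natDegree)).map φ).eval s ≠ 0 := by
    rw [Polynomial.map_sub, Polynomial.map_mul, eval_sub, eval_mul, hroot, zero_mul, zero_sub,
      map_C, eval_C, neg_ne_zero, _root_.map_ne_zero]
    exact mul_ne_zero hτ (pow_ne_zero _ hv)
  have hdvd : ∀ j < g.natDegree, a ∣ (auxCurve f g a v).coeff j := fun j hj => by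
    rcases eq_or_ne j 0 with rfl | hj0
    · exact hzero ▸ dvd_mul_right _ _
    · rw [coeff_auxCurve hj0, ← pow_mul]
      exact (dvd_pow_self _ (by omega)).mul_left _
  refine isAbsolutelyIntegral_of_rootMultiplicity_coprime (s := s) (auxCurve_monic hg hg0)
    (by rwa [natDegree_auxCurve]) hm (by rwa [natDegree_auxCurve]) ?_ fun j hj => ?_
  · have hne : (a * c - C (τ * v ^ g.natDegree)).map φ ≠ 0 :=
      fun h0 => hunit (by rw [h0, eval_zero])
    rw [hzero, Polynomial.map_mul, rootMultiplicity_mul (mul_ne_zero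
      ((Polynomial.map_ne_zero_iff φ.injective).2 ha0) hne), rootMultiplicity_eq_zero hunit,
      add_zero]
  · exact (pow_rootMultiplicity_dvd _ _).trans
      (Polynomial.map_dvd φ (hdvd j (by rwa [natDegree_auxCurve] at hj)))

end AuxiliaryCurve

section TraceCurve

/-- The factor in `tr x` of the leading coefficient of the trace polynomial in `tr (x y)`. -/
noncomputable abbrev leadX (A : Type*) [CommRing A] (L : List (ℤ × ℤ)) : A[X] :=
  chebyshevProd A (L.map Prod.fst)

/-- The factor in `tr y` of the leading coefficient of the trace polynomial in `tr (x y)`. -/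
noncomputable abbrev leadY (A : Type*) [CommRing A] (L : List (ℤ × ℤ)) : A[X] :=
  chebyshevProd A (L.map Prod.snd)

lemma exists_natDegree_le (L : List (ℤ × ℤ)) : ∃ D : ℕ, ∀ (K : Type u) [CommRing K],
    (leadX K L).natDegree ≤ D ∧ (leadY K L).natDegree ≤ D ∧
      ∀ (t : K) (j : ℕ), ((wordTrace (C X) (C (C t)) X L : K[X][Y]).coeff j).natDegree ≤ D := by
  obtain ⟨F, hF⟩ : ∃ F : ℤ[X][X][Y],
    F = wordTrace (C X : ℤ[X][X][Y]) (C (C (X : ℤ[X]))) X L := ⟨_, rfl⟩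
  let w : ℕ := F.support.sup fun j => (F.coeff j).natDegree
  refine ⟨(leadX ℤ L).natDegree + (leadY ℤ L).natDegree + w, fun K _ => ⟨?_, ?_, fun t j => ?_⟩⟩
  · rw [leadX, ← map_chebyshevProd (Int.castRingHom K)]
    exact natDegree_map_le.trans (le_add_right (Nat.le_add_right _ _))
  · rw [leadY, ← map_chebyshevProd (Int.castRingHom K)]
    exact natDegree_map_le.trans (le_add_right (Nat.le_add_left _ _))
  · have hmap : F.map (mapRingHom (eval₂RingHom (Int.castRingHom K) t)) =
        wordTrace (C X) (C (C t)) X L := by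
      rw [hF]
      simpa using map_wordTrace (A := ℤ[X][X][Y]) (B := K[X][Y])
        (mapRingHom (mapRingHom (eval₂RingHom (Int.castRingHom K) t))) (C X) (C (C X)) X L
    rw [← hmap, coeff_map, coe_mapRingHom]
    refine natDegree_map_le.trans (le_add_left ?_)
    by_cases hj : j ∈ F.support
    · exact Finset.le_sup (f := fun j => (F.coeff j).natDegree) hj
    · simp [notMem_support_iff.1 hj]

variable {K : Type u} [Field K] {L : List (ℤ × ℤ)} {s t u v s' t' u' : K}

/-- The curve on which `s` and a rescaling of `u'` lie whenever the trace coordinates `(s, t, u)`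
and `(s', t', u')` give the same trace, where `v` is the same rescaling of `u`. -/
noncomputable def traceCurve (L : List (ℤ × ℤ)) (t v s' t' : K) : K[X][Y] :=
  auxCurve (C (C ((leadX K L).eval s' * (leadY K L).eval t')⁻¹) * wordTrace (C X) (C (C t)) X L)
    (C ((leadX K L).eval s' * (leadY K L).eval t')⁻¹ * wordTrace (C s') (C t') X L) (leadX K L) v

lemma eval_wordTrace : (wordTrace (C s) (C t) X L).eval u = wordTrace s t u L := by
  rw [← coe_evalRingHom, map_wordTrace]
  simp only [coe_evalRingHom, eval_C, eval_X]

lemma evalEval_wordTrace :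
    (wordTrace (C X) (C (C t)) X L : K[X][Y]).evalEval s u = wordTrace s t u L := by
  rw [← coe_evalEvalRingHom, map_wordTrace]
  simp only [coe_evalEvalRingHom, evalEval_C, eval_X, eval_C, evalEval_X]

lemma natDegree_wordTrace {A : Type*} [CommRing A] {s t : A} (hL : L ≠ [])
    (h : (leadX A L).eval s * (leadY A L).eval t ≠ 0) :
    (wordTrace (C s) (C t) X L).natDegree = L.length :=
  natDegree_eq_of_le_of_coeff_ne_zero (natDegree_wordTrace_le s t L)
    ((coeff_wordTrace_length s t hL).trans_ne h)

lemma leadingCoeff_wordTrace {A : Type*} [CommRing A] {s t : A} (hL : L ≠ [])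
    (h : (leadX A L).eval s * (leadY A L).eval t ≠ 0) :
    (wordTrace (C s) (C t) X L).leadingCoeff = (leadX A L).eval s * (leadY A L).eval t := by
  rw [leadingCoeff, natDegree_wordTrace hL h, coeff_wordTrace_length s t hL]

lemma eval_X_chebyshevProd (l : List ℤ) : (chebyshevProd K[X] l).eval X = chebyshevProd K l := by
  rw [← map_chebyshevProd C, eval_map, eval₂_C_X]

lemma eval_C_chebyshevProd (l : List ℤ) :
    (chebyshevProd K[X] l).eval (C t) = C ((chebyshevProd K l).eval t) := by
  rw [← map_chebyshevProd C, eval_map_apply]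

lemma traceCurve_isWeightedMonic_and_isAbsolutelyIntegral {D : ℕ} (hL : L ≠ [])
    (hX : (leadX K L).natDegree ≤ D)
    (hD : ∀ j, ((wordTrace (C X) (C (C t)) X L : K[X][Y]).coeff j).natDegree ≤ D)
    (hcop : HasCoprimeRoot (leadX K L) L.length) (ht : (leadY K L).eval t ≠ 0) (hv : v ≠ 0)
    (h' : (leadX K L).eval s' * (leadY K L).eval t' ≠ 0) :
    (traceCurve L t v s' t').natDegree = L.length ∧
      IsWeightedMonic (3 * D) (traceCurve L t v s' t') ∧
      IsAbsolutelyIntegral (traceCurve L t v s' t') := by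
  have hβ := inv_ne_zero h'
  have hlead : (leadX K[X] L).eval X * (leadY K[X] L).eval (C t) =
      leadX K L * C ((leadY K L).eval t) := by
    rw [eval_X_chebyshevProd, eval_C_chebyshevProd]
  have hlead0 : (leadX K[X] L).eval X * (leadY K[X] L).eval (C t) ≠ 0 :=
    hlead.trans_ne (mul_ne_zero hcop.ne_zero (C_ne_zero.2 ht))
  have hf : (C (C ((leadX K L).eval s' * (leadY K L).eval t')⁻¹) *
      wordTrace (C X) (C (C t)) X L : K[X][Y]).natDegree = L.length := by
    rw [natDegree_C_mul (C_ne_zero.2 hβ), natDegree_wordTrace hL hlead0]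
  have hg : (C ((leadX K L).eval s' * (leadY K L).eval t')⁻¹ *
      wordTrace (C s') (C t') X L).natDegree = L.length := by
    rw [natDegree_C_mul hβ, natDegree_wordTrace hL h']
  have hlc : (C (C ((leadX K L).eval s' * (leadY K L).eval t')⁻¹) *
      wordTrace (C X) (C (C t)) X L : K[X][Y]).leadingCoeff = leadX K L *
        C (((leadX K L).eval s' * (leadY K L).eval t')⁻¹ * (leadY K L).eval t) := by
    rw [leadingCoeff_mul, leadingCoeff_C, leadingCoeff_wordTrace hL hlead0, hlead, C_mul]
    ring
  have hmonic : (C ((leadX K L).eval s' * (leadY K L).eval t')⁻¹ *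
      wordTrace (C s') (C t') X L).Monic := by
    rw [Monic, leadingCoeff_mul, leadingCoeff_C, leadingCoeff_wordTrace hL h', inv_mul_cancel₀ h']
  have hpos := hg.trans_gt (List.length_pos_iff.2 hL)
  refine ⟨natDegree_auxCurve.trans hg,
    auxCurve_isWeightedMonic hmonic hpos (hf.trans hg.symm) hX fun j => ?_,
    auxCurve_isAbsolutelyIntegral hmonic hpos (hf.trans hg.symm) hlc (mul_ne_zero hβ ht) hv
      (hg.symm ▸ hcop)⟩
  rw [coeff_C_mul]
  exact (natDegree_C_mul_le _ _).trans (hD j)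

lemma evalEval_traceCurve (hL : L ≠ []) (hX : leadX K L ≠ 0) (ht : (leadY K L).eval t ≠ 0)
    (h' : (leadX K L).eval s' * (leadY K L).eval t' ≠ 0)
    (h : wordTrace s t u L = wordTrace s' t' u' L) :
    (traceCurve L t (u * (leadX K L).eval s ^ 2) s' t').evalEval s
      (u' * (leadX K L).eval s ^ 2) = 0 := by
  have hlead0 : (leadX K[X] L).eval X * (leadY K[X] L).eval (C t) ≠ 0 := by
    rw [eval_X_chebyshevProd, eval_C_chebyshevProd]
    exact mul_ne_zero hX (C_ne_zero.2 ht)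
  rw [traceCurve, evalEval_auxCurve, eval_mul, evalEval_mul, eval_C, evalEval_C, eval_C,
    eval_wordTrace, evalEval_wordTrace, h, sub_self, mul_zero]
  rw [natDegree_C_mul (C_ne_zero.2 (inv_ne_zero h')), natDegree_C_mul (inv_ne_zero h'),
    natDegree_wordTrace hL hlead0, natDegree_wordTrace hL h']

end TraceCurve

section Collisions

variable {α β : Type*} [Fintype α] [DecidableEq β]

/-- The pairs of points with the same image under `f`. Their number is the second moment of the
fibre sizes of `f`. -/
def collisions (f : α → β) : Finset (α × α) := {z | f z.1 = f z.2}

lemma mem_collisions {f : α → β} {z : α × α} : z ∈ collisions f ↔ f z.1 = f z.2 := by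
  simp [collisions]

variable [DecidableEq α]

lemma card_collisions_le {f : α → β} {B : Finset α} {m : ℕ}
    (hm : ∀ b, (Finset.univ.filter fun a => a ∉ B ∧ f a = b).card ≤ m) :
    (collisions f).card ≤
      ((collisions f).filter fun z => z.1 ∉ B ∧ z.2 ∉ B).card + 2 * m * B.card + B.card ^ 2 := by
  have hleft : ((collisions f).filter fun z => z.1 ∈ B ∧ z.2 ∉ B).card ≤ m * B.card := by
    refine Finset.card_le_mul_card_image_of_maps_to (f := Prod.fst) (by simp +contextual) m
      fun a _ => (Finset.card_le_card_of_injOn Prod.snd (fun z hz => ?_) ?_).trans (hm (f a))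
    · simp only [Finset.coe_filter, Finset.mem_filter, Set.mem_ofPred_eq, mem_collisions] at hz
      simp [hz.1.2.2, ← hz.1.1, hz.2]
    · rintro ⟨a₁, b₁⟩ h₁ ⟨a₂, b₂⟩ h₂ h
      simp_all
  have hright : ((collisions f).filter fun z => z.1 ∉ B ∧ z.2 ∈ B).card ≤ m * B.card := by
    refine Finset.card_le_mul_card_image_of_maps_to (f := Prod.snd) (by simp +contextual) m
      fun a _ => (Finset.card_le_card_of_injOn Prod.fst (fun z hz => ?_) ?_).trans (hm (f a))
    · simp only [Finset.coe_filter, Finset.mem_filter, Set.mem_ofPred_eq, mem_collisions] at hz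
      simp [hz.1.2.1, hz.1.1, hz.2]
    · rintro ⟨a₁, b₁⟩ h₁ ⟨a₂, b₂⟩ h₂ h
      simp_all
  have hcover : collisions f ⊆ (((collisions f).filter fun z => z.1 ∉ B ∧ z.2 ∉ B) ∪
      ((collisions f).filter fun z => z.1 ∈ B ∧ z.2 ∉ B)) ∪
      (((collisions f).filter fun z => z.1 ∉ B ∧ z.2 ∈ B) ∪ B ×ˢ B) := by
    intro z hz
    simp only [Finset.mem_union, Finset.mem_filter, Finset.mem_product, hz, true_and]
    tauto
  have hcard := (Finset.card_le_card hcover).trans ((Finset.card_union_le _ _).trans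
    (add_le_add (Finset.card_union_le _ _) (Finset.card_union_le _ _)))
  rw [Finset.card_product, ← sq] at hcard
  linarith

end Collisions

section TraceCollisions

variable {K : Type u} [Field K] [Fintype K] [DecidableEq K] {L : List (ℤ × ℤ)} {D : ℕ}

lemma card_filter_eval_eq_le {f : K[X]} {c : K} (h : f ≠ C c) :
    (Finset.univ.filter fun x => f.eval x = c).card ≤ f.natDegree := by
  rw [← natDegree_sub_C (a := c)]
  refine card_le_degree_of_subset_roots fun x hx => ?_
  simpa [sub_ne_zero.2 h, sub_eq_zero] using hx

/-- The trace of the word `wordOfList L` as a function on the affine space of the coordinates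
`(tr x, tr y, tr xy)`. -/
noncomputable def traceFun (L : List (ℤ × ℤ)) (P : K × K × K) : K := wordTrace P.1 P.2.1 P.2.2 L

variable (K L) in
/-- The points `(s, t, u)` at which `u` vanishes or the trace polynomial drops degree in `u`. -/
noncomputable def degeneratePoints : Finset (K × K × K) :=
  {P | (leadX K L).eval P.1 = 0 ∨ (leadY K L).eval P.2.1 = 0 ∨ P.2.2 = 0}

lemma notMem_degeneratePoints {P : K × K × K} : P ∉ degeneratePoints K L ↔
    (leadX K L).eval P.1 ≠ 0 ∧ (leadY K L).eval P.2.1 ≠ 0 ∧ P.2.2 ≠ 0 := by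
  simp [degeneratePoints]

lemma card_degeneratePoints_le (hX : leadX K L ≠ 0) (hY : leadY K L ≠ 0)
    (hXD : (leadX K L).natDegree ≤ D) (hYD : (leadY K L).natDegree ≤ D) :
    (degeneratePoints K L).card ≤ (2 * D + 1) * Fintype.card K ^ 2 := by
  let Z (f : K[X]) : Finset K := {x | f.eval x = 0}
  have hZ {f : K[X]} (hf : f ≠ 0) : (Z f).card ≤ f.natDegree :=
    card_filter_eval_eq_le (by rwa [C_0])
  have hcover : degeneratePoints K L ⊆ Z (leadX K L) ×ˢ Finset.univ ∪
      (Finset.univ ×ˢ Z (leadY K L) ×ˢ Finset.univ ∪ Finset.univ ×ˢ Finset.univ ×ˢ {0}) := by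
    rintro ⟨s, t, u⟩
    simp [degeneratePoints, Z, eq_comm (a := (0 : K)) (b := u)]
  refine (Finset.card_le_card hcover).trans ((Finset.card_union_le _ _).trans
    (add_le_add le_rfl (Finset.card_union_le _ _)) |>.trans ?_)
  simp only [Finset.card_product, Finset.card_univ, Fintype.card_prod, Finset.card_singleton]
  calc _ ≤ D * (Fintype.card K * Fintype.card K) + (Fintype.card K * (D * Fintype.card K) +
        Fintype.card K * (Fintype.card K * 1)) := by
        gcongr
        exacts [(hZ hX).trans hXD, (hZ hY).trans hYD]
    _ = (2 * D + 1) * Fintype.card K ^ 2 := by ring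

lemma card_filter_wordTrace_eq_le {s t : K} (hL : L ≠ []) (c : K)
    (h : (leadX K L).eval s * (leadY K L).eval t ≠ 0) :
    (Finset.univ.filter fun u => wordTrace s t u L = c).card ≤ L.length := by
  simp only [← eval_wordTrace (L := L)]
  refine (card_filter_eval_eq_le fun hc => ?_).trans (natDegree_wordTrace_le s t L)
  have hdeg := natDegree_wordTrace hL h
  rw [hc, natDegree_C] at hdeg
  exact hL (List.length_eq_zero_iff.1 hdeg.symm)

lemma card_nondegenerate_traceFun_eq_le (hL : L ≠ []) (c : K) :
    (Finset.univ.filter fun P => P ∉ degeneratePoints K L ∧ traceFun L P = c).card ≤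
      L.length * Fintype.card K ^ 2 := by
  rw [sq, ← Fintype.card_prod, ← Finset.card_univ]
  refine Finset.card_le_mul_card_image_of_maps_to (f := fun P => (P.1, P.2.1)) (by simp) _ ?_
  rintro ⟨s, t⟩ -
  by_cases hst : (leadX K L).eval s * (leadY K L).eval t = 0
  · rw [Finset.card_eq_zero.2]
    · exact Nat.zero_le _
    refine Finset.filter_eq_empty_iff.2 fun P hP hPst => ?_
    simp only [Finset.mem_filter, notMem_degeneratePoints, Prod.mk.injEq] at hP hPst
    rw [← hPst.1, ← hPst.2] at hst
    exact mul_ne_zero hP.2.1.1 hP.2.1.2.1 hst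
  · refine le_trans (Finset.card_le_card_of_injOn (fun P => P.2.2) ?_ ?_)
      (card_filter_wordTrace_eq_le hL c hst)
    · rintro ⟨s₁, t₁, u₁⟩ h
      simp only [Finset.mem_coe, Finset.mem_filter, Finset.mem_univ, true_and,
        Prod.mk.injEq] at h ⊢
      rw [← h.2.1, ← h.2.2]
      exact h.1.2
    · rintro ⟨s₁, t₁, u₁⟩ h₁ ⟨s₂, t₂, u₂⟩ h₂ h
      simp_all

lemma card_nondegenerate_collisions_le (hL : L ≠ []) (hX : leadX K L ≠ 0) {M : ℕ}
    (hM : ∀ t v s' t' : K, (leadY K L).eval t ≠ 0 → v ≠ 0 →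
      (leadX K L).eval s' * (leadY K L).eval t' ≠ 0 →
      Nat.card {a : K × K // (traceCurve L t v s' t').evalEval a.1 a.2 = 0} ≤ M) :
    ((collisions (traceFun (K := K) L)).filter fun z =>
      z.1 ∉ degeneratePoints K L ∧ z.2 ∉ degeneratePoints K L).card ≤ M * Fintype.card K ^ 4 := by
  have hcard : Fintype.card K ^ 4 = (Finset.univ : Finset (K × K × K × K)).card := by
    simp only [Finset.card_univ, Fintype.card_prod]; ring
  rw [hcard]
  refine Finset.card_le_mul_card_image_of_maps_to
    (f := fun z => (z.1.2.1, z.1.2.2 * (leadX K L).eval z.1.1 ^ 2, z.2.1, z.2.2.1)) (by simp) M ?_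
  rintro ⟨t, v, s', t'⟩ -
  rcases Finset.eq_empty_or_nonempty (((collisions (traceFun L)).filter fun z =>
      z.1 ∉ degeneratePoints K L ∧ z.2 ∉ degeneratePoints K L).filter fun z =>
        (z.1.2.1, z.1.2.2 * (leadX K L).eval z.1.1 ^ 2, z.2.1, z.2.2.1) = (t, v, s', t'))
    with hempty | ⟨z, hz⟩
  · rw [hempty, Finset.card_empty]
    exact Nat.zero_le _
  simp only [Finset.mem_filter, notMem_degeneratePoints, Prod.mk.injEq] at hz
  obtain ⟨⟨-, ⟨hs, ht, hu⟩, hs', ht', -⟩, rfl, rfl, rfl, rfl⟩ := hz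
  refine le_trans ?_ (hM _ _ _ _ ht (mul_ne_zero hu (pow_ne_zero 2 hs)) (mul_ne_zero hs' ht'))
  rw [Nat.card_eq_fintype_card, Fintype.card_subtype]
  refine Finset.card_le_card_of_injOn
    (fun z => (z.1.1, z.2.2.2 * (leadX K L).eval z.1.1 ^ 2)) ?_ ?_
  · rintro ⟨⟨s, t, u⟩, s₁, t₁, u₁⟩ h
    simp only [Finset.coe_filter, Finset.mem_filter, Set.mem_ofPred_eq, Prod.mk.injEq,
      mem_collisions, traceFun, Finset.mem_univ, true_and] at h ⊢
    obtain ⟨⟨heq, -⟩, rfl, hv, rfl, rfl⟩ := h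
    rw [← hv]
    exact evalEval_traceCurve hL hX ht (mul_ne_zero hs' ht') heq
  · rintro ⟨⟨s, t, u⟩, s₁, t₁, u₁⟩ h ⟨⟨s₂, t₂, u₂⟩, s₃, t₃, u₃⟩ h' hss
    simp only [Finset.coe_filter, Finset.mem_filter, Set.mem_ofPred_eq, Prod.mk.injEq,
      notMem_degeneratePoints] at h h' hss
    obtain ⟨⟨-, ⟨hs, -⟩, -⟩, rfl, hv, rfl, rfl⟩ := h
    obtain ⟨-, rfl, hv', rfl, rfl⟩ := h'
    obtain ⟨rfl, huu⟩ := hss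
    have hs2 := pow_ne_zero 2 hs
    rw [mul_right_cancel₀ hs2 (hv.trans hv'.symm), mul_right_cancel₀ hs2 huu]

theorem exists_forall_card_collisions_le (p : ℕ) [hp : Fact p.Prime] (hL : L ≠ []) {ε : ℝ}
    (hε : 0 < ε) : ∃ n₀, ∀ n ≥ n₀, ∀ (K : Type u) [Field K] [Fintype K] [DecidableEq K] [CharP K p],
      Fintype.card K = p ^ n → leadY K L ≠ 0 → HasCoprimeRoot (leadX K L) L.length →
        ((collisions (traceFun (K := K) L)).card : ℝ) ≤ (1 + ε) * (p ^ n : ℝ) ^ 5 := by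
  obtain ⟨D, hD⟩ := exists_natDegree_le.{u} L
  obtain ⟨n₀, hcurve⟩ := exists_forall_card_points_le.{u} p (List.length_pos_iff.2 hL) (3 * D)
    (show 0 < ε / 4 by positivity)
  let E : ℕ := 2 * L.length * (2 * D + 1) + (2 * D + 1) ^ 2
  obtain ⟨n₁, hn₁⟩ := exists_nat_ge ((E : ℝ) / (ε / 2))
  refine ⟨max n₀ n₁, fun n hn K _ _ _ _ hK hY hcop => ?_⟩
  obtain ⟨hXD, hYD, hDj⟩ := hD K
  have hq : (n₁ : ℝ) ≤ (p : ℝ) ^ n := mod_cast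
    ((le_max_right _ _).trans hn).trans (Nat.lt_pow_self hp.out.one_lt).le
  have hgood := card_nondegenerate_collisions_le (M := ⌊(1 + ε / 2) * (p : ℝ) ^ n⌋₊) hL
    hcop.ne_zero fun t v s' t' ht hv h' => by
      obtain ⟨hr, hw, hi⟩ := traceCurve_isWeightedMonic_and_isAbsolutelyIntegral hL hXD (hDj t)
        hcop ht hv h'
      refine Nat.le_floor ((hcurve n ((le_max_left _ _).trans hn) K hK _ hw hr hi).trans_eq ?_)
      ring
  have hall := card_collisions_le (card_nondegenerate_traceFun_eq_le (K := K) hL)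
  have hdeg := card_degeneratePoints_le hcop.ne_zero hY hXD hYD
  rw [hK] at hgood hall hdeg
  have hcount : (collisions (traceFun (K := K) L)).card ≤
      ⌊(1 + ε / 2) * (p : ℝ) ^ n⌋₊ * (p ^ n) ^ 4 + E * (p ^ n) ^ 4 := by
    refine hall.trans ?_
    rw [add_assoc]
    refine add_le_add hgood ?_
    calc _ ≤ 2 * (L.length * (p ^ n) ^ 2) * ((2 * D + 1) * (p ^ n) ^ 2) +
          ((2 * D + 1) * (p ^ n) ^ 2) ^ 2 := by gcongr
      _ = E * (p ^ n) ^ 4 := by ring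
  have hE : (E : ℝ) ≤ ε / 2 * (p : ℝ) ^ n := by
    rw [mul_comm]
    exact (div_le_iff₀ (by positivity)).1 (hn₁.trans hq)
  calc ((collisions (traceFun (K := K) L)).card : ℝ)
      ≤ ⌊(1 + ε / 2) * (p : ℝ) ^ n⌋₊ * ((p : ℝ) ^ n) ^ 4 + E * ((p : ℝ) ^ n) ^ 4 := mod_cast hcount
    _ ≤ (1 + ε / 2) * (p : ℝ) ^ n * ((p : ℝ) ^ n) ^ 4 +
        ε / 2 * (p : ℝ) ^ n * ((p : ℝ) ^ n) ^ 4 := by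
      gcongr
      exact Nat.floor_le (by positivity)
    _ = (1 + ε) * ((p : ℝ) ^ n) ^ 5 := by ring

end TraceCollisions

end PlaneCurves

open scoped MatrixGroups

section FiberDeviation

variable {α β γ δ : Type*}

lemma abs_sum_sub_mul_le {s : Finset α} (φ : α → ℝ) (m : ℝ) {n : ℝ} (hn : 0 ≤ n) :
    |∑ a ∈ s, φ a - n * m| ≤ ∑ a ∈ s, |φ a - n| + n * |s.card - m| := by
  have h : ∑ a ∈ s, φ a - n * m = ∑ a ∈ s, (φ a - n) + n * (s.card - m) := by
    rw [Finset.sum_sub_distrib, Finset.sum_const, nsmul_eq_mul]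
    ring
  rw [h]
  refine (abs_add_le _ _).trans (add_le_add (Finset.abs_sum_le_sum_abs _ _) ?_)
  rw [abs_mul, abs_of_nonneg hn]

variable [Fintype α] [Fintype β] [Fintype γ] [Fintype δ] [DecidableEq β] [DecidableEq δ]

/-- The `ℓ¹`-distance between the fibre sizes of `f` and the constant `m`. -/
noncomputable def fiberDeviation (f : α → β) (m : ℝ) : ℝ :=
  ∑ b, |((Finset.univ.filter fun a => f a = b).card : ℝ) - m|

lemma sum_card_fiber (f : α → β) :
    ∑ b, ((Finset.univ.filter fun a => f a = b).card : ℝ) = Fintype.card α := by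
  rw [← Finset.card_univ, Finset.card_eq_sum_card_fiberwise (t := Finset.univ) (f := f) (by simp),
    Nat.cast_sum]

lemma card_collisions_eq_sum (f : α → β) :
    ((collisions f).card : ℝ) = ∑ b, ((Finset.univ.filter fun a => f a = b).card : ℝ) ^ 2 := by
  rw [Finset.card_eq_sum_card_fiberwise (t := Finset.univ) (f := fun z => f z.1) (by simp),
    Nat.cast_sum]
  refine Finset.sum_congr rfl fun b _ => ?_
  rw [sq, ← Nat.cast_mul, ← Finset.card_product]
  congr 2
  ext ⟨x, y⟩
  simp only [Finset.mem_filter, mem_collisions, Finset.mem_product, Finset.mem_univ, true_and]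
  exact ⟨fun h => ⟨h.2, h.1.symm.trans h.2⟩, fun h => ⟨h.1.trans h.2.symm, h.1⟩⟩

lemma fiberDeviation_le_sqrt (f : α → β) {m V : ℝ}
    (hV : (collisions f).card - 2 * m * Fintype.card α + m ^ 2 * Fintype.card β ≤ V) :
    fiberDeviation f m ≤ √(Fintype.card β * V) := by
  refine Real.le_sqrt_of_sq_le (sq_sum_le_card_mul_sum_sq.trans ?_)
  rw [Finset.card_univ]
  refine mul_le_mul_of_nonneg_left (le_trans (le_of_eq ?_) hV) (Nat.cast_nonneg _)
  simp only [sq_abs, sub_sq, Finset.sum_add_distrib, Finset.sum_sub_distrib,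
    card_collisions_eq_sum, ← sum_card_fiber f, Finset.sum_const, Finset.card_univ, nsmul_eq_mul,
    Finset.mul_sum]
  rw [mul_comm (m ^ 2)]
  congr 2
  exact Finset.sum_congr rfl fun b _ => by ring

lemma fiberDeviation_le_card_add (f : α → β) {m : ℝ} (hm : 0 ≤ m) :
    fiberDeviation f m ≤ Fintype.card α + m * Fintype.card β := by
  refine (Finset.sum_le_sum fun b _ => abs_sub _ _).trans_eq ?_
  simp only [Nat.abs_cast, abs_of_nonneg hm, Finset.sum_add_distrib, sum_card_fiber,
    Finset.sum_const, Finset.card_univ, nsmul_eq_mul, mul_comm m]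

lemma fiberDeviation_comp_le [DecidableEq γ] (f : α → β) (g : β → γ) {m : ℝ} (hm : 0 ≤ m) (n : ℝ) :
    fiberDeviation (g ∘ f) (m * n) ≤ fiberDeviation f m + m * fiberDeviation g n := by
  have hfiber (c : γ) : ((Finset.univ.filter fun a => (g ∘ f) a = c).card : ℝ) =
      ∑ b with g b = c, ((Finset.univ.filter fun a => f a = b).card : ℝ) := by
    rw [Finset.card_eq_sum_card_fiberwise (f := f) (t := Finset.univ.filter fun b => g b = c)
      (by intro a; simp), Nat.cast_sum]
    refine Finset.sum_congr rfl fun b hb => ?_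
    rw [Finset.filter_filter]
    congr 2
    ext a
    simp only [Finset.mem_filter, Finset.mem_univ, true_and, Function.comp_apply] at hb ⊢
    exact ⟨And.right, fun h => ⟨h ▸ hb, h⟩⟩
  calc fiberDeviation (g ∘ f) (m * n)
      ≤ ∑ c, (∑ b with g b = c, |((Finset.univ.filter fun a => f a = b).card : ℝ) - m| +
        m * |((Finset.univ.filter fun b => g b = c).card : ℝ) - n|) := by
        refine Finset.sum_le_sum fun c _ => ?_
        rw [hfiber]
        exact abs_sum_sub_mul_le _ n hm
    _ = fiberDeviation f m + m * fiberDeviation g n := by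
        rw [Finset.sum_add_distrib, Finset.sum_fiberwise, ← Finset.mul_sum]
        rfl

lemma fiberDeviation_prodMk_le (f : α → β) (g : α → γ → δ) (m : ℝ) {n : ℝ} (hn : 0 ≤ n) :
    fiberDeviation (fun z : α × γ => (f z.1, g z.1 z.2)) (n * m) ≤
      ∑ a, fiberDeviation (g a) n + n * (Fintype.card δ * fiberDeviation f m) := by
  classical
  have hfiber (b : β) (d : δ) :
      ((Finset.univ.filter fun z : α × γ => (f z.1, g z.1 z.2) = (b, d)).card : ℝ) =
        ∑ a with f a = b, ((Finset.univ.filter fun c => g a c = d).card : ℝ) := by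
    rw [Finset.card_eq_sum_card_fiberwise (f := Prod.fst) (t := Finset.univ.filter fun a => f a = b)
      (by intro z; simp +contextual), Nat.cast_sum]
    refine Finset.sum_congr rfl fun a ha => ?_
    congr 1
    simp only [Finset.mem_filter, Finset.mem_univ, true_and] at ha
    refine Finset.card_nbij' Prod.snd (Prod.mk a) ?_ (fun c hc => by simp_all) ?_ (fun _ _ => rfl)
    all_goals
      rintro ⟨a', c⟩ h
      simp only [Finset.coe_filter, Finset.mem_filter_univ, Prod.mk.injEq, Set.mem_ofPred_eq] at h
      obtain ⟨⟨-, rfl⟩, rfl⟩ := h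
      simp
  calc fiberDeviation (fun z : α × γ => (f z.1, g z.1 z.2)) (n * m)
      ≤ ∑ b, ∑ d, (∑ a with f a = b, |((Finset.univ.filter fun c => g a c = d).card : ℝ) - n| +
        n * |((Finset.univ.filter fun a => f a = b).card : ℝ) - m|) := by
        rw [fiberDeviation, Fintype.sum_prod_type]
        refine Finset.sum_le_sum fun b _ => Finset.sum_le_sum fun d _ => ?_
        rw [hfiber]
        exact abs_sum_sub_mul_le _ m hn
    _ = ∑ a, fiberDeviation (g a) n + n * (Fintype.card δ * fiberDeviation f m) := by
        simp only [Finset.sum_add_distrib, Finset.sum_const, Finset.card_univ, nsmul_eq_mul,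
          ← Finset.mul_sum, fiberDeviation]
        rw [← Finset.sum_fiberwise Finset.univ f]
        congr 1
        · exact Finset.sum_congr rfl fun b _ => Finset.sum_comm
        · ring

end FiberDeviation

section SpecialLinearCounting

variable {K : Type*} [Field K]

lemma sl2_ext {x y : SL(2, K)} (h₀₀ : x 0 0 = y 0 0) (h₀₁ : x 0 1 = y 0 1) (h₁₀ : x 1 0 = y 1 0)
    (h₁₁ : x 1 1 = y 1 1) : x = y := by
  ext i j
  fin_cases i <;> fin_cases j <;> assumption

lemma sl2_det (x : SL(2, K)) : x 0 0 * x 1 1 - x 0 1 * x 1 0 = 1 :=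
  (det_fin_two x.1).symm.trans x.2

lemma trace_mul_fin_two (A B : Matrix (Fin 2) (Fin 2) K) :
    (A * B).trace = A 0 0 * B 0 0 + A 0 1 * B 1 0 + (A 1 0 * B 0 1 + A 1 1 * B 1 1) := by
  simp [trace_fin_two, mul_apply, Fin.sum_univ_two]

lemma trace_adjugate_mul_fin_two (A B : Matrix (Fin 2) (Fin 2) K) :
    (A.adjugate * B).trace = (A + B).det - A.det - B.det := by
  rw [trace_mul_fin_two, adjugate_fin_two, det_fin_two, det_fin_two, det_fin_two]
  simp
  ring

lemma exists_mul_mul_apply_one_one_ne_zero {M : Matrix (Fin 2) (Fin 2) K} (hM : M ≠ 0) :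
    ∃ a b : SL(2, K), (a.1 * M * b.1) 1 1 ≠ 0 := by
  have hw : (!![0, 1; -1, 0] : Matrix (Fin 2) (Fin 2) K).det = 1 := by simp
  obtain ⟨i, j, hij⟩ : ∃ i j, M i j ≠ 0 := by
    by_contra! h
    exact hM (Matrix.ext h)
  refine ⟨if i = 1 then 1 else ⟨_, hw⟩, if j = 1 then 1 else ⟨_, hw⟩, ?_⟩
  fin_cases i <;> fin_cases j <;> simpa [mul_apply, Fin.sum_univ_two, vecMul, dotProduct] using hij

variable [Fintype K] [DecidableEq K]

lemma card_filter_trace_mul_mul_eq (M : Matrix (Fin 2) (Fin 2) K) (a b : SL(2, K)) (k : K) :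
    (Finset.univ.filter fun x : SL(2, K) => (a.1 * M * b.1 * x.1).trace = k).card =
      (Finset.univ.filter fun x : SL(2, K) => (M * x.1).trace = k).card := by
  refine Finset.card_equiv ((Equiv.mulLeft b).trans (Equiv.mulRight a)) fun x => ?_
  simp only [Finset.mem_filter_univ, Equiv.trans_apply, Equiv.coe_mulLeft, Equiv.coe_mulRight,
    Matrix.SpecialLinearGroup.coe_mul]
  rw [Matrix.mul_assoc, Matrix.mul_assoc, trace_mul_comm, Matrix.mul_assoc, Matrix.mul_assoc]

lemma card_filter_trace_mul_eq_and_ne_le {M : Matrix (Fin 2) (Fin 2) K} (hM : M 1 1 ≠ 0) (k : K) :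
    (Finset.univ.filter fun x : SL(2, K) =>
      (M * x.1).trace = k ∧ M 0 1 * x 0 0 + M 1 1 * x 0 1 ≠ 0).card ≤ Fintype.card K ^ 2 := by
  rw [sq, ← Fintype.card_prod, ← Finset.card_univ]
  refine Finset.card_le_card_of_injOn (fun x => (x 0 0, x 0 1)) (by simp) fun x hx y hy hxy => ?_
  simp only [Finset.coe_filter, Finset.mem_univ, true_and, Set.mem_ofPred_eq,
    trace_mul_fin_two] at hx hy
  obtain ⟨h₀₀, h₀₁⟩ := Prod.mk.inj hxy
  have hdx := sl2_det x
  have hdy := sl2_det y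
  rw [← h₀₀, ← h₀₁] at hdy hy
  have h₁₀ : x 1 0 = y 1 0 := mul_left_cancel₀ hx.2 <| by
    linear_combination x 0 0 * (hx.1 - hy.1) - M 1 1 * (hdx - hdy)
  refine sl2_ext h₀₀ h₀₁ h₁₀ (mul_left_cancel₀ hM ?_)
  linear_combination hx.1 - hy.1 - M 0 1 * h₁₀

lemma card_filter_trace_mul_eq_and_eq_le {M : Matrix (Fin 2) (Fin 2) K} (hM : M 1 1 ≠ 0) (k : K) :
    (Finset.univ.filter fun x : SL(2, K) =>
      (M * x.1).trace = k ∧ M 0 1 * x 0 0 + M 1 1 * x 0 1 = 0).card ≤ 2 * Fintype.card K := by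
  let f : K[X] := C (M 1 0 * M 0 1 - M 0 0 * M 1 1) * X ^ 2 + C (k * M 1 1) * X + C (-M 1 1 ^ 2)
  have hf : f ≠ C 0 := fun h => by
    have h0 := congrArg (eval 0) h
    simp [f, hM] at h0
  calc _ ≤ ((Finset.univ.filter fun a => f.eval a = 0) ×ˢ (Finset.univ : Finset K)).card := ?_
    _ ≤ 2 * Fintype.card K := by
      rw [Finset.card_product, Finset.card_univ]
      gcongr
      exact (card_filter_eval_eq_le hf).trans natDegree_quadratic_le
  refine Finset.card_le_card_of_injOn (fun x => (x 0 0, x 1 0)) (fun x hx => ?_)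
    fun x hx y hy hxy => ?_
  · simp only [Finset.coe_filter, Finset.mem_univ, true_and, Set.mem_ofPred_eq,
      trace_mul_fin_two] at hx
    simp only [f, Finset.coe_product, Set.mem_prod, Finset.coe_filter, Finset.mem_univ, true_and,
      Set.mem_ofPred_eq, Finset.coe_univ, Set.mem_univ, and_true, eval_add, eval_mul, eval_C,
      eval_pow, eval_X]
    linear_combination M 1 1 ^ 2 * sl2_det x - M 1 1 * x 0 0 * hx.1 +
      (M 1 0 * x 0 0 + M 1 1 * x 1 0) * hx.2
  · simp only [Finset.coe_filter, Finset.mem_univ, true_and, Set.mem_ofPred_eq,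
      trace_mul_fin_two] at hx hy
    obtain ⟨h₀₀, h₁₀⟩ := Prod.mk.inj hxy
    have h₀₁ : x 0 1 = y 0 1 := mul_left_cancel₀ hM <| by
      linear_combination hx.2 - hy.2 - M 0 1 * h₀₀
    refine sl2_ext h₀₀ h₀₁ h₁₀ (mul_left_cancel₀ hM ?_)
    linear_combination hx.1 - hy.1 - M 0 0 * h₀₀ - M 0 1 * h₁₀ - M 1 0 * h₀₁

lemma card_filter_trace_mul_eq_le_of_apply_ne_zero {M : Matrix (Fin 2) (Fin 2) K}
    (hM : M 1 1 ≠ 0) (k : K) :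
    (Finset.univ.filter fun x : SL(2, K) => (M * x.1).trace = k).card ≤
      Fintype.card K ^ 2 + 2 * Fintype.card K := by
  rw [← Finset.card_filter_add_card_filter_not fun x => M 0 1 * x 0 0 + M 1 1 * x 0 1 ≠ 0,
    Finset.filter_filter, Finset.filter_filter]
  simp only [not_not]
  exact add_le_add (card_filter_trace_mul_eq_and_ne_le hM k)
    (card_filter_trace_mul_eq_and_eq_le hM k)

lemma card_filter_trace_mul_eq_le {M : Matrix (Fin 2) (Fin 2) K} (hM : M ≠ 0) (k : K) :
    (Finset.univ.filter fun x : SL(2, K) => (M * x.1).trace = k).card ≤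
      Fintype.card K ^ 2 + 2 * Fintype.card K := by
  obtain ⟨a, b, hab⟩ := exists_mul_mul_apply_one_one_ne_zero hM
  rw [← card_filter_trace_mul_mul_eq M a b]
  exact card_filter_trace_mul_eq_le_of_apply_ne_zero hab k

lemma card_filter_trace_eq_le (s : K) :
    (Finset.univ.filter fun x : SL(2, K) => x.1.trace = s).card ≤
      Fintype.card K ^ 2 + 2 * Fintype.card K := by
  simpa using card_filter_trace_mul_eq_le (one_ne_zero (α := Matrix (Fin 2) (Fin 2) K)) s

lemma sq_card_le_card_filter_trace_eq_add (s : K) :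
    Fintype.card K ^ 2 ≤
      (Finset.univ.filter fun x : SL(2, K) => x.1.trace = s).card + Fintype.card K := by
  have hcard : (({0}ᶜ : Finset K) ×ˢ (Finset.univ : Finset K)).card + Fintype.card K =
      Fintype.card K ^ 2 := by
    rw [Finset.card_product, Finset.card_compl, Finset.card_singleton, Finset.card_univ,
      ← Nat.succ_mul, Nat.succ_eq_add_one, Nat.sub_add_cancel Fintype.card_pos, sq]
  have hdet {z : K × K} (hz : z.1 ≠ 0) :
      (!![s - z.2, z.1; ((s - z.2) * z.2 - 1) / z.1, z.2] : Matrix (Fin 2) (Fin 2) K).det = 1 := by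
    rw [det_fin_two_of, mul_div_cancel₀ _ hz, sub_sub_cancel]
  rw [← hcard]
  gcongr
  refine Finset.card_le_card_of_surjOn (fun x : SL(2, K) => (x 0 1, x 1 1)) fun z hz => ?_
  have hz0 : z.1 ≠ 0 := by simpa using hz
  exact ⟨⟨_, hdet hz0⟩, Finset.mem_coe.2 (Finset.mem_filter_univ _ |>.2 (by simp [trace_fin_two])),
    by simp⟩

lemma abs_card_filter_trace_eq_sub_le (s : K) :
    |((Finset.univ.filter fun x : SL(2, K) => x.1.trace = s).card : ℝ) - (Fintype.card K : ℝ) ^ 2| ≤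
      2 * Fintype.card K := by
  have hle : (_ : ℝ) ≤ _ := Nat.cast_le.2 (card_filter_trace_eq_le s)
  have hge : (_ : ℝ) ≤ _ := Nat.cast_le.2 (sq_card_le_card_filter_trace_eq_add s)
  push_cast at hle hge
  rw [abs_le]
  constructor <;> linarith

lemma fiberDeviation_trace_le :
    fiberDeviation (fun x : SL(2, K) => x.1.trace) ((Fintype.card K : ℝ) ^ 2) ≤
      2 * (Fintype.card K : ℝ) ^ 2 := by
  refine (Finset.sum_le_card_nsmul _ _ _ fun s _ => abs_card_filter_trace_eq_sub_le s).trans_eq ?_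
  rw [Finset.card_univ, nsmul_eq_mul]
  ring

lemma abs_card_sl2_sub_le :
    |(Fintype.card SL(2, K) : ℝ) - (Fintype.card K : ℝ) ^ 3| ≤ 2 * (Fintype.card K : ℝ) ^ 2 := by
  have hcard : (Fintype.card SL(2, K) : ℝ) - (Fintype.card K : ℝ) ^ 3 = ∑ s : K,
      (((Finset.univ.filter fun x : SL(2, K) => x.1.trace = s).card : ℝ) -
        (Fintype.card K : ℝ) ^ 2) := by
    rw [Finset.sum_sub_distrib, sum_card_fiber, Finset.sum_const, Finset.card_univ, nsmul_eq_mul]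
    ring
  rw [hcard]
  exact (Finset.abs_sum_le_sum_abs _ _).trans fiberDeviation_trace_le

end SpecialLinearCounting

section TraceTriples

variable {K : Type*} [Field K] [Fintype K] [DecidableEq K]

lemma card_sl2_le : (Fintype.card SL(2, K) : ℝ) ≤ 3 * (Fintype.card K : ℝ) ^ 3 := by
  have hq : (1 : ℝ) ≤ Fintype.card K := mod_cast Fintype.card_pos
  calc (Fintype.card SL(2, K) : ℝ) ≤ (Fintype.card K : ℝ) ^ 3 + 2 * (Fintype.card K : ℝ) ^ 2 := by
        linarith [(abs_le.1 (abs_card_sl2_sub_le (K := K))).2]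
    _ ≤ (Fintype.card K : ℝ) ^ 3 + 2 * (Fintype.card K : ℝ) ^ 3 := by
      gcongr
      norm_num
    _ = _ := by ring

lemma card_filter_trace_eq_zero_and_le {A : Matrix (Fin 2) (Fin 2) K} (hA : A 1 0 ≠ 0) :
    (Finset.univ.filter fun M : Matrix (Fin 2) (Fin 2) K =>
      M.trace = 0 ∧ (A * M).trace = 0).card ≤ Fintype.card K ^ 2 := by
  rw [sq, ← Fintype.card_prod, ← Finset.card_univ]
  refine Finset.card_le_card_of_injOn (fun M => (M 1 0, M 1 1)) (by simp) fun M hM N hN h => ?_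
  simp only [Finset.coe_filter, Finset.mem_univ, true_and, Set.mem_ofPred_eq,
    trace_mul_fin_two, trace_fin_two M, trace_fin_two N] at hM hN
  obtain ⟨h₁₀, h₁₁⟩ := Prod.mk.inj h
  have h₀₀ : M 0 0 = N 0 0 := by linear_combination hM.1 - hN.1 - h₁₁
  have h₀₁ : M 0 1 = N 0 1 := mul_left_cancel₀ hA <| by
    linear_combination hM.2 - hN.2 - A 0 0 * h₀₀ - A 0 1 * h₁₀ - A 1 1 * h₁₁
  ext i j
  fin_cases i <;> fin_cases j <;> assumption

lemma card_filter_sub_eq_le {M : Matrix (Fin 2) (Fin 2) K} (hM : M ≠ 0) :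
    (Finset.univ.filter fun z : SL(2, K) × SL(2, K) => z.2.1 - z.1.1 = M).card ≤
      Fintype.card K ^ 2 + 2 * Fintype.card K := by
  have hadj : M.adjugate ≠ 0 := fun h => hM <| by
    simpa [h] using (adjugate_adjugate M (by simp)).symm
  refine (Finset.card_le_card_of_injOn Prod.fst (fun z hz => ?_) fun z hz z' hz' h => ?_).trans
    (card_filter_trace_mul_eq_le hadj (-M.det))
  · have hz : z.2.1 - z.1.1 = M := by simpa using hz
    refine Finset.mem_coe.2 (Finset.mem_filter_univ _ |>.2 ?_)
    rw [trace_adjugate_mul_fin_two, ← hz, sub_add_cancel, z.1.2, z.2.2]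
    ring
  · have hz : z.2.1 - z.1.1 = M := by simpa using hz
    have hz' : z'.2.1 - z'.1.1 = M := by simpa using hz'
    refine Prod.ext h (Subtype.ext ?_)
    rw [sub_eq_iff_eq_add.1 hz, sub_eq_iff_eq_add.1 hz', h]

lemma card_filter_sub_eq_zero_le :
    (Finset.univ.filter fun z : SL(2, K) × SL(2, K) => z.2.1 - z.1.1 = 0).card ≤
      Fintype.card SL(2, K) := by
  rw [← Finset.card_univ]
  refine Finset.card_le_card_of_injOn Prod.fst (by simp) fun z hz z' hz' h => Prod.ext h ?_
  have hz : z.2 = z.1 := Subtype.ext (by simpa [sub_eq_zero] using hz)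
  have hz' : z'.2 = z'.1 := Subtype.ext (by simpa [sub_eq_zero] using hz')
  rw [hz, hz', h]

lemma card_collisions_trace_pair_le {x : SL(2, K)} (hx : x 1 0 ≠ 0) :
    (collisions fun y : SL(2, K) => (y.1.trace, (x * y).1.trace)).card ≤
      Fintype.card K ^ 2 * (Fintype.card K ^ 2 + 2 * Fintype.card K) + Fintype.card SL(2, K) := by
  let T := Finset.univ.filter fun M : Matrix (Fin 2) (Fin 2) K =>
    M.trace = 0 ∧ (x.1 * M).trace = 0
  have hmaps : ∀ z ∈ collisions fun y : SL(2, K) => (y.1.trace, (x * y).1.trace),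
      z.2.1 - z.1.1 ∈ T := fun z hz => by
    have h := mem_collisions.1 hz
    simp only [Prod.mk.injEq, Matrix.SpecialLinearGroup.coe_mul] at h
    simp only [T, Finset.mem_filter_univ, Matrix.mul_sub, trace_sub, h.1, h.2, sub_self, and_self]
  have hT0 : (0 : Matrix (Fin 2) (Fin 2) K) ∈ T := by simp [T]
  rw [Finset.card_eq_sum_card_fiberwise hmaps, ← Finset.sum_erase_add _ _ hT0]
  gcongr
  · refine (Finset.sum_le_card_nsmul _ _ (Fintype.card K ^ 2 + 2 * Fintype.card K)
      fun M hM => ?_).trans ?_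
    · exact (Finset.card_le_card (Finset.filter_subset_filter _ (Finset.subset_univ _))).trans
        (card_filter_sub_eq_le (Finset.ne_of_mem_erase hM))
    · rw [smul_eq_mul]
      gcongr
      exact (Finset.card_erase_le).trans (card_filter_trace_eq_zero_and_le hx)
  · exact (Finset.card_le_card (Finset.filter_subset_filter _ (Finset.subset_univ _))).trans
      card_filter_sub_eq_zero_le

lemma fiberDeviation_trace_pair_le {x : SL(2, K)} (hx : x 1 0 ≠ 0) :
    fiberDeviation (fun y : SL(2, K) => (y.1.trace, (x * y).1.trace)) (Fintype.card K) ≤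
      3 * (Fintype.card K : ℝ) ^ 2 * √(Fintype.card K) := by
  have hq : (1 : ℝ) ≤ Fintype.card K := mod_cast Fintype.card_pos
  have hcoll : ((collisions fun y : SL(2, K) => (y.1.trace, (x * y).1.trace)).card : ℝ) ≤ _ :=
    Nat.cast_le.2 (card_collisions_trace_pair_le hx)
  push_cast at hcoll
  obtain ⟨hG₁, hG₂⟩ := abs_le.1 (abs_card_sl2_sub_le (K := K))
  refine (fiberDeviation_le_sqrt (V := 9 * (Fintype.card K : ℝ) ^ 3) _ ?_).trans_eq ?_
  · rw [Fintype.card_prod, Nat.cast_mul]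
    generalize (Fintype.card SL(2, K) : ℝ) = G at *
    generalize (Fintype.card K : ℝ) = q at *
    have h₁ : q * (q ^ 3 - 2 * q ^ 2) ≤ q * G := by gcongr; linarith
    have h₂ : q ^ 2 * 1 ≤ q ^ 2 * q := by gcongr
    linarith
  · rw [Fintype.card_prod, Nat.cast_mul]
    generalize (Fintype.card K : ℝ) = q at *
    rw [show q * q * (9 * q ^ 3) = (3 * q ^ 2) ^ 2 * q by ring, Real.sqrt_mul (by positivity),
      Real.sqrt_sq (by positivity)]

lemma card_filter_apply_one_zero_eq_zero_le :
    ((Finset.univ.filter fun x : SL(2, K) => ¬ x 1 0 ≠ 0).card : ℝ) ≤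
      3 * (Fintype.card K : ℝ) ^ 2 := by
  have hM : (!![0, 1; 0, 0] : Matrix (Fin 2) (Fin 2) K) ≠ 0 := fun h => by
    simpa using congrFun₂ h 0 1
  have hle := card_filter_trace_mul_eq_le hM 0
  simp only [trace_mul_fin_two, of_apply, cons_val_zero, cons_val_one, cons_val',
    zero_mul, one_mul, zero_add, add_zero] at hle
  simp only [not_not]
  have hq : Fintype.card K ≤ Fintype.card K ^ 2 := Nat.le_self_pow two_ne_zero _
  exact_mod_cast hle.trans (by lia)

/-- The trace coordinates `(tr x, tr y, tr xy)` of a pair `(x, y)`, on which the trace of every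
word in `x` and `y` depends. -/
def traceTriple (z : SL(2, K) × SL(2, K)) : K × K × K :=
  (z.1.1.trace, z.2.1.trace, (z.1 * z.2).1.trace)

lemma sum_fiberDeviation_trace_pair_le :
    ∑ x : SL(2, K), fiberDeviation (fun y : SL(2, K) => (y.1.trace, (x * y).1.trace))
      (Fintype.card K) ≤
      9 * (Fintype.card K : ℝ) ^ 5 * √(Fintype.card K) + 12 * (Fintype.card K : ℝ) ^ 5 := by
  rw [← Finset.sum_filter_add_sum_filter_not _ fun x : SL(2, K) => x 1 0 ≠ 0]
  gcongr ?_ + ?_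
  · refine (Finset.sum_le_card_nsmul _ _ _ fun x hx =>
      fiberDeviation_trace_pair_le (Finset.mem_filter.1 hx).2).trans ?_
    rw [nsmul_eq_mul]
    calc _ ≤ 3 * (Fintype.card K : ℝ) ^ 3 *
          (3 * (Fintype.card K : ℝ) ^ 2 * √(Fintype.card K)) := by
          gcongr
          exact (Nat.cast_le.2 (Finset.card_filter_le _ _)).trans card_sl2_le
      _ = _ := by ring
  · refine (Finset.sum_le_card_nsmul _ _ (4 * (Fintype.card K : ℝ) ^ 3) fun x _ => ?_).trans ?_
    · refine (fiberDeviation_le_card_add _ (Nat.cast_nonneg _)).trans ?_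
      rw [Fintype.card_prod, Nat.cast_mul]
      linarith [card_sl2_le (K := K)]
    · rw [nsmul_eq_mul]
      calc _ ≤ 3 * (Fintype.card K : ℝ) ^ 2 * (4 * (Fintype.card K : ℝ) ^ 3) := by
            gcongr
            exact card_filter_apply_one_zero_eq_zero_le
        _ = _ := by ring

lemma fiberDeviation_traceTriple_le :
    fiberDeviation (traceTriple (K := K)) ((Fintype.card K : ℝ) ^ 3) ≤
      23 * (Fintype.card K : ℝ) ^ 5 * √(Fintype.card K) := by
  have hq : (1 : ℝ) ≤ √(Fintype.card K) := Real.one_le_sqrt.2 (mod_cast Fintype.card_pos)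
  have h := fiberDeviation_prodMk_le (fun x : SL(2, K) => x.1.trace)
    (fun x y : SL(2, K) => (y.1.trace, (x * y).1.trace)) ((Fintype.card K : ℝ) ^ 2)
    (Nat.cast_nonneg (Fintype.card K))
  rw [← pow_succ', Fintype.card_prod, Nat.cast_mul] at h
  calc fiberDeviation (traceTriple (K := K)) ((Fintype.card K : ℝ) ^ 3)
      ≤ 9 * (Fintype.card K : ℝ) ^ 5 * √(Fintype.card K) + 12 * (Fintype.card K : ℝ) ^ 5 +
        Fintype.card K * (Fintype.card K * Fintype.card K * (2 * (Fintype.card K : ℝ) ^ 2)) := by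
        refine h.trans ?_
        gcongr
        exacts [sum_fiberDeviation_trace_pair_le, fiberDeviation_trace_le]
    _ = 9 * (Fintype.card K : ℝ) ^ 5 * √(Fintype.card K) + 14 * (Fintype.card K : ℝ) ^ 5 * 1 := by
        ring
    _ ≤ 9 * (Fintype.card K : ℝ) ^ 5 * √(Fintype.card K) +
        14 * (Fintype.card K : ℝ) ^ 5 * √(Fintype.card K) := by gcongr
    _ = _ := by ring

end TraceTriples

section Conjugation

lemma map_wordEval {G H : Type*} [Group G] [Group H] (φ : G →* H) (w : FreeGroup (Fin 2))
    (x y : G) : φ (wordEval w x y) = wordEval w (φ x) (φ y) := by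
  have h : φ.comp (FreeGroup.lift ![x, y]) = FreeGroup.lift ![φ x, φ y] :=
    FreeGroup.ext_hom _ _ fun i => by fin_cases i <;> simp
  exact DFunLike.congr_fun h w

/-- Conjugation by an element of the general linear group, as an automorphism of the special
linear group. -/
def conjSpecialLinear {n R : Type*} [Fintype n] [DecidableEq n] [CommRing R] (P : GL n R) :
    SpecialLinearGroup n R ≃* SpecialLinearGroup n R where
  toFun x := ⟨P.1 * x.1 * P⁻¹.1, (det_units_conj P x.1).trans x.2⟩
  invFun x := ⟨P⁻¹.1 * x.1 * P.1, (det_units_conj' P x.1).trans x.2⟩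
  left_inv x := Subtype.ext <| by simp [Matrix.mul_assoc]
  right_inv x := Subtype.ext <| by simp [Matrix.mul_assoc]
  map_mul' x y := Subtype.ext <| by
    change P.1 * (x.1 * y.1) * P⁻¹.1 = P.1 * x.1 * P⁻¹.1 * (P.1 * y.1 * P⁻¹.1)
    simp [Matrix.mul_assoc]

variable {K : Type*} [Field K]

lemma exists_det_cyclic_ne_zero (g : SL(2, K)) (hg : g.1.trace ^ 2 ≠ 4) :
    ∃ v : Fin 2 → K, (!![v 0, (g.1 *ᵥ v) 0; v 1, (g.1 *ᵥ v) 1]).det ≠ 0 := by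
  simp only [det_fin_two_of, mulVec, dotProduct, Fin.sum_univ_two]
  by_contra! h
  have h₁₀ : g.1 1 0 = 0 := by simpa using h ![1, 0]
  have h₀₁ : g.1 0 1 = 0 := by simpa using h ![0, 1]
  have h₁₁ : g.1 1 1 - g.1 0 0 = 0 := by simpa [h₁₀, h₀₁] using h ![1, 1]
  have hdet := sl2_det g
  rw [trace_fin_two] at hg
  apply hg
  linear_combination (g.1 1 1 - g.1 0 0) * h₁₁ + 4 * hdet + 4 * g.1 0 1 * h₁₀

lemma exists_mul_eq_mul_companion (g : SL(2, K)) (hg : g.1.trace ^ 2 ≠ 4) :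
    ∃ P : GL (Fin 2) K, g.1 * P.1 = P.1 * !![0, -1; 1, g.1.trace] := by
  obtain ⟨v, hv⟩ := exists_det_cyclic_ne_zero g hg
  refine ⟨GeneralLinearGroup.mkOfDetNeZero _ hv, ?_⟩
  have hdet := sl2_det g
  change g.1 * !![v 0, (g.1 *ᵥ v) 0; v 1, (g.1 *ᵥ v) 1] =
    !![v 0, (g.1 *ᵥ v) 0; v 1, (g.1 *ᵥ v) 1] * !![0, -1; 1, g.1.trace]
  rw [trace_fin_two]
  ext i j
  fin_cases i <;> fin_cases j <;> simp [mul_apply, Fin.sum_univ_two, mulVec, dotProduct]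
  · linear_combination -v 0 * hdet
  · linear_combination -v 1 * hdet

lemma exists_conjSpecialLinear_eq {g h : SL(2, K)} (hg : g.1.trace ^ 2 ≠ 4)
    (hgh : g.1.trace = h.1.trace) : ∃ P : GL (Fin 2) K, conjSpecialLinear P g = h := by
  obtain ⟨P, hP⟩ := exists_mul_eq_mul_companion g hg
  obtain ⟨R, hR⟩ := exists_mul_eq_mul_companion h (hgh ▸ hg)
  refine ⟨R * P⁻¹, Subtype.ext ?_⟩
  calc (R * P⁻¹).1 * g.1 * (R * P⁻¹)⁻¹.1 = R.1 * (P⁻¹.1 * (g.1 * P.1)) * R⁻¹.1 := by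
        simp [Matrix.mul_assoc]
    _ = R.1 * !![0, -1; 1, h.1.trace] * R⁻¹.1 := by
        rw [hP, ← Matrix.mul_assoc P⁻¹.1, P.inv_mul, Matrix.one_mul, hgh]
    _ = h.1 := by rw [← hR, Matrix.mul_assoc, R.mul_inv, Matrix.mul_one]

end Conjugation

section WordMapDeviation

lemma sum_abs_eq_abs_sum_of_const {α : Type*} {s : Finset α} {φ : α → ℝ}
    (h : ∀ a ∈ s, ∀ b ∈ s, φ a = φ b) : ∑ a ∈ s, |φ a| = |∑ a ∈ s, φ a| := by
  obtain rfl | ⟨b, hb⟩ := s.eq_empty_or_nonempty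
  · simp
  · rw [Finset.sum_eq_card_nsmul fun a ha => congrArg _ (h a ha b hb),
      Finset.sum_eq_card_nsmul fun a ha => h a ha b hb, abs_nsmul]

variable {K : Type} [Field K] [Fintype K] [DecidableEq K]

lemma card_filter_wordMap_eq (w : FreeGroup (Fin 2)) {g h : SL2 K} (hg : g.1.trace ^ 2 ≠ 4)
    (hgh : g.1.trace = h.1.trace) :
    (Finset.univ.filter fun z => wordMap w K z = g).card =
      (Finset.univ.filter fun z => wordMap w K z = h).card := by
  obtain ⟨P, hP⟩ := exists_conjSpecialLinear_eq hg hgh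
  refine Finset.card_equiv ((conjSpecialLinear P).toEquiv.prodCongr (conjSpecialLinear P).toEquiv)
    fun z => ?_
  have hz : wordMap w K (conjSpecialLinear P z.1, conjSpecialLinear P z.2) =
      conjSpecialLinear P (wordMap w K z) :=
    (map_wordEval (conjSpecialLinear P).toMonoidHom w z.1 z.2).symm
  simp only [Finset.mem_filter_univ, Equiv.prodCongr_apply, Prod.map, MulEquiv.toEquiv_eq_coe,
    MulEquiv.coe_toEquiv, hz, ← hP, EmbeddingLike.apply_eq_iff_eq]

lemma sum_card_filter_wordMap_eq (w : FreeGroup (Fin 2)) (c : K) :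
    ∑ g with g.1.trace = c, ((Finset.univ.filter fun z => wordMap w K z = g).card : ℝ) =
      (Finset.univ.filter fun z => (wordMap w K z).1.trace = c).card := by
  rw [← Nat.cast_sum, Finset.card_eq_sum_card_fiberwise (f := wordMap w K)
    (t := Finset.univ.filter fun g => g.1.trace = c) fun z hz => by simpa using hz]
  refine congrArg _ (Finset.sum_congr rfl fun g hg => congrArg _ ?_)
  rw [Finset.filter_filter]
  refine Finset.filter_congr fun z _ => ⟨fun h => ⟨?_, h⟩, And.right⟩
  rw [h, (Finset.mem_filter.1 hg).2]

lemma sum_abs_card_filter_wordMap_sub_le (w : FreeGroup (Fin 2)) {c : K} (hc : c ^ 2 ≠ 4) :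
    ∑ g with g.1.trace = c, |((Finset.univ.filter fun z => wordMap w K z = g).card : ℝ) -
        (Fintype.card K : ℝ) ^ 3| ≤
      |((Finset.univ.filter fun z => (wordMap w K z).1.trace = c).card : ℝ) -
        (Fintype.card K : ℝ) ^ 5| + 2 * (Fintype.card K : ℝ) ^ 4 := by
  let N (g : SL2 K) : ℝ := (Finset.univ.filter fun z => wordMap w K z = g).card
  let κ : ℝ := (Finset.univ.filter fun g : SL2 K => g.1.trace = c).card
  have habs : ∑ g with g.1.trace = c, |N g - (Fintype.card K : ℝ) ^ 3| =
      |∑ g with g.1.trace = c, (N g - (Fintype.card K : ℝ) ^ 3)| := by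
    refine sum_abs_eq_abs_sum_of_const fun g hg h hh => ?_
    have hg := (Finset.mem_filter.1 hg).2
    have hh := (Finset.mem_filter.1 hh).2
    simp only [N, card_filter_wordMap_eq w (hg ▸ hc) (hg.trans hh.symm)]
  have hκ := abs_card_filter_trace_eq_sub_le c
  calc _ = |∑ g with g.1.trace = c, N g - (Fintype.card K : ℝ) ^ 3 * κ| := by
        rw [habs, Finset.sum_sub_distrib, Finset.sum_const, nsmul_eq_mul, mul_comm _ κ]
    _ = |(∑ g with g.1.trace = c, N g - (Fintype.card K : ℝ) ^ 5) +
          (Fintype.card K : ℝ) ^ 3 * ((Fintype.card K : ℝ) ^ 2 - κ)| := by ring_nf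
    _ ≤ _ := (abs_add_le _ _).trans ?_
  rw [sum_card_filter_wordMap_eq, abs_mul, abs_pow, Nat.abs_cast, abs_sub_comm _ κ]
  refine add_le_add le_rfl ?_
  calc _ ≤ (Fintype.card K : ℝ) ^ 3 * (2 * Fintype.card K) := by gcongr
    _ = _ := by ring

lemma sum_abs_card_filter_wordMap_sub_le_add (w : FreeGroup (Fin 2)) (c : K) :
    ∑ g with g.1.trace = c, |((Finset.univ.filter fun z => wordMap w K z = g).card : ℝ) -
        (Fintype.card K : ℝ) ^ 3| ≤
      |((Finset.univ.filter fun z => (wordMap w K z).1.trace = c).card : ℝ) -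
        (Fintype.card K : ℝ) ^ 5| + 4 * (Fintype.card K : ℝ) ^ 5 := by
  have hq : (1 : ℝ) ≤ Fintype.card K := mod_cast Fintype.card_pos
  have hκ : ((Finset.univ.filter fun g : SL2 K => g.1.trace = c).card : ℝ) ≤
      3 * (Fintype.card K : ℝ) ^ 2 := by
    refine (Nat.cast_le.2 (card_filter_trace_eq_le c)).trans ?_
    push_cast
    nlinarith
  calc _ ≤ ∑ g with g.1.trace = c, (((Finset.univ.filter fun z => wordMap w K z = g).card : ℝ) +
          (Fintype.card K : ℝ) ^ 3) := by
        refine Finset.sum_le_sum fun g _ => (abs_sub _ _).trans_eq ?_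
        rw [Nat.abs_cast, abs_of_nonneg (by positivity)]
    _ ≤ (Finset.univ.filter fun z => (wordMap w K z).1.trace = c).card +
          3 * (Fintype.card K : ℝ) ^ 2 * (Fintype.card K : ℝ) ^ 3 := by
      rw [Finset.sum_add_distrib, sum_card_filter_wordMap_eq, Finset.sum_const, nsmul_eq_mul]
      gcongr
    _ ≤ _ := by
      linarith [le_abs_self (((Finset.univ.filter fun z => (wordMap w K z).1.trace = c).card : ℝ) -
        (Fintype.card K : ℝ) ^ 5)]

lemma fiberDeviation_wordMap_le (w : FreeGroup (Fin 2)) :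
    fiberDeviation (wordMap w K) ((Fintype.card K : ℝ) ^ 3) ≤
      fiberDeviation (fun z => (wordMap w K z).1.trace) ((Fintype.card K : ℝ) ^ 5) +
        10 * (Fintype.card K : ℝ) ^ 5 := by
  have hroots : ((Finset.univ.filter fun c : K => c ^ 2 = 4).card : ℝ) ≤ 2 := by
    have hX : (X ^ 2 : K[X]) ≠ C 4 := fun h => by simpa using congrArg natDegree h
    simpa using Nat.cast_le (α := ℝ).2 (card_filter_eval_eq_le hX)
  calc fiberDeviation (wordMap w K) ((Fintype.card K : ℝ) ^ 3)
      = ∑ c, ∑ g with g.1.trace = c, |((Finset.univ.filter fun z => wordMap w K z = g).card : ℝ) -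
        (Fintype.card K : ℝ) ^ 3| := (Finset.sum_fiberwise _ _ _).symm
    _ ≤ ∑ c, (|((Finset.univ.filter fun z => (wordMap w K z).1.trace = c).card : ℝ) -
          (Fintype.card K : ℝ) ^ 5| + (2 * (Fintype.card K : ℝ) ^ 4 +
            if c ^ 2 = 4 then 4 * (Fintype.card K : ℝ) ^ 5 else 0)) := by
      refine Finset.sum_le_sum fun c _ => ?_
      split_ifs with hc
      · exact (sum_abs_card_filter_wordMap_sub_le_add w c).trans
          (by gcongr; exact le_add_of_nonneg_left (by positivity))
      · rw [add_zero]
        exact sum_abs_card_filter_wordMap_sub_le w hc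
    _ ≤ _ := by
      rw [Finset.sum_add_distrib, Finset.sum_add_distrib, ← Finset.sum_filter, Finset.sum_const,
        Finset.sum_const, Finset.card_univ, nsmul_eq_mul, nsmul_eq_mul]
      refine add_le_add le_rfl ?_
      calc _ ≤ Fintype.card K * (2 * (Fintype.card K : ℝ) ^ 4) +
            2 * (4 * (Fintype.card K : ℝ) ^ 5) := by gcongr
        _ = _ := by ring

end WordMapDeviation

section Equidistribution

lemma fiberDeviation_le_add_abs_sub {α β : Type*} [Fintype α] [Fintype β] [DecidableEq β]
    (f : α → β) (m n : ℝ) :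
    fiberDeviation f m ≤ fiberDeviation f n + Fintype.card β * |n - m| := by
  calc fiberDeviation f m
      ≤ ∑ b, (|((Finset.univ.filter fun a => f a = b).card : ℝ) - n| + |n - m|) :=
        Finset.sum_le_sum fun b _ => abs_sub_le _ _ _
    _ = _ := by
      rw [Finset.sum_add_distrib, Finset.sum_const, Finset.card_univ, nsmul_eq_mul, fiberDeviation]

lemma isEquidistributed_of_fiberDeviation_lt {X Y : Type*} [Fintype X] [Fintype Y] [DecidableEq Y]
    {f : X → Y} {ε : ℝ} (hε : 0 < ε)
    (h : fiberDeviation f (Fintype.card X / Fintype.card Y) < ε ^ 2 * Fintype.card X) :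
    IsEquidistributed f ε := by
  let η : ℝ := ε * Fintype.card X / Fintype.card Y
  let N (y : Y) : ℝ := (Finset.univ.filter fun x => f x = y).card
  let good : Finset Y := Finset.univ.filter fun y => |N y - Fintype.card X / Fintype.card Y| < η
  let bad : Finset Y := Finset.univ.filter fun y => ¬ |N y - Fintype.card X / Fintype.card Y| < η
  have hX : 0 < (Fintype.card X : ℝ) :=
    pos_of_mul_pos_right ((Finset.sum_nonneg fun _ _ => abs_nonneg _).trans_lt h) (sq_nonneg ε)
  have hY : 0 < (Fintype.card Y : ℝ) :=
    have : Nonempty X := Fintype.card_pos_iff.1 (mod_cast hX)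
    Nat.cast_pos.2 (Fintype.card_pos_iff.2 (this.map f))
  have hη : 0 < η := by positivity
  have hbad : (bad.card : ℝ) < ε * Fintype.card Y := by
    refine lt_of_mul_lt_mul_right ?_ hη.le
    calc (bad.card : ℝ) * η ≤ ∑ y ∈ bad, |N y - Fintype.card X / Fintype.card Y| := by
          rw [← nsmul_eq_mul]
          exact Finset.card_nsmul_le_sum _ _ _ fun y hy => not_lt.1 (Finset.mem_filter.1 hy).2
      _ ≤ fiberDeviation f (Fintype.card X / Fintype.card Y) :=
        Finset.sum_le_univ_sum_of_nonneg fun _ => abs_nonneg _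
      _ < ε ^ 2 * Fintype.card X := h
      _ = ε * Fintype.card Y * η := by
        simp only [η]
        field_simp
  refine ⟨good, ?_, fun y hy => ?_⟩
  · have hcompl : (good.card : ℝ) + bad.card = Fintype.card Y := by
      rw [← Nat.cast_add, Finset.card_filter_add_card_filter_not, Finset.card_univ]
    rw [Nat.card_coe_set_eq, Set.ncard_coe_finset, Nat.card_eq_fintype_card]
    linarith
  · simpa only [Nat.card_eq_fintype_card, Fintype.card_subtype] using (Finset.mem_filter.1 hy).2

variable {K : Type} [Field K]

lemma trace_wordMap_wordOfList (L : List (ℤ × ℤ)) (z : SL2 K × SL2 K) :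
    (wordMap (wordOfList L) K z).1.trace = traceFun L (traceTriple z) :=
  trace_wordEval z.1 z.2 L

variable [Fintype K] [DecidableEq K]

lemma fiberDeviation_traceFun_le {L : List (ℤ × ℤ)} {ε : ℝ}
    (h : ((collisions (traceFun (K := K) L)).card : ℝ) ≤ (1 + ε) * (Fintype.card K : ℝ) ^ 5) :
    fiberDeviation (traceFun (K := K) L) ((Fintype.card K : ℝ) ^ 2) ≤
      √ε * (Fintype.card K : ℝ) ^ 3 := by
  refine (fiberDeviation_le_sqrt (V := ε * (Fintype.card K : ℝ) ^ 5) _ ?_).trans_eq ?_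
  · simp only [Fintype.card_prod, Nat.cast_mul]
    linarith
  · rw [show Fintype.card K * (ε * (Fintype.card K : ℝ) ^ 5) = ε * ((Fintype.card K : ℝ) ^ 3) ^ 2 by
      ring, Real.sqrt_mul' _ (by positivity), Real.sqrt_sq (by positivity)]

lemma fiberDeviation_trace_wordMap_le {L : List (ℤ × ℤ)} {ε : ℝ}
    (h : ((collisions (traceFun (K := K) L)).card : ℝ) ≤ (1 + ε) * (Fintype.card K : ℝ) ^ 5) :
    fiberDeviation (fun z => (wordMap (wordOfList L) K z).1.trace) ((Fintype.card K : ℝ) ^ 5) ≤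
      23 * (Fintype.card K : ℝ) ^ 5 * √(Fintype.card K) + √ε * (Fintype.card K : ℝ) ^ 6 := by
  simp only [trace_wordMap_wordOfList]
  calc fiberDeviation (traceFun L ∘ traceTriple (K := K)) ((Fintype.card K : ℝ) ^ 5)
      ≤ fiberDeviation (traceTriple (K := K)) ((Fintype.card K : ℝ) ^ 3) +
        (Fintype.card K : ℝ) ^ 3 *
          fiberDeviation (traceFun (K := K) L) ((Fintype.card K : ℝ) ^ 2) := by
        rw [pow_add _ 3 2]
        exact fiberDeviation_comp_le _ _ (by positivity) _
    _ ≤ 23 * (Fintype.card K : ℝ) ^ 5 * √(Fintype.card K) +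
        (Fintype.card K : ℝ) ^ 3 * (√ε * (Fintype.card K : ℝ) ^ 3) := by
        gcongr
        exacts [fiberDeviation_traceTriple_le, fiberDeviation_traceFun_le h]
    _ = _ := by ring

lemma fiberDeviation_wordMap_card_le (w : FreeGroup (Fin 2)) :
    fiberDeviation (wordMap w K) (Fintype.card (SL2 K)) ≤
      fiberDeviation (fun z => (wordMap w K z).1.trace) ((Fintype.card K : ℝ) ^ 5) +
        16 * (Fintype.card K : ℝ) ^ 5 := by
  calc fiberDeviation (wordMap w K) (Fintype.card (SL2 K))
      ≤ fiberDeviation (wordMap w K) ((Fintype.card K : ℝ) ^ 3) +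
        Fintype.card (SL2 K) * |(Fintype.card K : ℝ) ^ 3 - Fintype.card (SL2 K)| :=
        fiberDeviation_le_add_abs_sub _ _ _
    _ ≤ fiberDeviation (fun z => (wordMap w K z).1.trace) ((Fintype.card K : ℝ) ^ 5) +
        10 * (Fintype.card K : ℝ) ^ 5 +
        3 * (Fintype.card K : ℝ) ^ 3 * (2 * (Fintype.card K : ℝ) ^ 2) := by
        rw [abs_sub_comm]
        gcongr
        exacts [fiberDeviation_wordMap_le w, card_sl2_le, abs_card_sl2_sub_le]
    _ = _ := by ring

lemma isEquidistributed_wordMap_wordOfList {L : List (ℤ × ℤ)} {δ : ℝ} (hδ : 0 < δ)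
    (hq : 4 ≤ Fintype.card K) (hqδ : 624 / δ ^ 2 ≤ √(Fintype.card K))
    (h : ((collisions (traceFun (K := K) L)).card : ℝ) ≤
      (1 + (δ ^ 2 / 16) ^ 2) * (Fintype.card K : ℝ) ^ 5) :
    IsEquidistributed (wordMap (wordOfList L) K) δ := by
  refine isEquidistributed_of_fiberDeviation_lt hδ ?_
  have hG : 0 < (Fintype.card (SL2 K) : ℝ) := Nat.cast_pos.2 Fintype.card_pos
  rw [Fintype.card_prod, Nat.cast_mul, mul_div_cancel_right₀ _ hG.ne']
  have hword := fiberDeviation_wordMap_card_le (K := K) (wordOfList L)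
  have htrace := fiberDeviation_trace_wordMap_le h
  have hcard := (abs_le.1 (abs_card_sl2_sub_le (K := K))).1
  rw [Real.sqrt_sq (by positivity)] at htrace
  have hq : (4 : ℝ) ≤ Fintype.card K := mod_cast hq
  rw [div_le_iff₀ (by positivity)] at hqδ
  generalize (Fintype.card K : ℝ) = q at *
  have hs : 1 ≤ √q := Real.one_le_sqrt.2 (by linarith)
  have hhalf : q ^ 3 / 2 ≤ Fintype.card (SL2 K) := by nlinarith [sq_nonneg q]
  calc _ ≤ 23 * q ^ 5 * √q + δ ^ 2 / 16 * q ^ 6 + 16 * q ^ 5 * √q := by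
        refine hword.trans (add_le_add htrace (le_mul_of_one_le_right (by positivity) hs))
    _ = q ^ 5 * √q / 16 * 624 + δ ^ 2 / 16 * q ^ 6 := by ring
    _ ≤ q ^ 5 * √q / 16 * (√q * δ ^ 2) + δ ^ 2 / 16 * q ^ 6 := by gcongr
    _ = q ^ 5 * (√q * √q) * δ ^ 2 / 16 + δ ^ 2 / 16 * q ^ 6 := by ring
    _ = δ ^ 2 * (q ^ 6 / 8) := by
      rw [Real.mul_self_sqrt (by linarith)]
      ring
    _ < δ ^ 2 * (q ^ 3 / 2 * (q ^ 3 / 2)) := by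
      gcongr
      nlinarith [pow_pos (show 0 < q by linarith) 6]
    _ ≤ _ := by gcongr

end Equidistribution

section PEquidistribution

lemma isEquidistributed_mono {X Y : Type*} {f : X → Y} {δ ε : ℝ} (hδε : δ ≤ ε)
    (h : IsEquidistributed f δ) : IsEquidistributed f ε := by
  obtain ⟨Y', hcard, hfiber⟩ := h
  exact ⟨Y', lt_of_le_of_lt (by gcongr) hcard, fun y hy => (hfiber y hy).trans_le (by gcongr)⟩

lemma isPEquidistributed_of_forall_eventually {w : FreeGroup (Fin 2)} {p : ℕ} [hp : Fact p.Prime]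
    (h : ∀ δ : ℝ, 0 < δ →
      ∀ᶠ n : ℕ in Filter.atTop, IsEquidistributed (wordMap w (GaloisField p n)) δ) :
    IsPEquidistributed w p hp.out := by
  let S (n : ℕ) : Set ℝ := {δ | 0 < δ ∧ IsEquidistributed (wordMap w (GaloisField p n)) δ}
  have hS (n : ℕ) : 0 ∈ lowerBounds (S n) := fun δ hδ => hδ.1.le
  have hlim : Filter.Tendsto (fun n => sInf (S n)) Filter.atTop (nhds 0) := by
    rw [Metric.tendsto_nhds]
    intro η hη
    filter_upwards [h (η / 2) (half_pos hη)] with n hn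
    rw [Real.dist_0_eq_abs, abs_of_nonneg (Real.sInf_nonneg (hS n))]
    exact (csInf_le ⟨0, hS n⟩ ⟨half_pos hη, hn⟩).trans_lt (half_lt_self hη)
  refine ⟨fun m => sInf (S (Nat.log p m)) + 1 / (Nat.log p m + 1), ?_, ?_⟩
  · simpa only [Nat.log_pow hp.out.one_lt, add_zero] using
      hlim.add tendsto_one_div_add_atTop_nhds_zero_nat
  · filter_upwards [h 1 one_pos] with n hn
    rw [Nat.log_pow hp.out.one_lt]
    obtain ⟨δ, hδ, hlt⟩ := exists_lt_of_csInf_lt (s := S n) ⟨1, one_pos, hn⟩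
      (lt_add_of_pos_right (sInf (S n)) (show (0 : ℝ) < 1 / (n + 1) by positivity))
    exact isEquidistributed_mono hlt.le hδ.2

theorem isPEquidistributed_wordOfList (p : ℕ) [hp : Fact p.Prime] {L : List (ℤ × ℤ)} (hL : L ≠ [])
    (h : ∀ (K : Type) [Field K] [CharP K p],
      leadY K L ≠ 0 ∧ HasCoprimeRoot (leadX K L) L.length) :
    IsPEquidistributed (wordOfList L) p hp.out := by
  classical
  refine isPEquidistributed_of_forall_eventually fun δ hδ => ?_
  obtain ⟨n₀, hn₀⟩ :=
    exists_forall_card_collisions_le p hL (show 0 < (δ ^ 2 / 16) ^ 2 by positivity)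
  obtain ⟨n₁, hn₁⟩ := exists_nat_ge ((624 / δ ^ 2) ^ 2)
  filter_upwards [Filter.eventually_ge_atTop (max n₀ (max n₁ 4))] with n hn
  rw [max_le_iff, max_le_iff] at hn
  let _ : Fintype (GaloisField p n) := Fintype.ofFinite _
  have hcard : Fintype.card (GaloisField p n) = p ^ n := by
    rw [← Nat.card_eq_fintype_card, GaloisField.card p n (by lia)]
  have hle : n ≤ p ^ n := (Nat.lt_pow_self hp.out.one_lt).le
  refine isEquidistributed_wordMap_wordOfList hδ (hcard ▸ hn.2.2.trans hle) ?_ ?_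
  · refine Real.le_sqrt_of_sq_le (hn₁.trans ?_)
    rw [hcard]
    exact Nat.cast_le.2 (hn.2.1.trans hle)
  · rw [hcard, Nat.cast_pow]
    exact hn₀ n hn.1 _ hcard (h _).1 (h _).2

end PEquidistribution

section Chebyshev

variable {R : Type*} [CommRing R]

lemma chebyshevS_natCast_sub_one_add_two (k : ℕ) :
    Chebyshev.S R ((k + 2 : ℕ) - 1) =
      X * Chebyshev.S R ((k + 1 : ℕ) - 1) - Chebyshev.S R (k - 1) := by
  convert Chebyshev.S_add_two R ((k : ℤ) - 1) using 4 <;> push_cast <;> ring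

lemma natDegree_chebyshevS_and_monic [Nontrivial R] (k : ℕ) :
    (Chebyshev.S R k).natDegree = k ∧ (Chebyshev.S R k).Monic := by
  induction k using Nat.twoStepInduction with
  | zero => simp
  | one => simp [monic_X]
  | more k ih₀ ih₁ =>
    have hdeg : (X * Chebyshev.S R (k + 1 : ℕ)).natDegree = k + 2 := by
      rw [monic_X.natDegree_mul ih₁.2, ih₁.1, natDegree_X, add_comm, add_assoc]
    have hlt : (Chebyshev.S R k).natDegree < (X * Chebyshev.S R (k + 1 : ℕ)).natDegree := by
      lia
    have hrec : Chebyshev.S R (k + 2 : ℕ) = X * Chebyshev.S R (k + 1 : ℕ) - Chebyshev.S R k :=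
      mod_cast Chebyshev.S_add_two R k
    rw [hrec, natDegree_sub_eq_left_of_natDegree_lt hlt, hdeg]
    exact ⟨rfl, (monic_X.mul ih₁.2).sub_of_left (degree_lt_degree hlt)⟩

lemma natDegree_chebyshevS [Nontrivial R] (k : ℕ) : (Chebyshev.S R k).natDegree = k :=
  (natDegree_chebyshevS_and_monic k).1

lemma monic_chebyshevS (k : ℕ) : (Chebyshev.S R k).Monic := by
  nontriviality R
  exact (natDegree_chebyshevS_and_monic k).2

lemma chebyshevS_sub_one_eq_or_eq_neg (b : ℤ) :
    Chebyshev.S R (b - 1) = Chebyshev.S R (b.natAbs - 1) ∨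
      Chebyshev.S R (b - 1) = -Chebyshev.S R (b.natAbs - 1) := by
  rcases Int.natAbs_eq b with h | h
  · exact .inl (by rw [← h])
  · refine .inr ?_
    rw [← Chebyshev.S_neg_sub_one, ← h]

lemma chebyshevS_sub_one_ne_zero [Nontrivial R] {b : ℤ} (hb : b ≠ 0) :
    Chebyshev.S R (b - 1) ≠ 0 := by
  have h := (monic_chebyshevS (R := R) (b.natAbs - 1)).ne_zero
  rw [Nat.cast_sub (Int.natAbs_pos.2 hb), Nat.cast_one] at h
  rcases chebyshevS_sub_one_eq_or_eq_neg (R := R) b with h' | h' <;> rw [h'] <;>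
    simpa only [neg_ne_zero, ne_eq] using h

lemma chebyshevProd_ne_zero [IsDomain R] {L : List ℤ} (hL : ∀ a ∈ L, a ≠ 0) :
    chebyshevProd R L ≠ 0 := by
  refine List.prod_ne_zero fun h₀ => ?_
  obtain ⟨a, ha, h⟩ := List.mem_map.1 h₀
  exact chebyshevS_sub_one_ne_zero (hL a ha) h

end Chebyshev

section Roots

variable {F : Type*} [Field F]

lemma chebyshevS_eval_add_inv_mul {z : F} (hz : z ≠ 0) (k : ℕ) :
    (Chebyshev.S F (k - 1)).eval (z + z⁻¹) * (z - z⁻¹) = z ^ k - z⁻¹ ^ k := by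
  induction k using Nat.twoStepInduction with
  | zero => simp
  | one => simp
  | more k ih₀ ih₁ =>
    have hzz : z * z⁻¹ = 1 := mul_inv_cancel₀ hz
    rw [chebyshevS_natCast_sub_one_add_two, eval_sub, eval_mul, eval_X]
    linear_combination (z + z⁻¹) * ih₁ - ih₀ + (z ^ k - z⁻¹ ^ k) * hzz

variable {n : ℕ} {ζ : F}

lemma isRoot_chebyshevS_iff (hζ : IsPrimitiveRoot ζ (2 * n)) {j : ℕ} (hj : 0 < j) (hjn : j < n)
    (k : ℕ) : (Chebyshev.S F (k - 1)).IsRoot (ζ ^ j + (ζ ^ j)⁻¹) ↔ n ∣ j * k := by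
  have hz : ζ ^ j ≠ 0 := pow_ne_zero _ (hζ.ne_zero (by lia))
  have hpow (i : ℕ) : (ζ ^ j) ^ i - (ζ ^ j)⁻¹ ^ i = 0 ↔ n ∣ j * i := by
    rw [inv_pow, sub_eq_zero, ← mul_eq_one_iff_eq_inv₀ (pow_ne_zero _ hz), ← pow_mul, ← pow_add,
      hζ.pow_eq_one_iff_dvd, ← two_mul, Nat.mul_dvd_mul_iff_left two_pos]
  have hne : ζ ^ j - (ζ ^ j)⁻¹ ≠ 0 := by
    have h := (hpow 1).not.2 (by rw [mul_one]; exact Nat.not_dvd_of_pos_of_lt hj hjn)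
    rwa [pow_one, pow_one] at h
  rw [← hpow k, ← chebyshevS_eval_add_inv_mul hz, mul_eq_zero, or_iff_left hne, IsRoot]

lemma injOn_pow_add_inv (hζ : IsPrimitiveRoot ζ (2 * n)) :
    Set.InjOn (fun j : ℕ => ζ ^ j + (ζ ^ j)⁻¹) (Finset.Ico 1 n) := by
  intro i hi j hj hij
  rw [Finset.mem_coe, Finset.mem_Ico] at hi hj
  have hz : ζ ≠ 0 := hζ.ne_zero (by lia)
  have hi₀ : ζ ^ i * (ζ ^ i)⁻¹ = 1 := mul_inv_cancel₀ (pow_ne_zero _ hz)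
  have hj₀ : ζ ^ j * (ζ ^ j)⁻¹ = 1 := mul_inv_cancel₀ (pow_ne_zero _ hz)
  have hmul : (ζ ^ i - ζ ^ j) * (ζ ^ i * ζ ^ j - 1) = 0 := by
    linear_combination ζ ^ i * ζ ^ j * hij - ζ ^ j * hi₀ + ζ ^ i * hj₀
  rcases mul_eq_zero.1 hmul with h | h
  · exact hζ.pow_inj (by lia) (by lia) (sub_eq_zero.1 h)
  · rw [sub_eq_zero, ← pow_add, hζ.pow_eq_one_iff_dvd] at h
    exact absurd h (Nat.not_dvd_of_pos_of_lt (by lia) (by lia))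

lemma rootMultiplicity_chebyshevS_self (hn : 2 ≤ n) (hζ : IsPrimitiveRoot ζ (2 * n)) :
    (Chebyshev.S F (n - 1)).rootMultiplicity (ζ + ζ⁻¹) = 1 := by
  classical
  have hcast : ((n - 1 : ℕ) : ℤ) = n - 1 := by lia
  have hmonic : (Chebyshev.S F (n - 1)).Monic := hcast ▸ monic_chebyshevS (n - 1)
  set T : Finset F := (Finset.Ico 1 n).image fun j => ζ ^ j + (ζ ^ j)⁻¹ with hT
  have hsub : T.val ≤ (Chebyshev.S F (n - 1)).roots := by
    rw [Finset.val_le_iff_val_subset]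
    intro x hx
    rw [Finset.mem_val, hT, Finset.mem_image] at hx
    obtain ⟨j, hj, rfl⟩ := hx
    obtain ⟨hj₁, hjn⟩ := Finset.mem_Ico.1 hj
    rw [mem_roots hmonic.ne_zero, isRoot_chebyshevS_iff hζ hj₁ hjn]
    exact dvd_mul_left n j
  have hcard : (Chebyshev.S F (n - 1)).roots.card ≤ T.val.card := by
    rw [Finset.card_val, hT, Finset.card_image_of_injOn (injOn_pow_add_inv hζ), Nat.card_Ico,
      ← hcast]
    exact (card_roots' _).trans_eq (natDegree_chebyshevS (n - 1))
  rw [← count_roots, ← Multiset.eq_of_le_of_card_le hsub hcard]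
  refine Multiset.count_eq_one_of_mem T.nodup ?_
  rw [Finset.mem_val, hT, Finset.mem_image]
  exact ⟨1, Finset.mem_Ico.2 ⟨le_rfl, hn⟩, by rw [pow_one]⟩

lemma rootMultiplicity_chebyshevS (hn : 2 ≤ n) (hζ : IsPrimitiveRoot ζ (2 * n)) {b : ℤ}
    (hb : b ≠ 0) (hbn : b.natAbs ≤ n) :
    (Chebyshev.S F (b - 1)).rootMultiplicity (ζ + ζ⁻¹) = if b.natAbs = n then 1 else 0 := by
  classical
  have habs : (Chebyshev.S F (b - 1)).rootMultiplicity (ζ + ζ⁻¹) =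
      (Chebyshev.S F (b.natAbs - 1)).rootMultiplicity (ζ + ζ⁻¹) := by
    rcases chebyshevS_sub_one_eq_or_eq_neg (R := F) b with h | h
    · rw [h]
    · rw [h, ← count_roots, ← count_roots, roots_neg]
  rw [habs]
  split_ifs with h
  · rw [h, rootMultiplicity_chebyshevS_self hn hζ]
  · have hroot := isRoot_chebyshevS_iff hζ one_pos (by lia) b.natAbs
    rw [pow_one, one_mul] at hroot
    exact rootMultiplicity_eq_zero <| hroot.not.2 <|
      Nat.not_dvd_of_pos_of_lt (Int.natAbs_pos.2 hb) (by lia)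

lemma rootMultiplicity_chebyshevProd (hn : 2 ≤ n) (hζ : IsPrimitiveRoot ζ (2 * n)) {L : List ℤ}
    (hL : ∀ a ∈ L, a ≠ 0 ∧ a.natAbs ≤ n) :
    (chebyshevProd F L).rootMultiplicity (ζ + ζ⁻¹) = L.countP (·.natAbs = n) := by
  induction L with
  | nil => simp [chebyshevProd, rootMultiplicity_eq_zero]
  | cons a L ih =>
    obtain ⟨⟨ha, han⟩, hL'⟩ := List.forall_mem_cons.1 hL
    have hne := mul_ne_zero (chebyshevS_sub_one_ne_zero (R := F) ha)
      (chebyshevProd_ne_zero fun b hb => (hL' b hb).1)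
    have hcons : chebyshevProd F (a :: L) = Chebyshev.S F (a - 1) * chebyshevProd F L := by
      simp [chebyshevProd]
    rw [hcons, rootMultiplicity_mul hne, ih hL', rootMultiplicity_chebyshevS hn hζ ha han,
      List.countP_cons, add_comm]
    simp

lemma hasCoprimeRoot_chebyshevProd [NeZero ((2 * n : ℕ) : F)] {L : List ℤ}
    (hL : ∀ a ∈ L, a ≠ 0 ∧ a.natAbs ≤ n) (hmax : ∃ a ∈ L, a.natAbs = n)
    (hlt : ∃ a ∈ L, a.natAbs ≠ n) (hprime : L.length.Prime) :
    HasCoprimeRoot (chebyshevProd F L) L.length := by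
  obtain ⟨a, ha, han⟩ := hlt
  have hn : 2 ≤ n := by
    have := hL a ha
    lia
  have : NeZero ((2 * n : ℕ) : AlgebraicClosure F) :=
    .nat_of_injective (algebraMap F (AlgebraicClosure F)).injective
  obtain ⟨ζ, hζ⟩ := HasEnoughRootsOfUnity.exists_primitiveRoot (AlgebraicClosure F) (2 * n)
  have hpos : 0 < L.countP (·.natAbs = n) := by
    simpa [List.countP_pos_iff] using hmax
  have hcount : L.countP (·.natAbs = n) < L.length := by
    refine List.countP_le_length.lt_of_ne fun h => han ?_
    simpa using List.countP_eq_length.1 h a ha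
  refine ⟨ζ + ζ⁻¹, ?_⟩
  rw [map_chebyshevProd, rootMultiplicity_chebyshevProd hn hζ hL]
  exact ⟨hpos, (Nat.coprime_of_lt_prime hpos.ne' hcount hprime).symm⟩

end Roots

section Exceptions

lemma isEquidistributed_equiv_comp_equiv {X X' Y Y' : Type*} {f : X → Y} {ε : ℝ}
    (h : IsEquidistributed f ε) (σ : X' ≃ X) (τ : Y ≃ Y') : IsEquidistributed (τ ∘ f ∘ σ) ε := by
  obtain ⟨T, hT, hfib⟩ := h
  refine ⟨τ '' T, ?_, ?_⟩
  · rwa [Nat.card_image_of_injective τ.injective, ← Nat.card_congr τ]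
  · rintro _ ⟨y, hy, rfl⟩
    have hcard : Nat.card {x : X' // (τ ∘ f ∘ σ) x = τ y} = Nat.card {x : X // f x = y} :=
      Nat.card_congr (σ.subtypeEquiv fun x => τ.injective.eq_iff)
    rw [hcard, ← Nat.card_congr τ, Nat.card_congr σ]
    exact hfib y hy

/-- The exponents of the inverse of `x^{a₁}y^{b₁}⋯x^{a_r}y^{b_r}` after exchanging `x` and `y`. -/
def invSwap (L : List (ℤ × ℤ)) : List (ℤ × ℤ) :=
  (L.map fun m => (-m.2, -m.1)).reverse

lemma wordEval_wordOfList_invSwap {G : Type*} [Group G] (x y : G) (L : List (ℤ × ℤ)) :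
    wordEval (wordOfList (invSwap L)) y x = (wordEval (wordOfList L) x y)⁻¹ := by
  induction L with
  | nil => simp [wordEval, wordOfList, invSwap]
  | cons m L ih =>
    have hcons : wordOfList (invSwap (m :: L)) =
        wordOfList (invSwap L) * (FreeGroup.of 0 ^ (-m.2) * FreeGroup.of 1 ^ (-m.1)) := by
      simp [wordOfList, invSwap]
    rw [wordEval, hcons, map_mul, ← wordEval, ih]
    simp [wordEval, wordOfList, mul_assoc]

lemma isPEquidistributed_of_invSwap {L : List (ℤ × ℤ)} {p : ℕ} {hp : p.Prime}
    (h : IsPEquidistributed (wordOfList (invSwap L)) p hp) :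
    IsPEquidistributed (wordOfList L) p hp := by
  have hmap (K : Type) [Field K] : wordMap (wordOfList L) K =
      Equiv.inv (SL2 K) ∘ wordMap (wordOfList (invSwap L)) K ∘ Equiv.prodComm _ _ := by
    funext z
    simp [wordMap, wordEval_wordOfList_invSwap]
  obtain ⟨ε, hε, hequi⟩ := h
  refine ⟨ε, hε, hequi.mono fun n hn => ?_⟩
  rw [hmap]
  exact isEquidistributed_equiv_comp_equiv hn _ _

lemma finite_not_isPEquidistributed_of_natAbs_fst_ne {L : List (ℤ × ℤ)}
    (hL : ∀ m ∈ L, m.1 ≠ 0 ∧ m.2 ≠ 0) (hprime : L.length.Prime)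
    (hne : ∃ m ∈ L, ∃ m' ∈ L, m.1.natAbs ≠ m'.1.natAbs) :
    {p : ℕ | ∃ hp : p.Prime, ¬ IsPEquidistributed (wordOfList L) p hp}.Finite := by
  classical
  obtain ⟨m₁, hm₁, m₂, hm₂, hm⟩ := hne
  obtain ⟨M, hM, hmax⟩ := L.toFinset.exists_max_image (·.1.natAbs) ⟨m₁, List.mem_toFinset.2 hm₁⟩
  simp only [List.mem_toFinset] at hM hmax
  obtain ⟨m', hm', hlt⟩ : ∃ m ∈ L, m.1.natAbs ≠ M.1.natAbs := by
    by_cases h : m₁.1.natAbs = M.1.natAbs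
    · exact ⟨m₂, hm₂, h ▸ hm.symm⟩
    · exact ⟨m₁, hm₁, h⟩
  have hpos : 0 < 2 * M.1.natAbs := by
    have := (hL M hM).1
    lia
  refine (Set.finite_Iic (2 * M.1.natAbs)).subset ?_
  rintro p ⟨hp, hnot⟩
  by_contra hlarge
  have : Fact p.Prime := ⟨hp⟩
  refine hnot (isPEquidistributed_wordOfList p (List.length_pos_iff.1 hprime.pos) fun K _ _ => ?_)
  have hK : NeZero ((2 * M.1.natAbs : ℕ) : K) := by
    refine ⟨fun h => hlarge ?_⟩
    exact Nat.le_of_dvd hpos ((CharP.cast_eq_zero_iff K p _).1 h)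
  refine ⟨chebyshevProd_ne_zero (List.forall_mem_map.2 fun m h => (hL m h).2), ?_⟩
  rw [← List.length_map (f := Prod.fst)]
  refine hasCoprimeRoot_chebyshevProd (n := M.1.natAbs) (List.forall_mem_map.2 fun m h => ?_)
    ⟨M.1, List.mem_map_of_mem hM, rfl⟩ ⟨m'.1, List.mem_map_of_mem hm', hlt⟩ (by simpa)
  exact ⟨(hL m h).1, hmax m h⟩

lemma finite_not_isPEquidistributed_of_natAbs_snd_ne {L : List (ℤ × ℤ)}
    (hL : ∀ m ∈ L, m.1 ≠ 0 ∧ m.2 ≠ 0) (hprime : L.length.Prime)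
    (hne : ∃ m ∈ L, ∃ m' ∈ L, m.2.natAbs ≠ m'.2.natAbs) :
    {p : ℕ | ∃ hp : p.Prime, ¬ IsPEquidistributed (wordOfList L) p hp}.Finite := by
  have hmem {m : ℤ × ℤ} (hm : m ∈ L) : (-m.2, -m.1) ∈ invSwap L :=
    List.mem_reverse.2 (List.mem_map_of_mem hm)
  have hfin := finite_not_isPEquidistributed_of_natAbs_fst_ne (L := invSwap L) ?_ ?_ ?_
  · exact hfin.subset fun p ⟨hp, h⟩ => ⟨hp, fun h' => h (isPEquidistributed_of_invSwap h')⟩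
  · intro m hm
    obtain ⟨m', hm', rfl⟩ := List.mem_map.1 (List.mem_reverse.1 hm)
    exact ⟨neg_ne_zero.2 (hL m' hm').2, neg_ne_zero.2 (hL m' hm').1⟩
  · simpa [invSwap]
  · obtain ⟨m, hm, m', hm', h⟩ := hne
    exact ⟨_, hmem hm, _, hmem hm', by simpa⟩

lemma wordOf_eq_wordOfList {r : ℕ} (a b : Fin r → ℤ) :
    wordOf a b = wordOfList (List.ofFn fun i => (a i, b i)) := by
  rw [wordOf, wordOfList, List.map_ofFn]
  rfl

lemma exists_natAbs_eq_of_mem_RWords_diff_SWords {N : ℕ} {w : FreeGroup (Fin 2)}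
    (hw : w ∈ RWords N \ SWords N) :
    ∃ (r α β : ℕ) (a b : Fin r → ℤ), w = wordOf a b ∧ (∀ i, (a i).natAbs = α) ∧
      (∀ i, (b i).natAbs = β) ∧ 0 < r ∧ 0 < α ∧ 0 < β ∧ r * (α + β) ≤ N := by
  obtain ⟨⟨r, hr, a, b, hab, rfl, hN⟩, hS⟩ := hw
  set L := List.ofFn fun i => (a i, b i) with hL
  have hinf : ¬ {p : ℕ | ∃ hp : p.Prime, ¬ IsPEquidistributed (wordOfList L) p hp}.Finite := by
    rw [hL, ← wordOf_eq_wordOfList]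
    exact fun hfin => hS ⟨⟨r, hr, a, b, hab, rfl, hN⟩, hfin⟩
  have hlen : L.length.Prime := by rwa [hL, List.length_ofFn]
  have hmem (i : Fin r) : (a i, b i) ∈ L := List.mem_ofFn.2 ⟨i, rfl⟩
  have hne : ∀ m ∈ L, m.1 ≠ 0 ∧ m.2 ≠ 0 := by
    rw [hL, List.forall_mem_ofFn_iff]
    exact hab
  let i₀ : Fin r := ⟨0, hr.pos⟩
  have ha (i : Fin r) : (a i).natAbs = (a i₀).natAbs := by
    by_contra h
    exact hinf (finite_not_isPEquidistributed_of_natAbs_fst_ne hne hlen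
      ⟨_, hmem i, _, hmem i₀, h⟩)
  have hb (i : Fin r) : (b i).natAbs = (b i₀).natAbs := by
    by_contra h
    exact hinf (finite_not_isPEquidistributed_of_natAbs_snd_ne hne hlen
      ⟨_, hmem i, _, hmem i₀, h⟩)
  refine ⟨r, _, _, a, b, rfl, ha, hb, hr.pos, Int.natAbs_pos.2 (hab i₀).1,
    Int.natAbs_pos.2 (hab i₀).2, le_of_eq_of_le ?_ hN⟩
  simp [ha, hb]

end Exceptions

section NormalForm

/-- The syllables `x^{a₁}, y^{b₁}, …, x^{a_r}, y^{b_r}` as letters of the free product `ℤ * ℤ`. -/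
def syllables (L : List (ℤ × ℤ)) : List ((_ : Fin 2) × Multiplicative ℤ) :=
  L.flatMap fun m => [⟨0, .ofAdd m.1⟩, ⟨1, .ofAdd m.2⟩]

lemma syllables_cons (m : ℤ × ℤ) (L : List (ℤ × ℤ)) :
    syllables (m :: L) = ⟨0, .ofAdd m.1⟩ :: ⟨1, .ofAdd m.2⟩ :: syllables L :=
  rfl

lemma syllables_injective : Function.Injective syllables := by
  intro L
  induction L with
  | nil =>
    rintro (_ | ⟨m', L'⟩) h
    · rfl
    · cases h
  | cons m L ih =>
    rintro (_ | ⟨m', L'⟩) h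
    · cases h
    · simp only [syllables_cons, List.cons.injEq, Sigma.mk.injEq, heq_eq_eq, true_and,
        EmbeddingLike.apply_eq_iff_eq] at h
      rw [ih h.2.2, Prod.ext h.1 h.2.1]

lemma isChain_syllables (L : List (ℤ × ℤ)) : (syllables L).IsChain (·.1 ≠ ·.1) := by
  induction L with
  | nil => exact .nil
  | cons m L ih =>
    refine .cons_cons (by simp) ?_
    cases L with
    | nil => exact .singleton _
    | cons m' L => exact .cons_cons (by simp) ih

lemma ne_one_of_mem_syllables {L : List (ℤ × ℤ)} (hL : ∀ m ∈ L, m.1 ≠ 0 ∧ m.2 ≠ 0) :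
    ∀ l ∈ syllables L, l.2 ≠ 1 := by
  intro l hl
  obtain ⟨m, hm, hl⟩ := List.mem_flatMap.1 hl
  obtain rfl | rfl : l = ⟨0, .ofAdd m.1⟩ ∨ l = ⟨1, .ofAdd m.2⟩ := by simpa using hl
  · exact ofAdd_eq_one.not.2 (hL m hm).1
  · exact ofAdd_eq_one.not.2 (hL m hm).2

/-- The canonical homomorphism from `F₂` to the free product `ℤ * ℤ`. -/
def toCoprodI : FreeGroup (Fin 2) →* Monoid.CoprodI fun _ : Fin 2 => Multiplicative ℤ :=
  FreeGroup.lift fun i => Monoid.CoprodI.of (i := i) (.ofAdd 1)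

lemma toCoprodI_of_zpow (i : Fin 2) (k : ℤ) :
    toCoprodI (FreeGroup.of i ^ k) =
      Monoid.CoprodI.of (M := fun _ : Fin 2 => Multiplicative ℤ) (i := i) (.ofAdd k) := by
  rw [map_zpow, toCoprodI, FreeGroup.lift_apply_of, ← map_zpow, ← ofAdd_zsmul, smul_eq_mul,
    mul_one]

lemma toCoprodI_wordOfList (L : List (ℤ × ℤ)) :
    toCoprodI (wordOfList L) =
      ((syllables L).map fun l => Monoid.CoprodI.of
        (M := fun _ : Fin 2 => Multiplicative ℤ) (i := l.1) l.2).prod := by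
  induction L with
  | nil => simp [wordOfList, syllables]
  | cons m L ih =>
    simp only [syllables_cons, List.map_cons, List.prod_cons, ← ih, wordOfList, map_mul,
      toCoprodI_of_zpow, mul_assoc]

lemma wordOfList_injOn :
    Set.InjOn wordOfList {L | ∀ m ∈ L, m.1 ≠ 0 ∧ m.2 ≠ 0} := by
  classical
  intro L hL L' hL' h
  let W : Monoid.CoprodI.Word fun _ : Fin 2 => Multiplicative ℤ :=
    ⟨syllables L, ne_one_of_mem_syllables hL, isChain_syllables L⟩
  let W' : Monoid.CoprodI.Word fun _ : Fin 2 => Multiplicative ℤ :=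
    ⟨syllables L', ne_one_of_mem_syllables hL', isChain_syllables L'⟩
  have hprod : W.prod = W'.prod := by
    have h := congrArg toCoprodI h
    rwa [toCoprodI_wordOfList, toCoprodI_wordOfList] at h
  exact syllables_injective <|
    congrArg Monoid.CoprodI.Word.toList (Monoid.CoprodI.Word.equiv.symm.injective hprod)

lemma wordOf_inj {r : ℕ} {a b a' b' : Fin r → ℤ} (h : ∀ i, a i ≠ 0 ∧ b i ≠ 0)
    (h' : ∀ i, a' i ≠ 0 ∧ b' i ≠ 0) : wordOf a b = wordOf a' b' ↔ a = a' ∧ b = b' := by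
  refine ⟨fun heq => ?_, by rintro ⟨rfl, rfl⟩; rfl⟩
  rw [wordOf_eq_wordOfList, wordOf_eq_wordOfList] at heq
  have hlist := wordOfList_injOn (List.forall_mem_ofFn_iff.2 h) (List.forall_mem_ofFn_iff.2 h') heq
  have hfun := congrFun (List.ofFn_injective hlist)
  exact ⟨funext fun i => congrArg Prod.fst (hfun i), funext fun i => congrArg Prod.snd (hfun i)⟩

end NormalForm

section Counting

/-- The words `x^{a₁}y^{b₁}⋯x^{a_r}y^{b_r}` with all `aᵢ = ±α` and all `bᵢ = ±β`. -/
def constNatAbsWords (r α β : ℕ) : Finset (FreeGroup (Fin 2)) :=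
  Finset.image₂ wordOf (Fintype.piFinset fun _ : Fin r => {(α : ℤ), -(α : ℤ)})
    (Fintype.piFinset fun _ : Fin r => {(β : ℤ), -(β : ℤ)})

lemma card_constNatAbsWords_le (r α β : ℕ) : (constNatAbsWords r α β).card ≤ 2 ^ (2 * r) := by
  have hpi (α : ℕ) :
      (Fintype.piFinset fun _ : Fin r => {(α : ℤ), -(α : ℤ)}).card ≤ 2 ^ r := by
    rw [Fintype.card_piFinset_const]
    exact Nat.pow_le_pow_left Finset.card_le_two r
  rw [two_mul, pow_add]
  exact (Finset.card_image₂_le _ _ _).trans (Nat.mul_le_mul (hpi α) (hpi β))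

lemma card_RWords_diff_SWords_le (N : ℕ) :
    Nat.card ↑(RWords N \ SWords N) ≤ (N + 1) ^ 3 * 2 ^ N := by
  let params : Finset (ℕ × ℕ × ℕ) :=
    {t ∈ Finset.range (N + 1) ×ˢ Finset.range (N + 1) ×ˢ Finset.range (N + 1) | 2 * t.1 ≤ N}
  have hsub : RWords N \ SWords N ⊆
      (params.biUnion fun t => constNatAbsWords t.1 t.2.1 t.2.2 : Finset _) := by
    intro w hw
    obtain ⟨r, α, β, a, b, rfl, ha, hb, hr, hα, hβ, hN⟩ :=
      exists_natAbs_eq_of_mem_RWords_diff_SWords hw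
    have hrN : 2 * r ≤ N := by nlinarith
    have hαβ : α + β ≤ N := by nlinarith
    refine Finset.mem_coe.2 (Finset.mem_biUnion.2 ⟨(r, α, β), ?_, ?_⟩)
    · simp only [params, Finset.mem_filter, Finset.mem_product, Finset.mem_range]
      lia
    · refine Finset.mem_image₂_of_mem ?_ ?_ <;>
        simp only [Fintype.mem_piFinset, Finset.mem_insert, Finset.mem_singleton,
          ← Int.natAbs_eq_iff]
      exacts [ha, hb]
  have hparams : params.card ≤ (N + 1) ^ 3 := by
    refine (Finset.card_filter_le _ _).trans_eq ?_
    simp only [Finset.card_product, Finset.card_range]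
    ring
  calc Nat.card ↑(RWords N \ SWords N)
      ≤ (params.biUnion fun t => constNatAbsWords t.1 t.2.1 t.2.2).card := by
        rw [← Set.ncard_coe_finset, ← Nat.card_coe_set_eq]
        exact Nat.card_mono (Finset.finite_toSet _) hsub
    _ ≤ params.card * 2 ^ N := Finset.card_biUnion_le_card_mul _ _ _ fun t ht =>
        (card_constNatAbsWords_le _ _ _).trans
          (Nat.pow_le_pow_right two_pos (Finset.mem_filter.1 ht).2)
    _ ≤ (N + 1) ^ 3 * 2 ^ N := Nat.mul_le_mul_right _ hparams

lemma RWords_finite (N : ℕ) : (RWords N).Finite := by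
  let box (r : ℕ) : Set (Fin r → ℤ) := Set.Icc (fun _ => -(N : ℤ)) fun _ => N
  refine ((Set.finite_Iic N).biUnion fun r _ =>
    ((Set.finite_Icc _ _).image2 wordOf (Set.finite_Icc _ _) :
      (Set.image2 wordOf (box r) (box r)).Finite)).subset ?_
  rintro w ⟨r, -, a, b, hab, rfl, hN⟩
  have hle (i : Fin r) : (a i).natAbs + (b i).natAbs ≤ N :=
    (Finset.single_le_sum (f := fun i => (a i).natAbs + (b i).natAbs) (fun _ _ => Nat.zero_le _)
      (Finset.mem_univ i)).trans hN
  have hr : r ≤ N := by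
    calc r = ∑ _i : Fin r, 1 := by simp
      _ ≤ N := (Finset.sum_le_sum fun i _ => by have := hab i; lia).trans hN
  refine Set.mem_biUnion hr ⟨a, ⟨?_, ?_⟩, b, ⟨?_, ?_⟩, rfl⟩ <;> intro i <;> have := hle i <;>
    dsimp only <;> lia

/-- The vectors `e` of nonzero integers with `∑ |eᵢ| ≤ N`. -/
abbrev NonzeroExponents (ι : Type*) [Fintype ι] (N : ℕ) : Type _ :=
  {e : ι → ℤ // (∀ i, e i ≠ 0) ∧ ∑ i, (e i).natAbs ≤ N}

lemma card_sum_option_eq_choose (ι : Type*) [Fintype ι] {N : ℕ} (hN : Fintype.card ι ≤ N) :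
    Nat.card {P : Option ι → ℕ // ∑ i, P i = N - Fintype.card ι} = N.choose (Fintype.card ι) := by
  classical
  rw [← Nat.card_congr (Sym.equivNatSumOfFintype (Option ι) _), Nat.card_eq_fintype_card,
    Sym.card_sym_eq_choose, Fintype.card_option, ← Nat.choose_symm hN]
  congr 1
  lia

lemma two_pow_mul_choose_le_card_nonzeroExponents (ι : Type*) [Fintype ι] (N : ℕ)
    [Finite (NonzeroExponents ι N)] :
    2 ^ Fintype.card ι * N.choose (Fintype.card ι) ≤ Nat.card (NonzeroExponents ι N) := by
  classical
  rcases lt_or_ge N (Fintype.card ι) with hN | hN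
  · simp [Nat.choose_eq_zero_of_lt hN]
  let D := (ι → ℤˣ) × {P : Option ι → ℕ // ∑ i, P i = N - Fintype.card ι}
  let expo (d : D) (i : ι) : ℤ := d.1 i * (d.2.1 (some i) + 1 : ℕ)
  have hexpo (d : D) (i : ι) : (expo d i).natAbs = d.2.1 (some i) + 1 := by
    rw [Int.natAbs_mul, Int.units_natAbs, one_mul, Int.natAbs_natCast]
  have hsum (d : D) : d.2.1 none + ∑ i, d.2.1 (some i) = N - Fintype.card ι := by
    rw [← Fintype.sum_option, d.2.2]
  let f (d : D) : NonzeroExponents ι N := ⟨expo d, fun i => by have := hexpo d i; lia, by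
    have := hsum d
    simp only [hexpo, Finset.sum_add_distrib, Finset.sum_const, Finset.card_univ, smul_eq_mul]
    lia⟩
  have hf : Function.Injective f := by
    intro d d' h
    have hval (i : ι) : expo d i = expo d' i := congrFun (congrArg Subtype.val h) i
    have hsome (i : ι) : d.2.1 (some i) = d'.2.1 (some i) := by
      have := congrArg Int.natAbs (hval i)
      rw [hexpo, hexpo] at this
      lia
    refine Prod.ext (funext fun i => Units.ext ?_) (Subtype.ext (funext fun o => ?_))
    · have h := hval i
      simp only [expo, hsome] at h
      exact mul_right_cancel₀ (Nat.cast_ne_zero.2 (Nat.succ_ne_zero _)) h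
    · cases o with
      | none =>
        have := (hsum d).trans (hsum d').symm
        rwa [Finset.sum_congr rfl fun i _ => hsome i, Nat.add_right_cancel_iff] at this
      | some i => exact hsome i
  have hD : Nat.card D = 2 ^ Fintype.card ι * N.choose (Fintype.card ι) := by
    rw [Nat.card_prod, card_sum_option_eq_choose ι hN, Nat.card_fun, Nat.card_eq_fintype_card,
      Fintype.card_units_int, Nat.card_eq_fintype_card]
  exact hD ▸ Nat.card_le_card_of_injective f hf

lemma four_pow_mul_choose_le_card_RWords (N : ℕ) {r : ℕ} (hr : r.Prime) :
    4 ^ r * N.choose (2 * r) ≤ Nat.card (RWords N) := by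
  have : Finite (RWords N) := RWords_finite N
  let f (e : NonzeroExponents (Fin r ⊕ Fin r) N) : RWords N :=
    ⟨wordOf (e.1 ∘ Sum.inl) (e.1 ∘ Sum.inr), r, hr, _, _, fun i => ⟨e.2.1 _, e.2.1 _⟩, rfl, by
      have := e.2.2
      rwa [Fintype.sum_sum_type, ← Finset.sum_add_distrib] at this⟩
  have hf : Function.Injective f := by
    intro e e' h
    obtain ⟨hl, hr⟩ := (wordOf_inj (fun i => ⟨e.2.1 _, e.2.1 _⟩) fun i => ⟨e'.2.1 _, e'.2.1 _⟩).1
      (congrArg Subtype.val h)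
    refine Subtype.ext (funext ?_)
    rintro (i | i)
    exacts [congrFun hl i, congrFun hr i]
  have : Finite (NonzeroExponents (Fin r ⊕ Fin r) N) := .of_injective f hf
  have hcount := two_pow_mul_choose_le_card_nonzeroExponents (Fin r ⊕ Fin r) N
  rw [Fintype.card_sum, Fintype.card_fin, ← two_mul, pow_mul] at hcount
  exact hcount.trans (Nat.card_le_card_of_injective f hf)

end Counting

section Growth

lemma choose_le_choose_of_le_sub {m j k : ℕ} (hjk : j ≤ k) (hkm : k ≤ m - j) :
    m.choose j ≤ m.choose k := by
  have hhalf {k : ℕ} (hjk : j ≤ k) (hk : k ≤ m / 2) : m.choose j ≤ m.choose k := by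
    induction k, hjk using Nat.le_induction with
    | base => exact le_rfl
    | succ k _ ih => exact (ih (by lia)).trans (Nat.choose_le_succ_of_lt_half_left (by lia))
  rcases le_or_gt k (m / 2) with h | h
  · exact hhalf hjk h
  · rw [← Nat.choose_symm (show k ≤ m by lia)]
    exact hhalf (by lia) (by lia)

lemma five_pow_le_two_mul_choose (k : ℕ) : 5 ^ k ≤ 2 * (3 * k).choose k := by
  induction k with
  | zero => simp
  | succ k ih =>
    rcases k with _ | k
    · simp
    have hmid : (3 * (k + 1)).choose (k + 1) ≤ (3 * (k + 1)).choose (k + 2) :=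
      choose_le_choose_of_le_sub (by lia) (by lia)
    have hlow : (3 * (k + 1)).choose (k + 1) ≤ 3 * (3 * (k + 1)).choose k := by
      have h := Nat.choose_succ_right_eq (3 * (k + 1)) k
      rw [show 3 * (k + 1) - k = 2 * k + 3 by lia] at h
      nlinarith
    have hpascal : (3 * (k + 1)).choose (k + 2) + 3 * (3 * (k + 1)).choose (k + 1) +
        3 * (3 * (k + 1)).choose k ≤ (3 * (k + 2)).choose (k + 2) := by
      rw [show 3 * (k + 2) = 3 * (k + 1) + 1 + 1 + 1 by ring]
      have := Nat.choose_le_succ (3 * (k + 1)) k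
      simp only [Nat.choose_succ_succ', Nat.succ_eq_add_one] at this ⊢
      lia
    lia

lemma hundred_pow_le_two_mul_card_RWords {N n : ℕ} (hn : n ≠ 0) (hN : 6 * n ≤ N) :
    100 ^ n ≤ 2 * Nat.card (RWords N) := by
  obtain ⟨r, hr, hnr, hrn⟩ := Nat.exists_prime_lt_and_le_two_mul n hn
  have hchoose : (6 * n).choose (2 * n) ≤ N.choose (2 * r) :=
    (choose_le_choose_of_le_sub (by lia) (by lia)).trans (Nat.choose_le_choose _ hN)
  have hfive := five_pow_le_two_mul_choose (2 * n)
  rw [← mul_assoc] at hfive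
  calc 100 ^ n = 4 ^ n * 5 ^ (2 * n) := by rw [pow_mul, ← mul_pow]; norm_num
    _ ≤ 4 ^ r * (2 * N.choose (2 * r)) :=
      Nat.mul_le_mul (Nat.pow_le_pow_right four_pos hnr.le)
        (hfive.trans (Nat.mul_le_mul_left 2 hchoose))
    _ = 2 * (4 ^ r * N.choose (2 * r)) := by ring
    _ ≤ 2 * Nat.card (RWords N) :=
      Nat.mul_le_mul_left 2 (four_pow_mul_choose_le_card_RWords N hr)

lemma pow_le_mul_card_RWords {N : ℕ} (hN : 4 ≤ N) :
    (2.15 : ℝ) ^ N ≤ 100 * Nat.card (RWords N) := by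
  rcases lt_or_ge N 6 with h | h
  · have hpos : 1 ≤ Nat.card (RWords N) :=
      (Nat.mul_pos (by norm_num) (Nat.choose_pos (by lia))).trans_le
        (four_pow_mul_choose_le_card_RWords N Nat.prime_two)
    calc (2.15 : ℝ) ^ N ≤ 2.15 ^ 5 := pow_le_pow_right₀ (by norm_num) (by lia)
      _ ≤ 100 * 1 := by norm_num
      _ ≤ 100 * Nat.card (RWords N) := by gcongr; exact_mod_cast hpos
  · have hcard : (100 : ℝ) ^ (N / 6) ≤ 2 * Nat.card (RWords N) := mod_cast
      hundred_pow_le_two_mul_card_RWords (show N / 6 ≠ 0 by lia) (Nat.mul_div_le N 6)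
    calc (2.15 : ℝ) ^ N ≤ 2.15 ^ (6 * (N / 6) + 5) := pow_le_pow_right₀ (by norm_num) (by lia)
      _ = (2.15 ^ 6) ^ (N / 6) * 2.15 ^ 5 := by rw [pow_add, pow_mul]
      _ ≤ 100 ^ (N / 6) * 50 := by gcongr <;> norm_num
      _ ≤ 2 * Nat.card (RWords N) * 50 := by gcongr
      _ = 100 * Nat.card (RWords N) := by ring

lemma exists_pow_mul_pow_le (k : ℕ) {r s : ℝ} (hr : 0 < r) (hrs : r < s) :
    ∃ M > 0, ∀ N : ℕ, ((N : ℝ) + 1) ^ k * r ^ N ≤ M * s ^ N := by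
  have hs : 0 < s := hr.trans hrs
  have habs : |r / s| < 1 := by rwa [abs_of_pos (div_pos hr hs), div_lt_one hs]
  obtain ⟨B, hB⟩ := (tendsto_pow_const_mul_const_pow_of_abs_lt_one k habs).bddAbove_range
  have hB (N : ℕ) : ((N : ℝ) + 1) ^ k * (r / s) ^ (N + 1) ≤ B := by
    simpa only [Nat.cast_add_one] using hB ⟨N + 1, rfl⟩
  have hBpos : 0 < B := lt_of_lt_of_le (by positivity) (hB 0)
  refine ⟨B * (s / r), by positivity, fun N => ?_⟩
  calc ((N : ℝ) + 1) ^ k * r ^ N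
      = ((N : ℝ) + 1) ^ k * (r / s) ^ (N + 1) * (s / r) * s ^ N := by
        rw [pow_succ, div_pow]
        field_simp
    _ ≤ B * (s / r) * s ^ N := by gcongr; exact hB N

end Growth

end WordEquidistribution

theorem equidistributed_words_exponentially_generic :
    ∃ C : ℝ, 0 < C ∧ ∃ c : ℝ, 0 < c ∧ c < 1 ∧
      ∀ N : ℕ, 4 ≤ N →
        (Nat.card ((RWords N \ SWords N : Set (FreeGroup (Fin 2)))) : ℝ) ≤
          C * c ^ N * (Nat.card (RWords N) : ℝ) := by
  obtain ⟨M, hM, hpoly⟩ :=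
    WordEquidistribution.exists_pow_mul_pow_le 3 two_pos (show (2 : ℝ) < 2.1 by norm_num)
  refine ⟨M * 100, by positivity, 2.1 / 2.15, by norm_num, by norm_num, fun N hN => ?_⟩
  calc (Nat.card ↑(RWords N \ SWords N) : ℝ)
      ≤ ((N : ℝ) + 1) ^ 3 * 2 ^ N := mod_cast WordEquidistribution.card_RWords_diff_SWords_le N
    _ ≤ M * 2.1 ^ N := hpoly N
    _ = M * (2.1 / 2.15) ^ N * 2.15 ^ N := by rw [mul_assoc, ← mul_pow]; norm_num
    _ ≤ M * (2.1 / 2.15) ^ N * (100 * Nat.card (RWords N)) := by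
      gcongr
      exact WordEquidistribution.pow_le_mul_card_RWords hN
    _ = M * 100 * (2.1 / 2.15) ^ N * Nat.card (RWords N) := by ring
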